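/- arXiv:2604.09546 — 2 statements merged into one kernel-verified Lean document; each statement's English description precedes it below -/
import Mathlib

section
/- Let h > 0, ν̄ > 2 and β ∈ (0,1). There exist a constant C > 0 and a linear map 𝒯 such that for every continuous g : ℝ² → ℝ with ‖g‖_{ν̄} := sup_{x∈ℝ²}(1+|x|^{ν̄})|g(x)| < ∞, the function ψ = 𝒯(g) is of class C^{1,β}_{loc}(ℝ²), is a weak solution of ∇·(K∇ψ) + g = 0 in ℝ² (i.e. ∫_{ℝ²} K∇ψ·∇χ dx = ∫_{ℝ²} gχ dx for every χ ∈ C_c^∞(ℝ²)), and satisfies |ψ(x)| ≤ C‖g‖_{ν̄}(1+|x|²) for all x ∈ ℝ². -/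
/-!
The solution operator is an explicit integral operator, obtained by averaging the Newtonian kernel
of `ℝ³` along helices. The operator `∇ · (K ∇ ·)` governs helically symmetric fields of pitch `h`
in `ℝ³`, which suggests the kernel `(h² + x · p) / √(|x - p|² + h² s²)` with `p = rot s y`,
integrated over `s`.

That integral diverges logarithmically, so the kernel is renormalized (`kf`) by a total derivative in
`s` along the helix (`deu`) and a function of `s` alone (`kf_eq`), after which it is bounded by
an absolutely integrable majorant, at the cost of a factor `1 + |x|²` (`kf_bound`, `gtr_kf_bound`,
`mjk_integral_bound`). This gives convergence and the growth bound.

Regularity: up to a function of `s` alone, `kf h 0` is a combination, with coefficients quadratic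
in `p`, of functions of `(x - p, h s)` that are homogeneous of degree `-1` and smooth off the
origin. Such functions have a derivative satisfying a Hölder estimate of exponent `1 - κ` with an integrable constant
(`homogeneous_holder`), so the potential `pot` is `C^{1,1-κ}` on balls (`pot_regular`), and `κ > 0`
can be taken so small that `1 - κ ≥ β`.

The equation: with `√(|x - p|² + h² s² + ε²)` in place of the distance, an algebraic identity
(`div_J`) says that applying `∇ · (K ∇ ·)` to the kernel yields a total derivative along the helix
minus an explicit term `rf`. Integrating over `s`, the total derivative leaves boundary values at
`s = ±∞`, which coincide with `h⁻¹ ∇ · (K ∇ |x|²)` (`star_eps`), and `rf` concentrates, as `ε → 0`,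
to the point mass `h² c₀ δ_y` by rescaling (`tendsto_rf`). Hence (`star_identity`) the averaged
kernel minus `|x|² / h`, divided by `h² c₀`, is a fundamental solution of `-∇ · (K ∇ ·)` with pole
`y`; the solution operator is therefore `sol h g = (h² c₀)⁻¹ (pot h g - h⁻¹ |x|² ∫ g)`, and the
weak form follows from Fubini and the volume-preserving change of variables `(s, y) ↦ (s, rot s y)`
(`integral_pot_mul`).
-/

noncomputable section

open Real MeasureTheory

abbrev V2 := EuclideanSpace ℝ (Fin 2)

def pd (f : V2 → ℝ) (i : Fin 2) (x : V2) : ℝ :=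
  fderiv ℝ f x (EuclideanSpace.single i 1)

def Kmat (h : ℝ) (x : V2) : Matrix (Fin 2) (Fin 2) ℝ :=
  (h ^ 2 + x 0 ^ 2 + x 1 ^ 2)⁻¹ •
    !![h ^ 2 + x 1 ^ 2, -(x 0 * x 1); -(x 0 * x 1), h ^ 2 + x 0 ^ 2]

/-- ‖g‖_ν̄ := sup (1+|x|^ν̄)|g(x)| is finite. -/
def FiniteWeightedNorm (νb : ℝ) (g : V2 → ℝ) : Prop :=
  ∃ M : ℝ, ∀ x : V2, (1 + ‖x‖ ^ νb) * |g x| ≤ M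

section

open Topology Filter

/-! ### Rotations -/

/-- The rotation of the plane by the angle `s`. -/
def rot (s : ℝ) (y : V2) : V2 :=
  !₂[cos s * y 0 - sin s * y 1, sin s * y 0 + cos s * y 1]

@[simp] lemma rot_zero' (s : ℝ) (y : V2) : rot s y 0 = cos s * y 0 - sin s * y 1 := rfl
@[simp] lemma rot_one' (s : ℝ) (y : V2) : rot s y 1 = sin s * y 0 + cos s * y 1 := rfl

lemma V2_ext {x y : V2} (h0 : x 0 = y 0) (h1 : x 1 = y 1) : x = y := by
  ext i; fin_cases i <;> assumption

lemma V2_norm_sq (x : V2) : ‖x‖ ^ 2 = x 0 ^ 2 + x 1 ^ 2 := by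
  rw [EuclideanSpace.norm_sq_eq]; simp [Fin.sum_univ_two]

lemma continuous_rot : Continuous fun Y : ℝ × V2 => rot Y.1 Y.2 := by
  unfold rot; fun_prop

lemma rot_neg_rot (s : ℝ) (y : V2) : rot (-s) (rot s y) = y := by
  have := sin_sq_add_cos_sq s
  apply V2_ext
  · simp; linear_combination (y 0) * this
  · simp; linear_combination (y 1) * this

lemma rot_angle_zero (y : V2) : rot 0 y = y := by
  apply V2_ext <;> simp

lemma norm_rot (s : ℝ) (y : V2) : ‖rot s y‖ = ‖y‖ := by
  have := sin_sq_add_cos_sq s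
  rw [← sq_eq_sq₀ (norm_nonneg _) (norm_nonneg _), V2_norm_sq, V2_norm_sq]
  simp; linear_combination (y 0 ^ 2 + y 1 ^ 2) * this

/-- `rot s` as a linear isometry. -/
def rotIso (s : ℝ) : V2 →ₗᵢ[ℝ] V2 where
  toFun := rot s
  map_add' x y := by apply V2_ext <;> simp <;> ring
  map_smul' c x := by apply V2_ext <;> simp <;> ring
  norm_map' y := norm_rot s y

lemma measurePreserving_rot (s : ℝ) : MeasurePreserving (rot s) :=
  ((rotIso s).toLinearIsometryEquiv rfl).measurePreserving

lemma rot_sub (s : ℝ) (x y : V2) : rot s (x - y) = rot s x - rot s y := (rotIso s).map_sub x y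
lemma rot_add (s : ℝ) (x y : V2) : rot s (x + y) = rot s x + rot s y := (rotIso s).map_add x y

/-- Following the rotation by the angle `s` on the slice at height `s` preserves volume. -/
lemma measurePreserving_helix :
    MeasurePreserving (fun Y : ℝ × V2 => (Y.1, rot Y.1 Y.2)) :=
  (MeasurePreserving.id volume).skew_product (g := fun s y => rot s y)
    continuous_rot.measurable (.of_forall fun s => (measurePreserving_rot s).map_eq)

/-! ### Weights and weakly singular integrals -/

/-- A profile which is integrable on the line, both at `0` and at infinity. -/
def sw (η : ℝ) (s : ℝ) : ℝ := min (|s| ^ (-(1 - η))) (|s| ^ (-(1 + η)))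

lemma sw_nonneg (η s : ℝ) : 0 ≤ sw η s := by unfold sw; positivity

lemma measurable_sw (η : ℝ) : Measurable (sw η) := by unfold sw; fun_prop

lemma integrable_sw {η : ℝ} (h0 : 0 < η) : Integrable (sw η) := by
  have : Integrable (fun s : ℝ => (fun t => min (t ^ (-(1 - η))) (t ^ (-(1 + η)))) ‖s‖) := by
    rw [integrable_fun_norm_addHaar volume (f := fun t => min (t ^ (-(1 - η))) (t ^ (-(1 + η))))]
    simp only [Module.finrank_self, le_refl, tsub_eq_zero_of_le, pow_zero, one_smul]
    rw [← Set.Ioc_union_Ioi_eq_Ioi zero_le_one]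
    apply IntegrableOn.union
    · refine Integrable.mono' (g := fun t : ℝ => t ^ (-(1 - η))) ?_ (by fun_prop) ?_
      · exact (intervalIntegrable_iff_integrableOn_Ioc_of_le zero_le_one).1
          (intervalIntegral.intervalIntegrable_rpow' (by linarith))
      · filter_upwards [ae_restrict_mem measurableSet_Ioc] with t ht
        have := ht.1
        rw [Real.norm_of_nonneg (by positivity)]
        exact min_le_left _ _
    · refine Integrable.mono' (g := fun t : ℝ => t ^ (-(1 + η))) ?_ (by fun_prop) ?_
      · exact integrableOn_Ioi_rpow_of_lt (by linarith) one_pos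
      · filter_upwards [ae_restrict_mem measurableSet_Ioi] with t ht
        have : (0:ℝ) < t := one_pos.trans ht
        rw [Real.norm_of_nonneg (by positivity)]
        exact min_le_right _ _
  exact this

/-- The planar weight times a locally integrable singularity: the basic majorant. -/
def pw (κ c : ℝ) (x p : V2) : ℝ := (1 + ‖p‖) ^ (-(2 + κ)) * (1 + ‖x - p‖ ^ (-c))

lemma pw_nonneg (κ c : ℝ) (x p : V2) : 0 ≤ pw κ c x p := by unfold pw; positivity

lemma measurable_pw (κ c : ℝ) : Measurable fun z : V2 × V2 => pw κ c z.1 z.2 := by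
  unfold pw; fun_prop

lemma integrable_loc_sing {c : ℝ} (hc : c < 2) :
    IntegrableOn (fun z : V2 => ‖z‖ ^ (-c)) (Metric.ball 0 1) := by
  rw [integrableOn_fun_norm_addHaar volume (f := fun t : ℝ => t ^ (-c))]
  simp only [finrank_euclideanSpace, Fintype.card_fin, Nat.add_one_sub_one, pow_one, smul_eq_mul]
  have : IntegrableOn (fun t : ℝ => t ^ (1 - c)) (Set.Ioo 0 1) := by
    rw [← integrableOn_Ioc_iff_integrableOn_Ioo,
      ← intervalIntegrable_iff_integrableOn_Ioc_of_le zero_le_one]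
    exact intervalIntegral.intervalIntegrable_rpow' (by linarith)
  refine this.congr_fun (fun t ht => ?_) measurableSet_Ioo
  have := ht.1
  simp only [sub_eq_add_neg, rpow_add this, rpow_one]

/-- The singularity is integrable near its pole uniformly in the position of the pole, and the
weight takes care of infinity. -/
lemma pw_integral_bound {κ c : ℝ} (hκ : 0 < κ) (hc0 : 0 < c) (hc : c < 2) :
    ∃ C, 0 ≤ C ∧ ∀ x, Integrable (pw κ c x) ∧ ∫ p, pw κ c x p ≤ C := by
  have hw : Integrable (fun p : V2 => (1 + ‖p‖) ^ (-(2 + κ))) :=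
    integrable_one_add_norm (by simp; linarith)
  have hl : Integrable ((Metric.ball (0 : V2) 1).indicator (fun z : V2 => ‖z‖ ^ (-c))) :=
    (integrable_loc_sing hc).integrable_indicator measurableSet_ball
  set l := (Metric.ball (0 : V2) 1).indicator (fun z : V2 => ‖z‖ ^ (-c)) with hldef
  have hl0 : ∀ z, 0 ≤ l z := fun z => Set.indicator_nonneg (fun z _ => by positivity) z
  have key : ∀ x p, pw κ c x p ≤ 2 * (1 + ‖p‖) ^ (-(2 + κ)) + l (x - p) := by
    intro x p
    have h1 : (1 + ‖p‖) ^ (-(2 + κ)) ≤ 1 :=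
      rpow_le_one_of_one_le_of_nonpos (by linarith [norm_nonneg p]) (by linarith)
    have h2 : ‖x - p‖ ^ (-c) ≤ 1 + l (x - p) := by
      by_cases hx : x - p ∈ Metric.ball (0 : V2) 1
      · rw [hldef, Set.indicator_of_mem hx]; linarith
      · have : 1 ≤ ‖x - p‖ := by simpa using hx
        linarith [hl0 (x - p), rpow_le_one_of_one_le_of_nonpos this (show -c ≤ 0 by linarith)]
    have h3 : 0 ≤ (1 + ‖p‖) ^ (-(2 + κ)) := by positivity
    unfold pw
    nlinarith [hl0 (x - p)]
  have hInt : ∀ x, Integrable (fun p => 2 * (1 + ‖p‖) ^ (-(2 + κ)) + l (x - p)) :=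
    fun x => (hw.const_mul 2).add (hl.comp_sub_left x)
  have hI : ∀ x, Integrable (pw κ c x) := fun x => by
    refine (hInt x).mono' ?_ (.of_forall fun p => ?_)
    · exact ((measurable_pw κ c).comp (measurable_prodMk_left (x := x))).aestronglyMeasurable
    · rw [Real.norm_of_nonneg (pw_nonneg _ _ _ _)]; exact key x p
  refine ⟨2 * (∫ p : V2, (1 + ‖p‖) ^ (-(2 + κ))) + ∫ z, l z, ?_, fun x => ⟨hI x, ?_⟩⟩
  · have : 0 ≤ ∫ z, l z := integral_nonneg hl0
    have : 0 ≤ ∫ p : V2, (1 + ‖p‖) ^ (-(2 + κ)) := integral_nonneg fun p => by positivity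
    positivity
  · refine (integral_mono (hI x) (hInt x) (key x)).trans ?_
    rw [integral_add (hw.const_mul 2) (hl.comp_sub_left x), integral_const_mul,
      integral_sub_left_eq_self l volume x]

/-- The majorant on `ℝ × ℝ²`. -/
def mj (κ c η : ℝ) (x : V2) (Y : ℝ × V2) : ℝ := sw η Y.1 * pw κ c x Y.2

lemma mj_nonneg (κ c η : ℝ) (x : V2) (Y : ℝ × V2) : 0 ≤ mj κ c η x Y :=
  mul_nonneg (sw_nonneg _ _) (pw_nonneg _ _ _ _)

lemma mj_integral_bound {κ c η : ℝ} (hκ : 0 < κ) (hc0 : 0 < c) (hc : c < 2) (hη : 0 < η) :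
    ∃ C, 0 ≤ C ∧ ∀ x, Integrable (mj κ c η x) ∧ ∫ Y, mj κ c η x Y ≤ C := by
  obtain ⟨C, hC, H⟩ := pw_integral_bound hκ hc0 hc
  have hs : 0 ≤ ∫ s, sw η s := integral_nonneg (sw_nonneg η)
  refine ⟨(∫ s, sw η s) * C, by positivity, fun x => ⟨(integrable_sw hη).mul_prod (H x).1, ?_⟩⟩
  unfold mj
  rw [Measure.volume_eq_prod, integral_prod_mul]
  exact mul_le_mul_of_nonneg_left (H x).2 hs

/-! ### The kernel and its size -/

/-- The squared distance between `(x, 0)` and `(p, h s)` in `ℝ³`, regularized by `ε²`. -/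
def Qf (h ε : ℝ) (x : V2) (s : ℝ) (p : V2) : ℝ :=
  (x 0 - p 0) ^ 2 + (x 1 - p 1) ^ 2 + h ^ 2 * s ^ 2 + ε ^ 2

/-- The regularized Newtonian kernel `1 / √Q`. -/
def uf (h ε : ℝ) (x : V2) (s : ℝ) (p : V2) : ℝ := (√(Qf h ε x s p))⁻¹

/-- The cross product of `p` and `x`. -/
def ef (x p : V2) : ℝ := x 1 * p 0 - x 0 * p 1

/-- The renormalized kernel. It differs from `(h² + x · p) / √Q`, the Newtonian kernel contracted
with the helical fields at the two points, by a total `s`-derivative along helices and by a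
function of `s` alone; this makes it absolutely integrable in `s`. -/
def kf (h ε : ℝ) (x : V2) (s : ℝ) (p : V2) : ℝ :=
  h ^ 2 * (uf h ε x s p - (√(1 + h ^ 2 * s ^ 2))⁻¹)
    + (ef x p ^ 2 - h ^ 2 * s * ef x p) * uf h ε x s p ^ 3

lemma Qf_eq (h ε : ℝ) (x : V2) (s : ℝ) (p : V2) :
    Qf h ε x s p = ‖x - p‖ ^ 2 + (h * s) ^ 2 + ε ^ 2 := by
  rw [V2_norm_sq]; simp [Qf]; ring

lemma dist_le_sqrt_Qf (h ε : ℝ) (x : V2) (s : ℝ) (p : V2) :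
    ‖((x - p, h * s) : V2 × ℝ)‖ ≤ √(Qf h ε x s p) := by
  rw [Prod.norm_def, Qf_eq, Real.norm_eq_abs]
  apply max_le
  · apply Real.le_sqrt_of_sq_le; nlinarith [sq_nonneg (h * s), sq_nonneg ε]
  · apply Real.le_sqrt_of_sq_le; rw [sq_abs]; nlinarith [sq_nonneg ‖x - p‖, sq_nonneg ε]

lemma abs_ef_le (x p : V2) : |ef x p| ≤ ‖x‖ * ‖p‖ := by
  apply abs_le_of_sq_le_sq _ (by positivity)
  rw [mul_pow, V2_norm_sq, V2_norm_sq, ef]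
  nlinarith [sq_nonneg (x 0 * p 0 + x 1 * p 1)]

lemma ef_sub (x p : V2) : ef x p = ef (x - p) p := by simp [ef]; ring

lemma abs_ef_le' (x p : V2) : |ef x p| ≤ ‖x‖ * ‖x - p‖ := by
  have : ef x p = - ef x (x - p) := by simp [ef]; ring
  rw [this, abs_neg]; exact abs_ef_le _ _

lemma min_one_le_rpow {t κ : ℝ} (ht : 0 ≤ t) (h0 : 0 ≤ κ) (h1 : κ ≤ 1) : min 1 t ≤ t ^ κ := by
  rcases le_total 1 t with h | h
  · exact (min_le_left _ _).trans (one_le_rpow h h0)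
  · refine (min_le_right _ _).trans ?_
    rcases ht.eq_or_lt with rfl | ht
    · positivity
    · simpa using rpow_le_rpow_of_exponent_ge ht h h1

/-- The interpolation between the size of `1 / a` and of `(a - b) / (a b)`. -/
lemma inv_sub_inv_le_aux {a b d κ : ℝ} (ha : 0 < a) (hab : a ≤ b) (hd : b - a ≤ d)
    (h0 : 0 ≤ κ) (h1 : κ ≤ 1) : a⁻¹ - b⁻¹ ≤ d ^ κ * a ^ (-(1 + κ)) := by
  have hb := ha.trans_le hab
  have hd0 : 0 ≤ d := by linarith
  have e1 : a⁻¹ - b⁻¹ = a⁻¹ * ((b - a) / b) := by field_simp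
  have e2 : (b - a) / b ≤ min 1 (d / a) := by
    apply le_min
    · rw [div_le_one hb]; linarith
    · gcongr
  have e3 : d ^ κ * a ^ (-(1 + κ)) = a⁻¹ * (d / a) ^ κ := by
    rw [div_rpow hd0 ha.le, neg_add, rpow_add ha, rpow_neg_one, rpow_neg ha.le]; ring
  rw [e1, e3]
  gcongr
  exact e2.trans (min_one_le_rpow (by positivity) h0 h1)

lemma abs_inv_sub_inv_le {a b d κ : ℝ} (ha : 0 < a) (hb : 0 < b) (hd : |b - a| ≤ d)
    (h0 : 0 ≤ κ) (h1 : κ ≤ 1) :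
    |a⁻¹ - b⁻¹| ≤ d ^ κ * (a ^ (-(1 + κ)) + b ^ (-(1 + κ))) := by
  have hd0 : 0 ≤ d := (abs_nonneg _).trans hd
  have p1 : 0 ≤ d ^ κ * a ^ (-(1 + κ)) := by positivity
  have p2 : 0 ≤ d ^ κ * b ^ (-(1 + κ)) := by positivity
  rcases le_total a b with h | h
  · have := inv_sub_inv_le_aux ha h (d := d) (by rw [abs_le] at hd; linarith [hd.2]) h0 h1
    rw [abs_of_nonneg (by linarith [inv_anti₀ ha h])]
    linarith
  · have := inv_sub_inv_le_aux hb h (d := d) (by rw [abs_le] at hd; linarith [hd.1]) h0 h1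
    rw [abs_sub_comm, abs_of_nonneg (by linarith [inv_anti₀ hb h])]
    linarith

lemma abs_sub_le_abs_add_abs (a b : ℝ) : |a - b| ≤ |a| + |b| := by
  simpa [sub_eq_add_neg] using abs_add_le a (-b)

set_option maxHeartbeats 1600000 in
lemma kf_bound_aux {h ε κ : ℝ} (hh : 0 < h) (hε0 : 0 ≤ ε) (hε : ε ≤ 1) (h0 : 0 ≤ κ) (h1 : κ ≤ 1)
    (x p : V2) (s : ℝ) (hs : s ≠ 0) :
    |kf h ε x s p| ≤ (4 * h ^ 2 + 1 + h) * (1 + ‖x‖ ^ 2) * (1 + ‖p‖) ^ κ *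
      (√(Qf h ε x s p) ^ (-(1 + κ)) + √(1 + h ^ 2 * s ^ 2) ^ (-(1 + κ))) := by
  have hQ : 0 < Qf h ε x s p := by rw [Qf_eq]; positivity
  set a := √(Qf h ε x s p) with ha
  set b := √(1 + h ^ 2 * s ^ 2) with hb
  have ha0 : 0 < a := by positivity
  have hb0 : 0 < b := by positivity
  set r := ‖x‖ with hr
  set R := ‖p‖ with hR
  have hr0 : 0 ≤ r := norm_nonneg _
  have hR0 : 0 ≤ R := norm_nonneg _
  set E := |ef x p| with hE
  have hxa : ‖x - p‖ ≤ a := (le_max_left _ _).trans (dist_le_sqrt_Qf h ε x s p)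
  have hsa : h * |s| ≤ a := by
    have := (le_max_right _ _).trans (dist_le_sqrt_Qf h ε x s p)
    simpa [abs_mul, abs_of_pos hh] using this
  have hA0 : 0 < a ^ (-(1 + κ)) := by positivity
  have hB0 : 0 < b ^ (-(1 + κ)) := by positivity
  -- the ratio `E / a` is bounded both by `r` and by `r R / a`
  have hmin : E * a⁻¹ ≤ r * (R ^ κ * (a⁻¹) ^ κ) := by
    rw [← mul_rpow hR0 (by positivity)]
    refine le_trans ?_ (mul_le_mul_of_nonneg_left (min_one_le_rpow (by positivity) h0 h1) hr0)
    rw [mul_min_of_nonneg _ _ hr0]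
    apply le_min
    · rw [mul_one, ← div_eq_mul_inv, div_le_iff₀ ha0]
      exact (abs_ef_le' x p).trans (by gcongr)
    · rw [← mul_assoc]; gcongr; exact abs_ef_le x p
  have hE1 : E * a⁻¹ ≤ r := by
    rw [← div_eq_mul_inv, div_le_iff₀ ha0]
    exact (abs_ef_le' x p).trans (by gcongr)
  have haexp : a ^ (-(1 + κ)) = (a⁻¹) ^ κ * a⁻¹ := by
    rw [neg_add, rpow_add ha0, rpow_neg_one, rpow_neg ha0.le, inv_rpow ha0.le]; ring
  have hRκ : R ^ κ ≤ (1 + R) ^ κ := rpow_le_rpow hR0 (by linarith) h0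
  have hEa0 : 0 ≤ E * a⁻¹ := by positivity
  have t2 : E ^ 2 * (a⁻¹) ^ 3 ≤ r ^ 2 * ((1 + R) ^ κ * a ^ (-(1 + κ))) := by
    calc E ^ 2 * (a⁻¹) ^ 3 = (E * a⁻¹) * (E * a⁻¹) * a⁻¹ := by ring
      _ ≤ r * (r * (R ^ κ * (a⁻¹) ^ κ)) * a⁻¹ := by gcongr
      _ = r ^ 2 * (R ^ κ * a ^ (-(1 + κ))) := by rw [haexp]; ring
      _ ≤ _ := by gcongr
  have t3 : h ^ 2 * |s| * E * (a⁻¹) ^ 3 ≤ h * r * ((1 + R) ^ κ * a ^ (-(1 + κ))) := by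
    have : h * |s| * a⁻¹ ≤ 1 := by rw [← div_eq_mul_inv, div_le_one ha0]; exact hsa
    calc h ^ 2 * |s| * E * (a⁻¹) ^ 3 = h * (h * |s| * a⁻¹) * (E * a⁻¹) * a⁻¹ := by ring
      _ ≤ h * 1 * (r * (R ^ κ * (a⁻¹) ^ κ)) * a⁻¹ := by gcongr
      _ = h * r * (R ^ κ * a ^ (-(1 + κ))) := by rw [haexp]; ring
      _ ≤ _ := by gcongr
  have t1 : |a⁻¹ - b⁻¹| ≤ 2 * (1 + r) * (1 + R) ^ κ * (a ^ (-(1 + κ)) + b ^ (-(1 + κ))) := by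
    have hd : |b - a| ≤ 2 * (1 + r) * (1 + R) := by
      have h3 : ‖x - p‖ ≤ r + R := norm_sub_le _ _
      have ab : b - a ≤ 1 := by
        have : b ≤ 1 + h * |s| := by
          rw [hb]; apply Real.sqrt_le_iff.2 ⟨by positivity, ?_⟩
          have : 0 ≤ h * |s| := by positivity
          nlinarith [sq_abs s]
        linarith
      have ba : a - b ≤ ‖x - p‖ + ε := by
        have h4 : h * |s| ≤ b := by
          rw [hb]; apply Real.le_sqrt_of_sq_le; rw [mul_pow, sq_abs]; linarith
        have : a ≤ ‖x - p‖ + ε + h * |s| := by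
          rw [ha]; apply Real.sqrt_le_iff.2 ⟨by positivity, ?_⟩
          rw [Qf_eq, mul_pow, ← sq_abs s]
          have : 0 ≤ h * |s| := by positivity
          have : 0 ≤ ‖x - p‖ := norm_nonneg _
          have := mul_nonneg ‹0 ≤ ‖x - p‖› hε0
          have := mul_nonneg ‹0 ≤ ‖x - p‖› ‹0 ≤ h * |s|›
          have := mul_nonneg ‹0 ≤ h * |s|› hε0
          nlinarith
        linarith
      rw [abs_le]; constructor <;> nlinarith [mul_nonneg hr0 hR0]
    refine (abs_inv_sub_inv_le ha0 hb0 hd h0 h1).trans ?_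
    gcongr
    rw [mul_rpow (by positivity) (by positivity)]
    gcongr
    exact (rpow_le_rpow_of_exponent_le (by linarith) h1).trans (by rw [rpow_one])
  have hk : |kf h ε x s p| ≤ h ^ 2 * |a⁻¹ - b⁻¹| + (E ^ 2 * (a⁻¹) ^ 3
      + h ^ 2 * |s| * E * (a⁻¹) ^ 3) := by
    have : kf h ε x s p = h ^ 2 * (a⁻¹ - b⁻¹) + (ef x p ^ 2 * (a⁻¹) ^ 3
      - h ^ 2 * s * ef x p * (a⁻¹) ^ 3) := by simp only [kf, uf, ← ha, ← hb]; ring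
    rw [this]
    refine (abs_add_le _ _).trans ?_
    have ha3 : |a⁻¹ ^ 3| = a⁻¹ ^ 3 := abs_of_pos (by positivity)
    rw [abs_mul (h ^ 2) (a⁻¹ - b⁻¹), abs_of_nonneg (sq_nonneg h)]
    refine add_le_add le_rfl ?_
    refine (abs_sub_le_abs_add_abs _ _).trans (le_of_eq ?_)
    rw [abs_mul, abs_mul, abs_mul, abs_mul, ha3, abs_pow, abs_of_nonneg (sq_nonneg h)]
  have hw : 0 < (1 + R) ^ κ := by positivity
  have hr2 : r ≤ 1 + r ^ 2 := by nlinarith [sq_nonneg (r - 1)]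
  have hr3 : 2 * (1 + r) ≤ 4 * (1 + r ^ 2) := by nlinarith [sq_nonneg (r - 1)]
  calc |kf h ε x s p| ≤ _ := hk
    _ ≤ h ^ 2 * (2 * (1 + r) * (1 + R) ^ κ * (a ^ (-(1 + κ)) + b ^ (-(1 + κ))))
        + (r ^ 2 * ((1 + R) ^ κ * (a ^ (-(1 + κ)) + b ^ (-(1 + κ))))
        + h * r * ((1 + R) ^ κ * (a ^ (-(1 + κ)) + b ^ (-(1 + κ))))) := by
          refine add_le_add (mul_le_mul_of_nonneg_left t1 (sq_nonneg h)) (add_le_add ?_ ?_)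
          · exact t2.trans (mul_le_mul_of_nonneg_left
              (mul_le_mul_of_nonneg_left (by linarith) hw.le) (sq_nonneg r))
          · exact t3.trans (mul_le_mul_of_nonneg_left
              (mul_le_mul_of_nonneg_left (by linarith) hw.le) (by positivity))
    _ = (h ^ 2 * (2 * (1 + r)) + r ^ 2 + h * r) * ((1 + R) ^ κ *
        (a ^ (-(1 + κ)) + b ^ (-(1 + κ)))) := by ring
    _ ≤ (h ^ 2 * (4 * (1 + r ^ 2)) + (1 + r ^ 2) + h * (1 + r ^ 2)) * ((1 + R) ^ κ *
        (a ^ (-(1 + κ)) + b ^ (-(1 + κ)))) := by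
          gcongr
          linarith
    _ = _ := by ring

lemma rpow_neg_le_one_add {A b c : ℝ} (hA : 0 < A) (hb : 0 ≤ b) (hbc : b ≤ c) :
    A ^ (-b) ≤ 1 + A ^ (-c) := by
  have : 0 < A ^ (-c) := by positivity
  rcases le_total 1 A with h | h
  · linarith [rpow_le_one_of_one_le_of_nonpos h (show -b ≤ 0 by linarith)]
  · linarith [rpow_le_rpow_of_exponent_ge hA h (show -c ≤ -b by linarith)]

/-- Splitting a power of a distance in `ℝ³` into a planar and a vertical factor. -/
lemma rpow_dist_split {h D A s b t : ℝ} (hh : 0 < h) (hA : 0 < A) (hs : s ≠ 0) (hAD : A ≤ D)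
    (hsD : h * |s| ≤ D) (ht : 0 ≤ t) (hbt : t ≤ b) :
    D ^ (-b) ≤ A ^ (-(b - t)) * (h ^ (-t) * |s| ^ (-t)) := by
  have hs' : 0 < |s| := abs_pos.2 hs
  rw [← mul_rpow hh.le hs'.le, show -b = -(b - t) + -t by ring, rpow_add (hA.trans_le hAD)]
  have hs2 : 0 < h * |s| := by positivity
  exact mul_le_mul (rpow_le_rpow_of_nonpos hA hAD (by linarith))
    (rpow_le_rpow_of_nonpos hs2 hsD (by linarith)) (rpow_nonneg (hs2.le.trans hsD) _)
    (by positivity)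

lemma rpow_dist_le {h D A s b η c : ℝ} (hh : 0 < h) (hA : 0 < A) (hs : s ≠ 0) (hAD : A ≤ D)
    (hsD : h * |s| ≤ D) (hη : 0 ≤ η) (hη1 : η ≤ 1) (hb : 1 + η ≤ b) (hc : b - (1 - η) ≤ c) :
    D ^ (-b) ≤ (h ^ (-(1 - η)) + h ^ (-(1 + η))) * ((1 + A ^ (-c)) * sw η s) := by
  have hs' : 0 < |s| := abs_pos.2 hs
  have q1 : 0 < h ^ (-(1 - η)) := by positivity
  have q2 : 0 < h ^ (-(1 + η)) := by positivity
  have q3 : 0 < A ^ (-c) := by positivity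
  unfold sw
  rcases min_choice (|s| ^ (-(1 - η))) (|s| ^ (-(1 + η))) with e | e <;> rw [e]
  · refine (rpow_dist_split hh hA hs hAD hsD (t := 1 - η) (by linarith) (by linarith)).trans ?_
    rw [mul_left_comm]
    gcongr
    · linarith
    · exact rpow_neg_le_one_add hA (by linarith) hc
  · refine (rpow_dist_split hh hA hs hAD hsD (t := 1 + η) (by linarith) (by linarith)).trans ?_
    rw [mul_left_comm]
    gcongr
    · linarith
    · exact rpow_neg_le_one_add hA (by linarith) (by linarith)

/-- The singular factor of the majorants, with the exponents tied to a single small `κ`. -/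
def sg (κ : ℝ) (x : V2) (s : ℝ) (p : V2) : ℝ := (1 + ‖x - p‖ ^ (-(2 - κ / 2))) * sw (κ / 2) s

lemma sg_nonneg (κ : ℝ) (x : V2) (s : ℝ) (p : V2) : 0 ≤ sg κ x s p :=
  mul_nonneg (by positivity) (sw_nonneg _ _)

lemma kf_bound {h κ : ℝ} (hh : 0 < h) (h0 : 0 < κ) (h1 : κ ≤ 1 / 4) :
    ∃ C, 0 ≤ C ∧ ∀ ε, 0 ≤ ε → ε ≤ 1 → ∀ x p s, s ≠ 0 → x ≠ p →
      |kf h ε x s p| ≤ C * (1 + ‖x‖ ^ 2) * ((1 + ‖p‖) ^ κ * sg κ x s p) := by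
  set H := h ^ (-(1 - κ / 2)) + h ^ (-(1 + κ / 2)) with hH
  have hH0 : 0 < H := by positivity
  refine ⟨(4 * h ^ 2 + 1 + h) * (3 * H), by positivity, fun ε e0 e1 x p s hs hxp => ?_⟩
  refine (kf_bound_aux hh e0 e1 h0.le (by linarith) x p s hs).trans ?_
  have hA : 0 < ‖x - p‖ := norm_pos_iff.2 (sub_ne_zero.2 hxp)
  have D1 : ‖x - p‖ ≤ √(Qf h ε x s p) := (le_max_left _ _).trans (dist_le_sqrt_Qf h ε x s p)
  have D2 : h * |s| ≤ √(Qf h ε x s p) := by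
    have := (le_max_right _ _).trans (dist_le_sqrt_Qf h ε x s p)
    simpa [abs_mul, abs_of_pos hh] using this
  have b1 := rpow_dist_le hh hA hs D1 D2 (b := 1 + κ) (η := κ / 2) (c := 2 - κ / 2)
    (by linarith) (by linarith) (by linarith) (by linarith)
  have b2 := rpow_dist_le (D := √(1 + h ^ 2 * s ^ 2)) hh one_pos hs
    (by rw [Real.le_sqrt one_pos.le (by positivity)]; nlinarith [sq_nonneg (h * s)])
    (by apply Real.le_sqrt_of_sq_le; rw [mul_pow, sq_abs]; linarith)
    (b := 1 + κ) (η := κ / 2) (c := 2 - κ / 2)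
    (by linarith) (by linarith) (by linarith) (by linarith)
  rw [one_rpow] at b2
  have hsum : √(Qf h ε x s p) ^ (-(1 + κ)) + √(1 + h ^ 2 * s ^ 2) ^ (-(1 + κ))
      ≤ 3 * H * sg κ x s p := by
    have : (1 + 1) * sw (κ / 2) s ≤ 2 * sg κ x s p := by
      unfold sg
      have : 0 ≤ ‖x - p‖ ^ (-(2 - κ / 2)) * sw (κ / 2) s :=
        mul_nonneg (by positivity) (sw_nonneg _ _)
      linarith
    calc _ ≤ H * sg κ x s p + H * (2 * sg κ x s p) :=
          add_le_add b1 (b2.trans (mul_le_mul_of_nonneg_left this hH0.le))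
      _ = _ := by ring
  calc _ ≤ (4 * h ^ 2 + 1 + h) * (1 + ‖x‖ ^ 2) * (1 + ‖p‖) ^ κ * (3 * H * sg κ x s p) := by
        gcongr
    _ = _ := by ring

lemma one_add_inv_rpow_le {A b c : ℝ} (hA : 0 < A) (hb : 0 ≤ b) (hb2 : b ≤ 2) (hbc : b ≤ c) :
    (1 + A) ^ b * A ^ (-b) ≤ 4 * (1 + A ^ (-c)) := by
  have e : (1 + A) ^ b * A ^ (-b) = (1 + A⁻¹) ^ b := by
    rw [rpow_neg hA.le, ← inv_rpow hA.le, ← mul_rpow (by positivity) (by positivity)]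
    congr 1; field_simp; ring
  have h4 : (2 : ℝ) ^ b ≤ 4 := by
    calc (2 : ℝ) ^ b ≤ 2 ^ (2 : ℝ) := rpow_le_rpow_of_exponent_le (by norm_num) hb2
      _ = 4 := by norm_num
  rw [e]
  calc (1 + A⁻¹) ^ b ≤ 2 ^ b * max 1 (A⁻¹) ^ b := by
        rw [← mul_rpow (by norm_num) (by positivity)]
        gcongr
        linarith [le_max_left 1 A⁻¹, le_max_right 1 A⁻¹]
    _ ≤ 4 * (1 + A ^ (-c)) := by
        gcongr
        rcases max_choice 1 A⁻¹ with e | e <;> rw [e]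
        · rw [one_rpow]; linarith [rpow_pos_of_pos hA (-c)]
        · rw [inv_rpow hA.le, ← rpow_neg hA.le]; exact rpow_neg_le_one_add hA hb hbc

/-- For `x` in a fixed ball, decay of the kernel in `p` pays for the quadratic coefficients. -/
lemma holder_weight {h κ : ℝ} (hh : 0 < h) (h0 : 0 < κ) (h1 : κ ≤ 1 / 4) (ρ : ℝ) (hρ : 0 ≤ ρ) :
    ∃ C, 0 ≤ C ∧ ∀ x p s, ‖x‖ ≤ ρ → s ≠ 0 → x ≠ p →
      (1 + ‖p‖) ^ 2 * ‖((x - p, h * s) : V2 × ℝ)‖ ^ (-(3 - κ))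
        ≤ C * ((1 + ‖p‖) ^ (3 * κ / 2) * sg κ x s p) := by
  set H := h ^ (-(1 - κ / 2)) + h ^ (-(1 + κ / 2)) with hH
  have hH0 : 0 < H := by positivity
  refine ⟨4 * (1 + ρ) ^ 2 * H, by positivity, fun x p s hx hs hxp => ?_⟩
  have hA : 0 < ‖x - p‖ := norm_pos_iff.2 (sub_ne_zero.2 hxp)
  have D1 : ‖x - p‖ ≤ ‖((x - p, h * s) : V2 × ℝ)‖ := le_max_left _ _
  have D2 : h * |s| ≤ ‖((x - p, h * s) : V2 × ℝ)‖ := by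
    have : ‖h * s‖ ≤ ‖((x - p, h * s) : V2 × ℝ)‖ := le_max_right _ _
    simp [abs_of_pos hh]
  set D := ‖((x - p, h * s) : V2 × ℝ)‖
  set A := ‖x - p‖ with hAdef
  set R := ‖p‖ with hR
  have hR0 : 0 ≤ R := norm_nonneg _
  have hRA : 1 + R ≤ (1 + ρ) * (1 + A) := by
    have : R ≤ ‖x‖ + A := by
      have := norm_sub_le x (x - p); rwa [sub_sub_cancel] at this
    nlinarith [mul_nonneg hρ hA.le]
  have hs' : 0 < |s| := abs_pos.2 hs
  -- the common estimate behind the two choices of the vertical exponent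
  have main : ∀ t, 1 - κ / 2 ≤ t → t ≤ 1 + κ / 2 → h ^ (-t) ≤ H →
      (1 + R) ^ 2 * D ^ (-(3 - κ)) ≤ 4 * (1 + ρ) ^ 2 * H *
        ((1 + R) ^ (3 * κ / 2) * ((1 + A ^ (-(2 - κ / 2))) * |s| ^ (-t))) := by
    intro t t1 t2 htH
    have hsplit := rpow_dist_split hh hA hs D1 D2 (b := 3 - κ) (t := t) (by linarith) (by linarith)
    set b := 3 - κ - t with hb
    have e2 : (1 + R) ^ 2 ≤ (1 + R) ^ (3 * κ / 2) * (1 + R) ^ b := by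
      rw [← rpow_add (by positivity), ← rpow_natCast]
      exact rpow_le_rpow_of_exponent_le (by linarith) (by push_cast; rw [hb]; linarith)
    have e3 : (1 + R) ^ b * A ^ (-b) ≤ (1 + ρ) ^ 2 * (4 * (1 + A ^ (-(2 - κ / 2)))) := by
      calc (1 + R) ^ b * A ^ (-b) ≤ ((1 + ρ) * (1 + A)) ^ b * A ^ (-b) := by
            gcongr; rw [hb]; linarith
        _ = (1 + ρ) ^ b * ((1 + A) ^ b * A ^ (-b)) := by
            rw [mul_rpow (by positivity) (by positivity)]; ring
        _ ≤ (1 + ρ) ^ (2 : ℝ) * (4 * (1 + A ^ (-(2 - κ / 2)))) := by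
            exact mul_le_mul
              (rpow_le_rpow_of_exponent_le (by linarith) (by rw [hb]; linarith))
              (one_add_inv_rpow_le hA (by rw [hb]; linarith) (by rw [hb]; linarith)
                (by rw [hb]; linarith)) (by positivity) (by positivity)
        _ = _ := by norm_num
    calc (1 + R) ^ 2 * D ^ (-(3 - κ))
        ≤ ((1 + R) ^ (3 * κ / 2) * (1 + R) ^ b) * (A ^ (-b) * (h ^ (-t) * |s| ^ (-t))) := by
          gcongr
      _ = (1 + R) ^ (3 * κ / 2) * ((1 + R) ^ b * A ^ (-b)) * (h ^ (-t) * |s| ^ (-t)) := by ring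
      _ ≤ (1 + R) ^ (3 * κ / 2) * ((1 + ρ) ^ 2 * (4 * (1 + A ^ (-(2 - κ / 2)))))
          * (H * |s| ^ (-t)) := by gcongr
      _ = _ := by ring
  have q1 : 0 < h ^ (-(1 - κ / 2)) := by positivity
  have q2 : 0 < h ^ (-(1 + κ / 2)) := by positivity
  unfold sg sw
  rcases min_choice (|s| ^ (-(1 - κ / 2))) (|s| ^ (-(1 + κ / 2))) with e | e <;> rw [e]
  · exact main _ le_rfl (by linarith) (by linarith)
  · exact main _ (by linarith) le_rfl (by linarith)

/-! ### Decay of the source and integrability -/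

/-- The source transported along helices. -/
def gtr (g : V2 → ℝ) (Y : ℝ × V2) : ℝ := g (rot (-Y.1) Y.2)

lemma continuous_gtr {g : V2 → ℝ} (hg : Continuous g) : Continuous (gtr g) := by
  have : Continuous fun Y : ℝ × V2 => rot (-Y.1) Y.2 := by unfold rot; fun_prop
  exact hg.comp this

lemma weight_aux {r ν : ℝ} (hr : 0 ≤ r) (hν : 0 ≤ ν) : (1 + r) ^ ν ≤ 2 ^ ν * (1 + r ^ ν) := by
  calc (1 + r) ^ ν ≤ (2 * max 1 r) ^ ν := by
        gcongr; linarith [le_max_left 1 r, le_max_right 1 r]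
    _ = 2 ^ ν * max 1 r ^ ν := mul_rpow (by norm_num) (by positivity)
    _ ≤ _ := by
        gcongr
        rcases max_choice 1 r with e | e <;> rw [e]
        · rw [one_rpow]; linarith [rpow_nonneg hr ν]
        · linarith

lemma source_nonneg {ν M : ℝ} {g : V2 → ℝ} (hg : ∀ x : V2, (1 + ‖x‖ ^ ν) * |g x| ≤ M) : 0 ≤ M :=
  le_trans (by positivity) (hg 0)

lemma source_weight {ν κ M : ℝ} (hκ : 0 < κ) (hν : 2 + 4 * κ ≤ ν) {g : V2 → ℝ}
    (hg : ∀ x : V2, (1 + ‖x‖ ^ ν) * |g x| ≤ M) (y : V2) {θ : ℝ} (hθ : θ ≤ 3 * κ / 2) :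
    |g y| * (1 + ‖y‖) ^ θ ≤ 2 ^ ν * M * (1 + ‖y‖) ^ (-(2 + κ)) := by
  have hM := source_nonneg hg
  have h1 : |g y| * (1 + ‖y‖) ^ ν ≤ 2 ^ ν * M := by
    calc |g y| * (1 + ‖y‖) ^ ν ≤ |g y| * (2 ^ ν * (1 + ‖y‖ ^ ν)) := by
          gcongr; exact weight_aux (norm_nonneg _) (by linarith)
      _ = 2 ^ ν * ((1 + ‖y‖ ^ ν) * |g y|) := by ring
      _ ≤ _ := by gcongr; exact hg y
  have h2 : (1 + ‖y‖) ^ θ ≤ (1 + ‖y‖) ^ ν * (1 + ‖y‖) ^ (-(2 + κ)) := by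
    rw [← rpow_add (by positivity)]
    exact rpow_le_rpow_of_exponent_le (by linarith [norm_nonneg y]) (by linarith)
  calc |g y| * (1 + ‖y‖) ^ θ ≤ |g y| * ((1 + ‖y‖) ^ ν * (1 + ‖y‖) ^ (-(2 + κ))) := by gcongr
    _ = (|g y| * (1 + ‖y‖) ^ ν) * (1 + ‖y‖) ^ (-(2 + κ)) := by ring
    _ ≤ _ := by gcongr

lemma gtr_weight {ν κ M : ℝ} (hκ : 0 < κ) (hν : 2 + 4 * κ ≤ ν) {g : V2 → ℝ}
    (hg : ∀ x : V2, (1 + ‖x‖ ^ ν) * |g x| ≤ M) (Y : ℝ × V2) {θ : ℝ} (hθ : θ ≤ 3 * κ / 2) :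
    |gtr g Y| * (1 + ‖Y.2‖) ^ θ ≤ 2 ^ ν * M * (1 + ‖Y.2‖) ^ (-(2 + κ)) := by
  simpa [gtr, norm_rot] using source_weight hκ hν hg (rot (-Y.1) Y.2) hθ

/-- The majorant with the exponents used throughout. -/
def mjk (κ : ℝ) (x : V2) (Y : ℝ × V2) : ℝ := mj κ (2 - κ / 2) (κ / 2) x Y

lemma mjk_nonneg (κ : ℝ) (x : V2) (Y : ℝ × V2) : 0 ≤ mjk κ x Y := mj_nonneg _ _ _ _ _

lemma measurable_mjk (κ : ℝ) : Measurable fun z : V2 × (ℝ × V2) => mjk κ z.1 z.2 := by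
  have h1 : Measurable fun z : V2 × (ℝ × V2) => sw (κ / 2) z.2.1 :=
    (measurable_sw _).comp (measurable_fst.comp measurable_snd)
  have h2 : Measurable fun z : V2 × (ℝ × V2) => pw κ (2 - κ / 2) z.1 z.2.2 := by
    unfold pw; fun_prop
  exact h1.mul h2

lemma mjk_integral_bound {κ : ℝ} (hκ : 0 < κ) (h1 : κ ≤ 1 / 4) :
    ∃ C, 0 ≤ C ∧ ∀ x, Integrable (mjk κ x) ∧ ∫ Y, mjk κ x Y ≤ C :=
  mj_integral_bound hκ (by linarith) (by linarith) (by linarith)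

lemma weight_mul_sg {ν κ M : ℝ} (hκ : 0 < κ) (hν : 2 + 4 * κ ≤ ν) {g : V2 → ℝ}
    (hg : ∀ x : V2, (1 + ‖x‖ ^ ν) * |g x| ≤ M) (x : V2) (Y : ℝ × V2) {θ : ℝ}
    (hθ : θ ≤ 3 * κ / 2) :
    |gtr g Y| * ((1 + ‖Y.2‖) ^ θ * sg κ x Y.1 Y.2) ≤ 2 ^ ν * M * mjk κ x Y := by
  calc |gtr g Y| * ((1 + ‖Y.2‖) ^ θ * sg κ x Y.1 Y.2)
      = |gtr g Y| * (1 + ‖Y.2‖) ^ θ * sg κ x Y.1 Y.2 := by ring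
    _ ≤ 2 ^ ν * M * (1 + ‖Y.2‖) ^ (-(2 + κ)) * sg κ x Y.1 Y.2 :=
        mul_le_mul_of_nonneg_right (gtr_weight hκ hν hg Y hθ) (sg_nonneg _ _ _ _)
    _ = _ := by unfold mjk mj pw sg; ring

lemma ae_generic (x : V2) : ∀ᵐ Y : ℝ × V2, Y.1 ≠ 0 ∧ x ≠ Y.2 := by
  have h1 : ∀ᵐ Y : ℝ × V2, Y.1 ≠ 0 := by
    rw [Measure.volume_eq_prod]
    exact Measure.quasiMeasurePreserving_fst.ae (Measure.ae_ne volume (0 : ℝ))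
  have h2 : ∀ᵐ Y : ℝ × V2, Y.2 ≠ x := by
    rw [Measure.volume_eq_prod]
    exact Measure.quasiMeasurePreserving_snd.ae (Measure.ae_ne volume x)
  filter_upwards [h1, h2] with Y a b using ⟨a, b.symm⟩

lemma measurable_kf (h ε : ℝ) : Measurable fun z : V2 × (ℝ × V2) => kf h ε z.1 z.2.1 z.2.2 := by
  unfold kf uf Qf ef; fun_prop

lemma gtr_kf_bound {h ν κ : ℝ} (hh : 0 < h) (h0 : 0 < κ) (h1 : κ ≤ 1 / 4) (hν : 2 + 4 * κ ≤ ν) :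
    ∃ C, 0 ≤ C ∧ ∀ (g : V2 → ℝ) (M : ℝ), (∀ x : V2, (1 + ‖x‖ ^ ν) * |g x| ≤ M) →
      ∀ ε, 0 ≤ ε → ε ≤ 1 → ∀ x (Y : ℝ × V2), Y.1 ≠ 0 → x ≠ Y.2 →
      |gtr g Y * kf h ε x Y.1 Y.2| ≤ C * M * (1 + ‖x‖ ^ 2) * mjk κ x Y := by
  obtain ⟨C, hC, H⟩ := kf_bound hh h0 h1
  refine ⟨C * 2 ^ ν, by positivity, fun g M hg ε e0 e1 x Y hs hx => ?_⟩
  have hM := source_nonneg hg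
  rw [abs_mul]
  calc |gtr g Y| * |kf h ε x Y.1 Y.2|
      ≤ |gtr g Y| * (C * (1 + ‖x‖ ^ 2) * ((1 + ‖Y.2‖) ^ κ * sg κ x Y.1 Y.2)) := by
        gcongr; exact H ε e0 e1 x Y.2 Y.1 hs hx
    _ = C * (1 + ‖x‖ ^ 2) * (|gtr g Y| * ((1 + ‖Y.2‖) ^ κ * sg κ x Y.1 Y.2)) := by ring
    _ ≤ C * (1 + ‖x‖ ^ 2) * (2 ^ ν * M * mjk κ x Y) := by
        gcongr ?_ * ?_; exact weight_mul_sg h0 hν hg x Y (by linarith)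
    _ = _ := by ring

lemma integrable_gtr_kf {h ν κ : ℝ} (hh : 0 < h) (h0 : 0 < κ) (h1 : κ ≤ 1 / 4)
    (hν : 2 + 4 * κ ≤ ν) {g : V2 → ℝ} (hgc : Continuous g) {M : ℝ}
    (hg : ∀ x : V2, (1 + ‖x‖ ^ ν) * |g x| ≤ M) (x : V2) :
    Integrable fun Y : ℝ × V2 => gtr g Y * kf h 0 x Y.1 Y.2 := by
  obtain ⟨C, hC, H⟩ := gtr_kf_bound hh h0 h1 hν
  obtain ⟨C', hC', H'⟩ := mjk_integral_bound h0 h1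
  refine ((H' x).1.const_mul (C * M * (1 + ‖x‖ ^ 2))).mono' ?_ ?_
  · exact ((continuous_gtr hgc).measurable.mul
      ((measurable_kf h 0).comp measurable_prodMk_left)).aestronglyMeasurable
  · filter_upwards [ae_generic x] with Y hY
    exact H g M hg 0 le_rfl zero_le_one x Y hY.1 hY.2

lemma integral_gtr_kf_bound {h ν κ : ℝ} (hh : 0 < h) (h0 : 0 < κ) (h1 : κ ≤ 1 / 4)
    (hν : 2 + 4 * κ ≤ ν) :
    ∃ C, 0 ≤ C ∧ ∀ (g : V2 → ℝ) (M : ℝ), (∀ x : V2, (1 + ‖x‖ ^ ν) * |g x| ≤ M) →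
      ∀ x, |∫ Y : ℝ × V2, gtr g Y * kf h 0 x Y.1 Y.2| ≤ C * M * (1 + ‖x‖ ^ 2) := by
  obtain ⟨C, hC, H⟩ := gtr_kf_bound hh h0 h1 hν
  obtain ⟨C', hC', H'⟩ := mjk_integral_bound h0 h1
  refine ⟨C * C', by positivity, fun g M hg x => ?_⟩
  have hM := source_nonneg hg
  rw [← Real.norm_eq_abs]
  refine (norm_integral_le_of_norm_le ((H' x).1.const_mul (C * M * (1 + ‖x‖ ^ 2)))
    ((ae_generic x).mono fun Y hY => H g M hg 0 le_rfl zero_le_one x Y hY.1 hY.2)).trans ?_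
  rw [integral_const_mul]
  calc _ ≤ C * M * (1 + ‖x‖ ^ 2) * C' := by gcongr; exact (H' x).2
    _ = _ := by ring

lemma integrable_source {ν κ : ℝ} (h0 : 0 < κ)
    (hν : 2 + 4 * κ ≤ ν) {g : V2 → ℝ} (hgc : Continuous g) {M : ℝ}
    (hg : ∀ x : V2, (1 + ‖x‖ ^ ν) * |g x| ≤ M) :
    Integrable g ∧ |∫ y, g y| ≤ 2 ^ ν * M * ∫ y : V2, (1 + ‖y‖) ^ (-(2 + κ)) := by
  have hw : Integrable (fun p : V2 => (1 + ‖p‖) ^ (-(2 + κ))) :=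
    integrable_one_add_norm (by simp; linarith)
  have hb : ∀ y, ‖g y‖ ≤ 2 ^ ν * M * (1 + ‖y‖) ^ (-(2 + κ)) := fun y => by
    simpa using source_weight h0 hν hg y (θ := 0) (by linarith)
  refine ⟨(hw.const_mul _).mono' hgc.aestronglyMeasurable (.of_forall hb), ?_⟩
  rw [← Real.norm_eq_abs, ← integral_const_mul]
  exact norm_integral_le_of_norm_le (hw.const_mul _) (.of_forall hb)

/-! ### Homogeneous functions of degree `-1` -/

section Homogeneous
variable {E : Type*} [NormedAddCommGroup E] [NormedSpace ℝ E]

lemma fderiv_homogeneous {F : E → ℝ} (hom : ∀ t : ℝ, 0 < t → ∀ Z, F (t • Z) = t⁻¹ * F Z)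
    {t : ℝ} (ht : 0 < t) (Z : E) : fderiv ℝ F (t • Z) = (t ^ 2)⁻¹ • fderiv ℝ F Z := by
  have h1 : fderiv ℝ (fun Z => F (t • Z)) Z = t • fderiv ℝ F (t • Z) := fderiv_comp_smul _
  have h2 : (fun Z => F (t • Z)) = t⁻¹ • F := by
    funext Z; rw [hom t ht, Pi.smul_apply, smul_eq_mul]
  rw [h2, fderiv_const_smul_field, Pi.smul_apply] at h1
  have h3 : fderiv ℝ F (t • Z) = t⁻¹ • (t • fderiv ℝ F (t • Z)) := by
    rw [smul_smul, inv_mul_cancel₀ ht.ne', one_smul]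
  rw [h3, ← h1, smul_smul]; congr 1; field_simp

/-- Bounds on the unit sphere and in its vicinity, by compactness. -/
lemma homogeneous_unit_bounds [FiniteDimensional ℝ E] {F : E → ℝ}
    (hF : ContDiffOn ℝ 2 F {0}ᶜ) :
    ∃ C, 0 ≤ C ∧ (∀ z : E, ‖z‖ = 1 → |F z| ≤ C ∧ ‖fderiv ℝ F z‖ ≤ C) ∧
      ∀ z v : E, ‖z‖ = 1 → ‖v‖ ≤ 1 / 2 →
        ‖fderiv ℝ F (z + v) - fderiv ℝ F z‖ ≤ C * ‖v‖ ∧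
        |F (z + v) - F z - fderiv ℝ F z v| ≤ C * ‖v‖ ^ 2 := by
  have hop : IsOpen ({0}ᶜ : Set E) := isOpen_compl_singleton
  have hF' : ContDiffOn ℝ 1 (fderiv ℝ F) {0}ᶜ := hF.fderiv_of_isOpen hop (by norm_num)
  have hF'' : ContinuousOn (fderiv ℝ (fderiv ℝ F)) {0}ᶜ :=
    hF'.continuousOn_fderiv_of_isOpen hop (by norm_num)
  set A : Set E := {z | 1 / 2 ≤ ‖z‖ ∧ ‖z‖ ≤ 3 / 2} with hA
  have hAc : IsCompact A := by
    refine (ProperSpace.isCompact_closedBall (0 : E) (3 / 2)).of_isClosed_subset ?_ ?_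
    · exact (isClosed_le continuous_const continuous_norm).inter
        (isClosed_le continuous_norm continuous_const)
    · intro z hz; simpa using hz.2
  have hA0 : A ⊆ {0}ᶜ := by
    intro z hz h0
    rw [Set.mem_singleton_iff] at h0
    have := hz.1; rw [h0, norm_zero] at this; norm_num at this
  obtain ⟨C0, h0⟩ := hAc.exists_bound_of_continuousOn (hF.continuousOn.mono hA0)
  obtain ⟨C1, h1⟩ := hAc.exists_bound_of_continuousOn (hF'.continuousOn.mono hA0)
  have hn : ContinuousOn (fun z => ‖fderiv ℝ (fderiv ℝ F) z‖) A := by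
    have h3 := hF''.mono hA0
    exact ContinuousOn.norm (E := E →L[ℝ] (E →L[ℝ] ℝ)) h3
  obtain ⟨C2, h2⟩ := hAc.exists_bound_of_continuousOn
    (f := fun z => ‖fderiv ℝ (fderiv ℝ F) z‖) hn
  set C := max 0 (max C0 (max C1 C2)) with hC
  have hC0 : C0 ≤ C := by simp [hC]
  have hC1 : C1 ≤ C := by simp [hC]
  have hC2 : C2 ≤ C := by simp [hC]
  have hball : ∀ z : E, ‖z‖ = 1 → ∀ w ∈ Metric.closedBall z (1 / 2), w ∈ A := by
    intro z hz w hw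
    rw [mem_closedBall_iff_norm] at hw
    constructor
    · have := norm_sub_norm_le z w; rw [norm_sub_rev] at this; linarith
    · have := norm_sub_norm_le w z; linarith
  have lip : ∀ z v : E, ‖z‖ = 1 → ‖v‖ ≤ 1 / 2 →
      ‖fderiv ℝ F (z + v) - fderiv ℝ F z‖ ≤ C * ‖v‖ := by
    intro z v hz hv
    have := (convex_closedBall z (1 / 2)).norm_image_sub_le_of_norm_fderiv_le (𝕜 := ℝ)
      (f := fderiv ℝ F) (C := C) (x := z) (y := z + v)
      (fun w hw => (hF'.contDiffAt (hop.mem_nhds (hA0 (hball z hz w hw)))).differentiableAt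
        (by norm_num))
      (fun w hw => (le_abs_self _).trans ((h2 w (hball z hz w hw)).trans hC2)) (by simp) (by simpa using hv)
    simpa using this
  refine ⟨C, le_max_left _ _, fun z hz => ?_, fun z v hz hv => ⟨lip z v hz hv, ?_⟩⟩
  · have hzA : z ∈ A := hball z hz z (by simp)
    exact ⟨(h0 z hzA).trans hC0, (h1 z hzA).trans hC1⟩
  · have := (convex_closedBall z ‖v‖).norm_image_sub_le_of_norm_fderiv_le' (𝕜 := ℝ)
      (f := F) (C := C * ‖v‖) (x := z) (y := z + v) (φ := fderiv ℝ F z)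
      (fun w hw => (hF.contDiffAt (hop.mem_nhds (hA0 (hball z hz w
        (Metric.closedBall_subset_closedBall hv hw))))).differentiableAt
        (by norm_num))
      (fun w hw => by
        have hw' : ‖w - z‖ ≤ ‖v‖ := mem_closedBall_iff_norm.1 hw
        have := lip z (w - z) hz (hw'.trans hv)
        rw [add_sub_cancel] at this
        exact this.trans (by gcongr)) (by simp) (by simp)
    rw [add_sub_cancel_left, Real.norm_eq_abs] at this
    linarith [show C * ‖v‖ * ‖v‖ = C * ‖v‖ ^ 2 by ring]

/-- The two estimates when one of the points is on the unit sphere. -/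
lemma homogeneous_unit_holder [FiniteDimensional ℝ E] {F : E → ℝ}
    (hF : ContDiffOn ℝ 2 F {0}ᶜ) (hom : ∀ t : ℝ, 0 < t → ∀ Z, F (t • Z) = t⁻¹ * F Z)
    {α : ℝ} (a0 : 0 < α) (a1 : α ≤ 1) :
    ∃ C, 0 ≤ C ∧ ∀ z w : E, ‖z‖ = 1 → w ≠ 0 →
      ‖fderiv ℝ F w - fderiv ℝ F z‖ ≤ C * (‖w - z‖ ^ α * (1 + ‖w‖ ^ (-(2 + α)))) ∧
      |F w - F z - fderiv ℝ F z (w - z)| ≤ C * (‖w - z‖ ^ (1 + α) * (1 + ‖w‖ ^ (-(2 + α)))) := by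
  obtain ⟨C, hC, h1, h2⟩ := homogeneous_unit_bounds hF
  refine ⟨16 * C, by positivity, fun z w hz hw => ?_⟩
  have hw0 : 0 < ‖w‖ := norm_pos_iff.2 hw
  have hW : 0 < ‖w‖ ^ (-(2 + α)) := by positivity
  set v := w - z with hv
  have hwz : w = z + v := by rw [hv]; abel
  rcases le_or_gt ‖v‖ (1 / 2) with hle | hgt
  · have := h2 z v hz hle
    rw [← hwz] at this
    rcases (norm_nonneg v).eq_or_lt with e | hpos
    · rw [← e] at this
      have p1 : (0:ℝ) ≤ ‖v‖ ^ α := by positivity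
      have p2 : (0:ℝ) ≤ ‖v‖ ^ (1 + α) := by positivity
      exact ⟨this.1.trans (by rw [mul_zero]; positivity),
        this.2.trans (by norm_num; positivity)⟩
    have e1 : ‖v‖ ≤ ‖v‖ ^ α := by
      simpa using rpow_le_rpow_of_exponent_ge hpos (by linarith) a1
    have e2 : ‖v‖ ^ 2 ≤ ‖v‖ ^ (1 + α) := by
      rw [rpow_add hpos, rpow_one, sq]; gcongr
    constructor
    · refine this.1.trans ?_
      calc C * ‖v‖ ≤ C * (‖v‖ ^ α * 1) := by rw [mul_one]; gcongr
        _ ≤ 16 * C * (‖v‖ ^ α * (1 + ‖w‖ ^ (-(2 + α)))) := by gcongr <;> linarith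
    · refine this.2.trans ?_
      calc C * ‖v‖ ^ 2 ≤ C * (‖v‖ ^ (1 + α) * 1) := by rw [mul_one]; gcongr
        _ ≤ 16 * C * (‖v‖ ^ (1 + α) * (1 + ‖w‖ ^ (-(2 + α)))) := by gcongr <;> linarith
  · have hu : ‖(‖w‖⁻¹ • w)‖ = 1 := by
      rw [norm_smul, norm_inv, norm_norm, inv_mul_cancel₀ hw0.ne']
    have hwu : w = ‖w‖ • (‖w‖⁻¹ • w) := by
      rw [smul_smul, mul_inv_cancel₀ hw0.ne', one_smul]
    have d1 : ‖fderiv ℝ F w‖ ≤ C * (1 + ‖w‖ ^ (-(2 + α))) := by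
      rw [hwu, fderiv_homogeneous hom hw0, ← hwu, norm_smul, norm_inv, norm_pow, norm_norm,
        mul_comm]
      refine mul_le_mul (h1 _ hu).2 ?_ (by positivity) hC
      have := rpow_neg_le_one_add hw0 (b := 2) (c := 2 + α) (by norm_num) (by linarith)
      rwa [rpow_neg hw0.le, rpow_two] at this
    have d0 : |F w| ≤ C * (1 + ‖w‖ ^ (-(2 + α))) := by
      rw [hwu, hom _ hw0, ← hwu, abs_mul, abs_inv, abs_norm, mul_comm]
      refine mul_le_mul (h1 _ hu).1 ?_ (by positivity) hC
      have := rpow_neg_le_one_add hw0 (b := 1) (c := 2 + α) (by norm_num) (by linarith)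
      rwa [rpow_neg hw0.le, rpow_one] at this
    have hz1 := h1 z hz
    have hvp : 0 < ‖v‖ := by linarith
    have e1 : 1 ≤ 2 * ‖v‖ ^ α := by
      have : (1 / 2 : ℝ) ≤ ‖v‖ ^ α := by
        calc (1 / 2 : ℝ) = (1 / 2) ^ (1 : ℝ) := by rw [rpow_one]
          _ ≤ (1 / 2) ^ α := rpow_le_rpow_of_exponent_ge (by norm_num) (by norm_num) a1
          _ ≤ _ := by gcongr
      linarith
    have e3 : ‖v‖ ≤ 2 * ‖v‖ ^ (1 + α) := by
      rw [rpow_add hvp, rpow_one]; nlinarith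
    have e2 : 1 ≤ 4 * ‖v‖ ^ (1 + α) := by linarith
    set W := ‖w‖ ^ (-(2 + α)) with hWdef
    have hCW : 0 ≤ C * W := by positivity
    constructor
    · calc ‖fderiv ℝ F w - fderiv ℝ F z‖ ≤ ‖fderiv ℝ F w‖ + ‖fderiv ℝ F z‖ := norm_sub_le _ _
        _ ≤ C * (1 + W) + C := add_le_add d1 hz1.2
        _ ≤ 2 * (C * (1 + W)) * 1 := by nlinarith
        _ ≤ 2 * (C * (1 + W)) * (2 * ‖v‖ ^ α) := by gcongr
        _ = 4 * (C * (‖v‖ ^ α * (1 + W))) := by ring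
        _ ≤ 16 * (C * (‖v‖ ^ α * (1 + W))) := by gcongr; norm_num
        _ = _ := by ring
    · have d2 : |fderiv ℝ F z v| ≤ C * ‖v‖ :=
        ((fderiv ℝ F z).le_opNorm v).trans (by gcongr; exact hz1.2)
      have t : |F w - F z - fderiv ℝ F z v| ≤ |F w| + |F z| + |fderiv ℝ F z v| :=
        (abs_sub_le_abs_add_abs _ _).trans (by gcongr; exact abs_sub_le_abs_add_abs _ _)
      have hCv : 0 ≤ C * ‖v‖ ^ (1 + α) := by positivity
      calc |F w - F z - fderiv ℝ F z v| ≤ C * (1 + W) * 1 + C * 1 * 1 + C * ‖v‖ := by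
            linarith [hz1.1]
        _ ≤ C * (1 + W) * (4 * ‖v‖ ^ (1 + α)) + C * (1 + W) * (4 * ‖v‖ ^ (1 + α))
            + C * (2 * ‖v‖ ^ (1 + α)) := by gcongr; linarith
        _ ≤ _ := by nlinarith [mul_nonneg hCv hW.le]

/-- A function which is `C²` off the origin and homogeneous of degree `-1` has a derivative which
is Hölder continuous with any exponent `α ≤ 1`, with a constant controlled by the distances to the
origin raised to the power `-(2 + α)`. -/
lemma homogeneous_holder [FiniteDimensional ℝ E] {F : E → ℝ}
    (hF : ContDiffOn ℝ 2 F {0}ᶜ) (hom : ∀ t : ℝ, 0 < t → ∀ Z, F (t • Z) = t⁻¹ * F Z)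
    {α : ℝ} (a0 : 0 < α) (a1 : α ≤ 1) :
    ∃ C, 0 ≤ C ∧ ∀ Z W : E, Z ≠ 0 → W ≠ 0 →
      ‖fderiv ℝ F W - fderiv ℝ F Z‖ ≤
        C * (‖W - Z‖ ^ α * (‖Z‖ ^ (-(2 + α)) + ‖W‖ ^ (-(2 + α)))) ∧
      |F W - F Z - fderiv ℝ F Z (W - Z)| ≤
        C * (‖W - Z‖ ^ (1 + α) * (‖Z‖ ^ (-(2 + α)) + ‖W‖ ^ (-(2 + α)))) := by
  obtain ⟨C, hC, H⟩ := homogeneous_unit_holder hF hom a0 a1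
  refine ⟨C, hC, fun Z W hZ hW => ?_⟩
  set t := ‖Z‖ with ht
  have ht0 : 0 < t := norm_pos_iff.2 hZ
  set z := t⁻¹ • Z with hz
  set w := t⁻¹ • W with hw
  have hZz : Z = t • z := by rw [hz, smul_smul, mul_inv_cancel₀ ht0.ne', one_smul]
  have hWw : W = t • w := by rw [hw, smul_smul, mul_inv_cancel₀ ht0.ne', one_smul]
  have hz1 : ‖z‖ = 1 := by rw [hz, norm_smul, norm_inv, norm_norm, inv_mul_cancel₀ ht0.ne']
  have hw0 : w ≠ 0 := smul_ne_zero (inv_ne_zero ht0.ne') hW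
  have hwp : 0 < ‖w‖ := norm_pos_iff.2 hw0
  have hsub : W - Z = t • (w - z) := by rw [hZz, hWw, smul_sub]
  have nW : ‖W‖ = t * ‖w‖ := by rw [hWw, norm_smul, Real.norm_of_nonneg ht0.le]
  have nS : ‖W - Z‖ = t * ‖w - z‖ := by rw [hsub, norm_smul, Real.norm_of_nonneg ht0.le]
  have p1 : t ^ α * t ^ (-(2 + α)) = (t ^ 2)⁻¹ := by
    rw [← rpow_add ht0, show α + -(2 + α) = -(2:ℝ) by ring, rpow_neg ht0.le, rpow_two]
  have p2 : t ^ (1 + α) * t ^ (-(2 + α)) = t⁻¹ := by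
    rw [← rpow_add ht0, show 1 + α + -(2 + α) = -(1:ℝ) by ring, rpow_neg ht0.le, rpow_one]
  obtain ⟨H1, H2⟩ := H z w hz1 hw0
  rw [nW, nS, mul_rpow ht0.le (norm_nonneg _), mul_rpow ht0.le (norm_nonneg _),
    mul_rpow ht0.le (norm_nonneg _)]
  constructor
  · rw [hWw, hZz, fderiv_homogeneous hom ht0, fderiv_homogeneous hom ht0, ← smul_sub, norm_smul,
      Real.norm_of_nonneg (by positivity : 0 ≤ (t ^ 2)⁻¹)]
    calc _ ≤ (t ^ 2)⁻¹ * (C * (‖w - z‖ ^ α * (1 + ‖w‖ ^ (-(2 + α))))) := by gcongr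
      _ = _ := by rw [← p1]; ring
  · have : F W - F Z - fderiv ℝ F Z (W - Z) = t⁻¹ * (F w - F z - fderiv ℝ F z (w - z)) := by
      rw [hsub, hWw, hZz, hom t ht0, hom t ht0, fderiv_homogeneous hom ht0]
      simp only [smul_apply, map_smul, smul_eq_mul]
      field_simp
    rw [this, abs_mul, abs_of_pos (by positivity : 0 < t⁻¹)]
    calc _ ≤ t⁻¹ * (C * (‖w - z‖ ^ (1 + α) * (1 + ‖w‖ ^ (-(2 + α))))) := by gcongr
      _ = _ := by rw [← p2]; ring

end Homogeneous

/-! ### Hölder regularity of parametric integrals -/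

/-- Integrability of a family of functionals on the plane, from integrability of its values. -/
lemma integrable_clm {Ω : Type*} [MeasurableSpace Ω] {μ : Measure Ω} {L : Ω → (V2 →L[ℝ] ℝ)}
    (hL : ∀ v, Integrable (fun Y => L Y v) μ) : Integrable L μ := by
  have hv : ∀ v : V2, v = v 0 • EuclideanSpace.single 0 (1 : ℝ)
      + v 1 • EuclideanSpace.single 1 (1 : ℝ) := by
    intro v; apply V2_ext <;> simp
  set p0 : V2 →L[ℝ] ℝ := EuclideanSpace.proj 0
  set p1 : V2 →L[ℝ] ℝ := EuclideanSpace.proj 1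
  have h0 : Integrable (fun Y => L Y (EuclideanSpace.single 0 1) • p0) μ := (hL _).smul_const p0
  have h1 : Integrable (fun Y => L Y (EuclideanSpace.single 1 1) • p1) μ := (hL _).smul_const p1
  have h2 := Integrable.add (ε' := V2 →L[ℝ] ℝ) (f := fun Y => L Y (EuclideanSpace.single 0 1) • p0)
    (g := fun Y => L Y (EuclideanSpace.single 1 1) • p1) (μ := μ) h0 h1
  refine h2.congr (.of_forall fun Y => ?_)
  ext v
  conv_rhs => rw [hv v]
  simp [p0, p1]
  ring

/-- Differentiation under the integral sign when the first-order Taylor remainder and the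
oscillation of the derivative are dominated in mean, but the integrand is singular; the derivative
of the integral is then Hölder continuous on balls. -/
lemma holder_parametric {Ω : Type*} [MeasurableSpace Ω] {μ : Measure Ω} {α : ℝ} (a0 : 0 < α)
    (k : V2 → Ω → ℝ) (k' : V2 → Ω → (V2 →L[ℝ] ℝ)) (B : V2 → Ω → ℝ)
    (hk : ∀ x, Integrable (k x) μ) (hB : ∀ x, Integrable (B x) μ)
    {D : ℝ} (hD : ∀ x, ∫ Y, B x Y ∂μ ≤ D)
    (hm : ∀ x, AEStronglyMeasurable (k' x) μ)
    (H : ∀ ρ : ℝ, ∃ C, 0 ≤ C ∧ ∀ x x', ‖x‖ ≤ ρ → ‖x'‖ ≤ ρ → ∀ᵐ Y ∂μ,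
      ‖k' x' Y - k' x Y‖ ≤ C * (‖x' - x‖ ^ α * (B x Y + B x' Y)) ∧
      |k x' Y - k x Y - k' x Y (x' - x)| ≤ C * (‖x' - x‖ ^ (1 + α) * (B x Y + B x' Y))) :
    (∀ x, HasFDerivAt (fun x => ∫ Y, k x Y ∂μ) (∫ Y, k' x Y ∂μ) x) ∧
    ∀ ρ : ℝ, ∃ C, 0 ≤ C ∧ ∀ x x', ‖x‖ ≤ ρ → ‖x'‖ ≤ ρ →
      ‖(∫ Y, k' x' Y ∂μ) - ∫ Y, k' x Y ∂μ‖ ≤ C * ‖x' - x‖ ^ α := by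
  have hk' : ∀ x, Integrable (k' x) μ := by
    intro x
    refine integrable_clm fun v => ?_
    obtain ⟨C, hC, h⟩ := H (‖x‖ + ‖v‖)
    have h1 := h x (x + v) (by linarith [norm_nonneg v]) (norm_add_le _ _)
    have mv : AEStronglyMeasurable (fun Y => k' x Y v) μ := (hm x).apply_continuousLinearMap v
    have rem : Integrable (fun Y => k (x + v) Y - k x Y - k' x Y v) μ := by
      refine (((hB x).add (hB (x + v))).const_mul (C * ‖v‖ ^ (1 + α))).mono'
        (((hk (x + v)).1.sub (hk x).1).sub mv) ?_
      filter_upwards [h1] with Y hY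
      have := hY.2
      rw [add_sub_cancel_left] at this
      simpa [mul_assoc] using this
    refine (((hk (x + v)).sub (hk x)).sub rem).congr (.of_forall fun Y => ?_)
    simp
  have hDB : ∀ x x', ∫ Y, (B x Y + B x' Y) ∂μ ≤ 2 * D := fun x x' => by
    rw [integral_add (hB x) (hB x')]; linarith [hD x, hD x']
  constructor
  · intro x
    obtain ⟨C, hC, h⟩ := H (‖x‖ + 1)
    rw [hasFDerivAt_iff_isLittleO]
    have key : ∀ x', ‖x' - x‖ ≤ 1 → |(∫ Y, k x' Y ∂μ) - (∫ Y, k x Y ∂μ)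
        - (∫ Y, k' x Y ∂μ) (x' - x)| ≤ (C * (2 * D)) * ‖x' - x‖ ^ (1 + α) := by
      intro x' hx'
      have hn : ‖x'‖ ≤ ‖x‖ + 1 := by
        have := norm_sub_norm_le x' x; linarith
      rw [ContinuousLinearMap.integral_apply (hk' x), ← integral_sub (hk x') (hk x),
        ← integral_sub (f := fun Y => k x' Y - k x Y) ((hk x').sub (hk x))
          ((hk' x).apply_continuousLinearMap _),
        ← Real.norm_eq_abs]
      refine (norm_integral_le_of_norm_le (((hB x).add (hB x')).const_mul
        (C * ‖x' - x‖ ^ (1 + α))) ?_).trans ?_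
      · filter_upwards [h x x' (by linarith) hn] with Y hY
        simpa [mul_assoc] using hY.2
      · rw [integral_const_mul]
        calc _ ≤ C * ‖x' - x‖ ^ (1 + α) * (2 * D) := by gcongr; exact hDB x x'
          _ = _ := by ring
    have hO : (fun x' => (∫ Y, k x' Y ∂μ) - (∫ Y, k x Y ∂μ) - (∫ Y, k' x Y ∂μ) (x' - x))
        =O[𝓝 x] fun x' => ‖x' - x‖ ^ (1 + α) := by
      refine Asymptotics.IsBigO.of_bound (C * (2 * D)) ?_
      filter_upwards [Metric.closedBall_mem_nhds x one_pos] with x' hx'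
      rw [mem_closedBall_iff_norm] at hx'
      rw [Real.norm_of_nonneg (by positivity : 0 ≤ ‖x' - x‖ ^ (1 + α))]
      exact key x' hx'
    refine hO.trans_isLittleO ?_
    rw [← Asymptotics.isLittleO_norm_right]
    have e : (fun x' : V2 => ‖x' - x‖ ^ (1 + α)) = fun x' => ‖x' - x‖ ^ α * ‖x' - x‖ := by
      funext x'
      rcases (norm_nonneg (x' - x)).eq_or_lt with e | e
      · rw [← e, zero_rpow (by linarith)]; simp
      · rw [add_comm, rpow_add e, rpow_one]
    rw [e]
    have ht : Filter.Tendsto (fun x' : V2 => ‖x' - x‖ ^ α) (𝓝 x) (𝓝 0) := by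
      have : Continuous fun x' : V2 => ‖x' - x‖ ^ α :=
        (continuous_norm.comp (continuous_id.sub continuous_const)).rpow_const fun _ => Or.inr a0.le
      have := this.tendsto x
      rwa [sub_self, norm_zero, zero_rpow a0.ne'] at this
    have := (Asymptotics.isLittleO_one_iff ℝ).2 ht
    simpa using this.mul_isBigO (Asymptotics.isBigO_refl (fun x' : V2 => ‖x' - x‖) (𝓝 x))
  · intro ρ
    obtain ⟨C, hC, h⟩ := H ρ
    by_cases hρ : 0 ≤ ρ
    swap
    · exact ⟨0, le_rfl, fun x _ hx => absurd ((norm_nonneg x).trans hx) hρ⟩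
    have hD0 : 0 ≤ |D| := abs_nonneg _
    refine ⟨C * (2 * |D|), by positivity, fun x x' hx hx' => ?_⟩
    rw [← integral_sub (hk' x') (hk' x)]
    refine (norm_integral_le_of_norm_le (((hB x).add (hB x')).const_mul
        (C * ‖x' - x‖ ^ α)) ?_).trans ?_
    · filter_upwards [h x x' hx hx'] with Y hY
      simpa [mul_assoc] using hY.1
    · rw [integral_const_mul]
      calc _ ≤ C * ‖x' - x‖ ^ α * (2 * |D|) := by
            gcongr; exact (hDB x x').trans (by gcongr; exact le_abs_self D)
        _ = _ := by ring

/-! ### The kernel as a sum of homogeneous functions -/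

/-- The quadratic monomials on `ℝ³`. -/
def mono (a : Fin 6) (Z : V2 × ℝ) : ℝ :=
  ![Z.1 0 ^ 2, Z.1 1 ^ 2, Z.2 ^ 2, Z.1 0 * Z.1 1, Z.1 0 * Z.2, Z.1 1 * Z.2] a

/-- The quadratic monomials divided by the cube of the Euclidean distance to the origin. -/
def FF (a : Fin 6) (Z : V2 × ℝ) : ℝ :=
  mono a Z * (√(Z.1 0 ^ 2 + Z.1 1 ^ 2 + Z.2 ^ 2))⁻¹ ^ 3

/-- The coefficients of the kernel in terms of the functions `FF`. -/
def cff (h : ℝ) (a : Fin 6) (p : V2) : ℝ :=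
  ![h ^ 2 + p 1 ^ 2, h ^ 2 + p 0 ^ 2, h ^ 2, -2 * p 0 * p 1, h * p 1, -h * p 0] a

lemma contDiff_mono (a : Fin 6) : ContDiff ℝ 2 (mono a) := by
  have c0 : ContDiff ℝ 2 fun Z : V2 × ℝ => Z.1 0 := by fun_prop
  have c1 : ContDiff ℝ 2 fun Z : V2 × ℝ => Z.1 1 := by fun_prop
  have c2 : ContDiff ℝ 2 fun Z : V2 × ℝ => Z.2 := by fun_prop
  fin_cases a
  · exact c0.pow 2
  · exact c1.pow 2
  · exact c2.pow 2
  · exact c0.mul c1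
  · exact c0.mul c2
  · exact c1.mul c2

lemma sum_sq_ne_zero {Z : V2 × ℝ} (hZ : Z ≠ 0) : Z.1 0 ^ 2 + Z.1 1 ^ 2 + Z.2 ^ 2 ≠ 0 := by
  intro h0
  apply hZ
  have h1 : Z.1 0 = 0 := by nlinarith [sq_nonneg (Z.1 0), sq_nonneg (Z.1 1), sq_nonneg Z.2]
  have h2 : Z.1 1 = 0 := by nlinarith [sq_nonneg (Z.1 0), sq_nonneg (Z.1 1), sq_nonneg Z.2]
  have h3 : Z.2 = 0 := by nlinarith [sq_nonneg (Z.1 0), sq_nonneg (Z.1 1), sq_nonneg Z.2]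
  exact Prod.ext (V2_ext h1 h2) h3

lemma contDiffOn_FF (a : Fin 6) : ContDiffOn ℝ 2 (FF a) {0}ᶜ := by
  refine (contDiff_mono a).contDiffOn.mul 
    (ContDiffOn.pow (ContDiffOn.inv (ContDiffOn.sqrt ?_ ?_) ?_) 3)
  · exact ContDiff.contDiffOn (by fun_prop)
  · intro Z hZ; exact sum_sq_ne_zero hZ
  · intro Z hZ; exact Real.sqrt_ne_zero'.2 (lt_of_le_of_ne (by positivity) (sum_sq_ne_zero hZ).symm)

lemma FF_homogeneous (a : Fin 6) (t : ℝ) (ht : 0 < t) (Z : V2 × ℝ) :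
    FF a (t • Z) = t⁻¹ * FF a Z := by
  have h1 : mono a (t • Z) = t ^ 2 * mono a Z := by
    fin_cases a <;> simp [mono] <;> ring
  have h2 : √((t • Z).1 0 ^ 2 + (t • Z).1 1 ^ 2 + (t • Z).2 ^ 2)
      = t * √(Z.1 0 ^ 2 + Z.1 1 ^ 2 + Z.2 ^ 2) := by
    rw [show (t • Z).1 0 ^ 2 + (t • Z).1 1 ^ 2 + (t • Z).2 ^ 2
      = t ^ 2 * (Z.1 0 ^ 2 + Z.1 1 ^ 2 + Z.2 ^ 2) by simp; ring,
      Real.sqrt_mul (by positivity), Real.sqrt_sq ht.le]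
  rw [FF, h1, h2, FF, mul_inv, mul_pow]
  field_simp

lemma kf_eq_sum (h : ℝ) (x p : V2) (s : ℝ) (hZ : ((x - p, h * s) : V2 × ℝ) ≠ 0) :
    kf h 0 x s p = (∑ a, cff h a p * FF a (x - p, h * s)) - h ^ 2 * (√(1 + h ^ 2 * s ^ 2))⁻¹ := by
  have h0 := sum_sq_ne_zero hZ
  set q := (x 0 - p 0) ^ 2 + (x 1 - p 1) ^ 2 + (h * s) ^ 2 with hq
  have hq0 : 0 < q := lt_of_le_of_ne (by positivity) (by simpa [hq] using h0.symm)
  have hQ : Qf h 0 x s p = q := by rw [Qf, hq]; ring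
  have hu : uf h 0 x s p = (√q)⁻¹ := by rw [uf, hQ]
  have hFF : ∀ a, FF a (x - p, h * s) = mono a (x - p, h * s) * (√q)⁻¹ ^ 3 := by
    intro a; simp [FF, hq]
  have hsq : q * (√q)⁻¹ ^ 2 = 1 := by
    rw [inv_pow, Real.sq_sqrt hq0.le, mul_inv_cancel₀ hq0.ne']
  simp only [hFF, kf, hu, Fin.sum_univ_succ]
  simp [mono, cff, ef]
  rw [← inv_pow]
  set w := (√q)⁻¹
  have : w = q * w ^ 3 := by
    calc w = (q * w ^ 2) * w := by rw [hsq, one_mul]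
      _ = _ := by ring
  linear_combination (h ^ 2) * this + h ^ 2 * w ^ 3 * hq

lemma abs_cff_le (h : ℝ) (a : Fin 6) (p : V2) : |cff h a p| ≤ (2 + h ^ 2) * (1 + ‖p‖) ^ 2 := by
  have hn := V2_norm_sq p
  have hp := norm_nonneg p
  rw [abs_le]
  have e : (1 + ‖p‖) ^ 2 = 1 + 2 * ‖p‖ + (p 0 ^ 2 + p 1 ^ 2) := by rw [← hn]; ring
  have t := mul_nonneg (sq_nonneg h) hp
  rw [e]
  fin_cases a <;> simp [cff] <;> constructor <;>
    nlinarith [sq_nonneg (p 0), sq_nonneg (p 1), sq_nonneg (p 0 + p 1), sq_nonneg (p 0 - p 1),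
      sq_nonneg h, sq_nonneg (h + p 0), sq_nonneg (h - p 0), sq_nonneg (h + p 1),
      sq_nonneg (h - p 1), mul_nonneg (sq_nonneg h) (sq_nonneg (p 0)),
      mul_nonneg (sq_nonneg h) (sq_nonneg (p 1))]

/-! ### Regularity of the potential -/

/-- The derivative of the kernel `kf h 0` in its first variable. -/
def kf' (h : ℝ) (x : V2) (s : ℝ) (p : V2) : V2 →L[ℝ] ℝ :=
  ∑ a, cff h a p • (fderiv ℝ (FF a) (x - p, h * s)).comp (ContinuousLinearMap.inl ℝ V2 ℝ)

lemma clm_smul_sub (c : ℝ) (L L' : V2 →L[ℝ] ℝ) : c • L - c • L' = c • (L - L') := by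
  ext v; simp [mul_sub]

lemma kf_holder_aux {h κ : ℝ} (h0 : 0 < κ) (h1 : κ < 1) :
    ∃ C, 0 ≤ C ∧ ∀ x x' p s, ((x - p, h * s) : V2 × ℝ) ≠ 0 → ((x' - p, h * s) : V2 × ℝ) ≠ 0 →
      ‖kf' h x' s p - kf' h x s p‖ ≤ C * (‖x' - x‖ ^ (1 - κ) * ((1 + ‖p‖) ^ 2 *
        (‖((x - p, h * s) : V2 × ℝ)‖ ^ (-(3 - κ)) + ‖((x' - p, h * s) : V2 × ℝ)‖ ^ (-(3 - κ))))) ∧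
      |kf h 0 x' s p - kf h 0 x s p - kf' h x s p (x' - x)| ≤
        C * (‖x' - x‖ ^ (1 + (1 - κ)) * ((1 + ‖p‖) ^ 2 *
        (‖((x - p, h * s) : V2 × ℝ)‖ ^ (-(3 - κ)) + ‖((x' - p, h * s) : V2 × ℝ)‖ ^ (-(3 - κ))))) := by
  have key := fun a => homogeneous_holder (contDiffOn_FF a) (FF_homogeneous a)
    (α := 1 - κ) (by linarith) (by linarith)
  choose C hC H using key
  refine ⟨∑ a, (2 + h ^ 2) * C a, Finset.sum_nonneg fun a _ => mul_nonneg (by positivity) (hC a),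
    fun x x' p s hZ hW => ?_⟩
  have hWZ : ((x' - p, h * s) : V2 × ℝ) - (x - p, h * s) = (x' - x, 0) := by
    ext1 <;> simp
  have hnorm : ‖((x' - p, h * s) : V2 × ℝ) - (x - p, h * s)‖ = ‖x' - x‖ := by
    rw [hWZ, Prod.norm_def]; simp
  have e3 : 2 + (1 - κ) = 3 - κ := by ring
  have H' := fun a => H a _ _ hZ hW
  simp only [hnorm, e3] at H'
  set Z : V2 × ℝ := (x - p, h * s) with hZd
  set W : V2 × ℝ := (x' - p, h * s) with hWd
  set S := ‖Z‖ ^ (-(3 - κ)) + ‖W‖ ^ (-(3 - κ)) with hS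
  have hS0 : 0 ≤ S := by positivity
  constructor
  · have e : kf' h x' s p - kf' h x s p = ∑ a, cff h a p •
        (fderiv ℝ (FF a) W - fderiv ℝ (FF a) Z).comp (ContinuousLinearMap.inl ℝ V2 ℝ) := by
      simp only [kf', ← Finset.sum_sub_distrib, clm_smul_sub, ContinuousLinearMap.sub_comp,
        hZd, hWd]
    rw [e, Finset.sum_mul]
    refine norm_sum_le_of_le _ fun a _ => ?_
    have hcomp : ‖(fderiv ℝ (FF a) W - fderiv ℝ (FF a) Z).comp (ContinuousLinearMap.inl ℝ V2 ℝ)‖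
        ≤ C a * (‖x' - x‖ ^ (1 - κ) * S) := by
      refine (ContinuousLinearMap.opNorm_comp_le _ _).trans ?_
      refine le_trans ?_ (H' a).1
      exact mul_le_of_le_one_right (norm_nonneg _) (ContinuousLinearMap.norm_inl_le_one ℝ V2 ℝ)
    rw [norm_smul]
    calc _ ≤ (2 + h ^ 2) * (1 + ‖p‖) ^ 2 * (C a * (‖x' - x‖ ^ (1 - κ) * S)) :=
          mul_le_mul (abs_cff_le h a p) hcomp (norm_nonneg _) (by positivity)
      _ = _ := by ring
  · have e : kf h 0 x' s p - kf h 0 x s p - kf' h x s p (x' - x) = ∑ a, cff h a p *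
        (FF a W - FF a Z - fderiv ℝ (FF a) Z (W - Z)) := by
      rw [kf_eq_sum h x p s hZ, kf_eq_sum h x' p s hW, hWZ]
      simp only [kf', mul_sub, Finset.sum_sub_distrib]
      simp only [sum_apply, smul_apply, ContinuousLinearMap.comp_apply,
        ContinuousLinearMap.inl_apply, smul_eq_mul, ← hZd, ← hWd]
      ring
    rw [e, Finset.sum_mul, ← Real.norm_eq_abs]
    refine norm_sum_le_of_le _ fun a _ => ?_
    rw [norm_mul]
    calc _ ≤ (2 + h ^ 2) * (1 + ‖p‖) ^ 2 * (C a * (‖x' - x‖ ^ (1 + (1 - κ)) * S)) :=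
          mul_le_mul (abs_cff_le h a p) (H' a).2 (abs_nonneg _) (by positivity)
      _ = _ := by ring

lemma measurable_kf' (h : ℝ) (x : V2) : Measurable fun Y : ℝ × V2 => kf' h x Y.1 Y.2 := by
  unfold kf'
  refine Finset.measurable_sum _ fun a _ => ?_
  have m1 : Measurable fun Y : ℝ × V2 => cff h a Y.2 := by
    fin_cases a <;> simp [cff] <;> fun_prop
  have m2 : Measurable fun Y : ℝ × V2 => fderiv ℝ (FF a) (x - Y.2, h * Y.1) :=
    (measurable_fderiv ℝ (FF a)).comp (by fun_prop)
  have c : Continuous fun L : V2 × ℝ →L[ℝ] ℝ => L.comp (ContinuousLinearMap.inl ℝ V2 ℝ) := by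
    fun_prop
  exact m1.smul (c.measurable.comp m2)

lemma kernel_holder {h ν κ : ℝ} (hh : 0 < h) (h0 : 0 < κ) (h1 : κ ≤ 1 / 4)
    (hν : 2 + 4 * κ ≤ ν) {g : V2 → ℝ} {M : ℝ}
    (hg : ∀ x : V2, (1 + ‖x‖ ^ ν) * |g x| ≤ M) (ρ : ℝ) :
    ∃ C, 0 ≤ C ∧ ∀ x x', ‖x‖ ≤ ρ → ‖x'‖ ≤ ρ → ∀ᵐ Y : ℝ × V2,
      ‖gtr g Y • kf' h x' Y.1 Y.2 - gtr g Y • kf' h x Y.1 Y.2‖ ≤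
        C * (‖x' - x‖ ^ (1 - κ) * (mjk κ x Y + mjk κ x' Y)) ∧
      |gtr g Y * kf h 0 x' Y.1 Y.2 - gtr g Y * kf h 0 x Y.1 Y.2
          - (gtr g Y • kf' h x Y.1 Y.2) (x' - x)| ≤
        C * (‖x' - x‖ ^ (1 + (1 - κ)) * (mjk κ x Y + mjk κ x' Y)) := by
  by_cases hρ : 0 ≤ ρ
  swap
  · exact ⟨0, le_rfl, fun x _ hx => absurd ((norm_nonneg x).trans hx) hρ⟩
  obtain ⟨C, hC, H⟩ := kf_holder_aux (h := h) h0 (by linarith)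
  obtain ⟨C', hC', H'⟩ := holder_weight hh h0 h1 ρ hρ
  have hM := source_nonneg hg
  refine ⟨C * (C' * (2 ^ ν * M)), by positivity, fun x x' hx hx' => ?_⟩
  filter_upwards [ae_generic x, ae_generic x'] with Y hY hY'
  obtain ⟨s, p⟩ := Y
  dsimp only at hY hY' ⊢
  have hne : ∀ v : V2, ((v, h * s) : V2 × ℝ) ≠ 0 := fun v hv => by
    have := congrArg Prod.snd hv
    exact (mul_ne_zero hh.ne' hY.1) this
  obtain ⟨H1, H2⟩ := H x x' p s (hne _) (hne _)
  have w1 := H' x p s hx hY.1 hY.2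
  have w2 := H' x' p s hx' hY'.1 hY'.2
  have v1 := weight_mul_sg h0 hν hg x (s, p) (θ := 3 * κ / 2) le_rfl
  have v2 := weight_mul_sg h0 hν hg x' (s, p) (θ := 3 * κ / 2) le_rfl
  dsimp only at v1 v2
  set Z : V2 × ℝ := (x - p, h * s) with hZd
  set W : V2 × ℝ := (x' - p, h * s) with hWd
  have comb : |gtr g (s, p)| * ((1 + ‖p‖) ^ 2 * (‖Z‖ ^ (-(3 - κ)) + ‖W‖ ^ (-(3 - κ))))
      ≤ C' * (2 ^ ν * M) * (mjk κ x (s, p) + mjk κ x' (s, p)) := by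
    calc _ = |gtr g (s, p)| * ((1 + ‖p‖) ^ 2 * ‖Z‖ ^ (-(3 - κ)) +
          (1 + ‖p‖) ^ 2 * ‖W‖ ^ (-(3 - κ))) := by ring
      _ ≤ |gtr g (s, p)| * (C' * ((1 + ‖p‖) ^ (3 * κ / 2) * sg κ x s p)
          + C' * ((1 + ‖p‖) ^ (3 * κ / 2) * sg κ x' s p)) :=
          mul_le_mul_of_nonneg_left (add_le_add w1 w2) (abs_nonneg _)
      _ = C' * (|gtr g (s, p)| * ((1 + ‖p‖) ^ (3 * κ / 2) * sg κ x s p)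
          + |gtr g (s, p)| * ((1 + ‖p‖) ^ (3 * κ / 2) * sg κ x' s p)) := by ring
      _ ≤ C' * (2 ^ ν * M * mjk κ x (s, p) + 2 ^ ν * M * mjk κ x' (s, p)) :=
          mul_le_mul_of_nonneg_left (add_le_add v1 v2) hC'
      _ = _ := by ring
  constructor
  · rw [clm_smul_sub, norm_smul, Real.norm_eq_abs]
    calc _ ≤ |gtr g (s, p)| * (C * (‖x' - x‖ ^ (1 - κ) * ((1 + ‖p‖) ^ 2 *
          (‖Z‖ ^ (-(3 - κ)) + ‖W‖ ^ (-(3 - κ)))))) :=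
          mul_le_mul_of_nonneg_left H1 (abs_nonneg _)
      _ = C * ‖x' - x‖ ^ (1 - κ) * (|gtr g (s, p)| * ((1 + ‖p‖) ^ 2 *
          (‖Z‖ ^ (-(3 - κ)) + ‖W‖ ^ (-(3 - κ))))) := by ring
      _ ≤ C * ‖x' - x‖ ^ (1 - κ) * (C' * (2 ^ ν * M) * (mjk κ x (s, p) + mjk κ x' (s, p))) :=
          mul_le_mul_of_nonneg_left comb (by positivity)
      _ = _ := by ring
  · have e : gtr g (s, p) * kf h 0 x' s p - gtr g (s, p) * kf h 0 x s p
          - (gtr g (s, p) • kf' h x s p) (x' - x)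
        = gtr g (s, p) * (kf h 0 x' s p - kf h 0 x s p - kf' h x s p (x' - x)) := by
      simp only [smul_apply, smul_eq_mul]; ring
    rw [e, abs_mul]
    calc _ ≤ |gtr g (s, p)| * (C * (‖x' - x‖ ^ (1 + (1 - κ)) * ((1 + ‖p‖) ^ 2 *
          (‖Z‖ ^ (-(3 - κ)) + ‖W‖ ^ (-(3 - κ)))))) :=
          mul_le_mul_of_nonneg_left H2 (abs_nonneg _)
      _ = C * ‖x' - x‖ ^ (1 + (1 - κ)) * (|gtr g (s, p)| * ((1 + ‖p‖) ^ 2 *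
          (‖Z‖ ^ (-(3 - κ)) + ‖W‖ ^ (-(3 - κ))))) := by ring
      _ ≤ C * ‖x' - x‖ ^ (1 + (1 - κ)) *
          (C' * (2 ^ ν * M) * (mjk κ x (s, p) + mjk κ x' (s, p))) :=
          mul_le_mul_of_nonneg_left comb (by positivity)
      _ = _ := by ring

/-- The integral part of the solution operator. -/
def pot (h : ℝ) (g : V2 → ℝ) (x : V2) : ℝ := ∫ Y : ℝ × V2, gtr g Y * kf h 0 x Y.1 Y.2

lemma pot_regular {h ν κ : ℝ} (hh : 0 < h) (h0 : 0 < κ) (h1 : κ ≤ 1 / 4)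
    (hν : 2 + 4 * κ ≤ ν) {g : V2 → ℝ} (hgc : Continuous g) {M : ℝ}
    (hg : ∀ x : V2, (1 + ‖x‖ ^ ν) * |g x| ≤ M) :
    Differentiable ℝ (pot h g) ∧ ∀ ρ : ℝ, ∃ C, 0 ≤ C ∧ ∀ x x', ‖x‖ ≤ ρ → ‖x'‖ ≤ ρ →
      ‖fderiv ℝ (pot h g) x' - fderiv ℝ (pot h g) x‖ ≤ C * ‖x' - x‖ ^ (1 - κ) := by
  obtain ⟨D, hD0, hD⟩ := mjk_integral_bound h0 h1
  obtain ⟨A, B⟩ := holder_parametric (α := 1 - κ) (by linarith)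
    (fun x Y => gtr g Y * kf h 0 x Y.1 Y.2) (fun x Y => gtr g Y • kf' h x Y.1 Y.2) (mjk κ)
    (fun x => integrable_gtr_kf hh h0 h1 hν hgc hg x) (fun x => (hD x).1) (fun x => (hD x).2)
    (fun x => ((continuous_gtr hgc).measurable.smul (measurable_kf' h x)).aestronglyMeasurable)
    (fun ρ => kernel_holder hh h0 h1 hν hg ρ)
  have A' : ∀ x, HasFDerivAt (pot h g) (∫ Y : ℝ × V2, gtr g Y • kf' h x Y.1 Y.2) x := A
  refine ⟨fun x => (A' x).differentiableAt, fun ρ => ?_⟩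
  obtain ⟨C, hC, H⟩ := B ρ
  refine ⟨C, hC, fun x x' hx hx' => ?_⟩
  rw [(A' x).fderiv, (A' x').fderiv]
  have hdiff := H x x' hx hx'
  exact hdiff

/-! ### The total-derivative identity for the regularized kernel -/

/-- `f` is differentiable at `x` with partial derivatives `a` and `b`. -/
def HasPd (f : V2 → ℝ) (a b : ℝ) (x : V2) : Prop :=
  HasFDerivAt f (a • (EuclideanSpace.proj 0 : V2 →L[ℝ] ℝ) + b • (EuclideanSpace.proj 1 : V2 →L[ℝ] ℝ)) x

lemma HasPd.pd0 {f : V2 → ℝ} {a b : ℝ} {x : V2} (H : HasPd f a b x) : pd f 0 x = a := by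
  unfold pd; rw [HasFDerivAt.fderiv H]; simp

lemma HasPd.pd1 {f : V2 → ℝ} {a b : ℝ} {x : V2} (H : HasPd f a b x) : pd f 1 x = b := by
  unfold pd; rw [HasFDerivAt.fderiv H]; simp

lemma HasPd.congr {f : V2 → ℝ} {a b a' b' : ℝ} {x : V2} (H : HasPd f a b x) (ha : a = a')
    (hb : b = b') : HasPd f a' b' x := ha ▸ hb ▸ H

lemma HasPd.add {f g : V2 → ℝ} {a b a' b' : ℝ} {x : V2} (H : HasPd f a b x) (G : HasPd g a' b' x) :
    HasPd (fun x => f x + g x) (a + a') (b + b') x := by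
  refine (HasFDerivAt.add H G).congr_fderiv ?_
  ext v; simp; ring

lemma HasPd.mul {f g : V2 → ℝ} {a b a' b' : ℝ} {x : V2} (H : HasPd f a b x) (G : HasPd g a' b' x) :
    HasPd (fun x => f x * g x) (a * g x + f x * a') (b * g x + f x * b') x := by
  refine (HasFDerivAt.mul H G).congr_fderiv ?_
  ext v; simp; ring

lemma HasPd.comp {f : V2 → ℝ} {a b : ℝ} {x : V2} (H : HasPd f a b x) {φ : ℝ → ℝ} {d : ℝ}
    (G : HasDerivAt φ d (f x)) : HasPd (fun x => φ (f x)) (d * a) (d * b) x := by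
  refine (HasDerivAt.comp_hasFDerivAt x G H).congr_fderiv ?_
  ext v; simp; ring

lemma hasPd_const (c : ℝ) (x : V2) : HasPd (fun _ => c) 0 0 x := by
  refine (hasFDerivAt_const c x).congr_fderiv ?_
  ext v; simp

lemma hasPd_x0 (x : V2) : HasPd (fun x => x 0) 1 0 x := by
  refine ((EuclideanSpace.proj 0 : V2 →L[ℝ] ℝ).hasFDerivAt (x := x)).congr_fderiv ?_
  ext v; simp

lemma hasPd_x1 (x : V2) : HasPd (fun x => x 1) 0 1 x := by
  refine ((EuclideanSpace.proj 1 : V2 →L[ℝ] ℝ).hasFDerivAt (x := x)).congr_fderiv ?_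
  ext v; simp

lemma hasDerivAt_inv_sqrt {q : ℝ} (hq : 0 < q) :
    HasDerivAt (fun t => (√t)⁻¹) (-(1 / 2) * ((√q)⁻¹) ^ 3) q := by
  have h1 := (Real.hasDerivAt_sqrt hq.ne').inv (Real.sqrt_pos.2 hq).ne'
  refine h1.congr_deriv ?_
  rw [inv_pow]
  have : √q ≠ 0 := (Real.sqrt_pos.2 hq).ne'
  field_simp

/-- The scalar prefactor `1 / (h² + |x|²)` of `K`. -/
def wf (h : ℝ) (x : V2) : ℝ := (h ^ 2 + x 0 ^ 2 + x 1 ^ 2)⁻¹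

lemma wf_mul {h : ℝ} (hh : 0 < h) (x : V2) : wf h x * (h ^ 2 + x 0 ^ 2 + x 1 ^ 2) = 1 := by
  unfold wf; exact inv_mul_cancel₀ (by positivity)

lemma Qf_pos (h : ℝ) {ε : ℝ} (he : 0 < ε) (x : V2) (s : ℝ) (p : V2) : 0 < Qf h ε x s p := by
  unfold Qf; positivity

lemma uf_sq_mul (h : ℝ) {ε : ℝ} (he : 0 < ε) (x : V2) (s : ℝ) (p : V2) :
    uf h ε x s p ^ 2 * Qf h ε x s p = 1 := by
  have := Qf_pos h he x s p
  unfold uf; rw [inv_pow, Real.sq_sqrt this.le, inv_mul_cancel₀ this.ne']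

/-- The inner product of the helical fields at the two points. -/
def Nf (h : ℝ) (x p : V2) : ℝ := h ^ 2 + (x 0 * p 0 + x 1 * p 1)

lemma hasPd_wf {h : ℝ} (hh : 0 < h) (x : V2) :
    HasPd (wf h) (-2 * x 0 * wf h x ^ 2) (-2 * x 1 * wf h x ^ 2) x := by
  have h1 := ((((hasPd_const (h ^ 2) x).add ((hasPd_x0 x).mul (hasPd_x0 x))).add
    ((hasPd_x1 x).mul (hasPd_x1 x)))).comp (φ := fun t => t⁻¹)
      (hasDerivAt_inv (by beta_reduce; nlinarith [mul_self_nonneg (x 0), mul_self_nonneg (x 1), pow_pos hh 2]))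
  have e : (fun x : V2 => (h ^ 2 + x 0 * x 0 + x 1 * x 1)⁻¹) = wf h := by
    funext x; unfold wf; ring
  rw [e] at h1
  have e2 : wf h x ^ 2 = ((h ^ 2 + x 0 * x 0 + x 1 * x 1) ^ 2)⁻¹ := by
    rw [← inv_pow]; unfold wf; ring
  refine h1.congr ?_ ?_ <;> rw [e2] <;> ring

lemma hasPd_uf (h : ℝ) {ε : ℝ} (he : 0 < ε) (x : V2) (s : ℝ) (p : V2) :
    HasPd (fun x => uf h ε x s p) (-(x 0 - p 0) * uf h ε x s p ^ 3)
      (-(x 1 - p 1) * uf h ε x s p ^ 3) x := by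
  have a0 := (hasPd_x0 x).add (hasPd_const (-p 0) x)
  have a1 := (hasPd_x1 x).add (hasPd_const (-p 1) x)
  have h1 := (((a0.mul a0).add (a1.mul a1)).add (hasPd_const (h ^ 2 * s ^ 2 + ε ^ 2) x)).comp
    (hasDerivAt_inv_sqrt (by
      beta_reduce
      nlinarith [mul_self_nonneg (x 0 + -p 0), mul_self_nonneg (x 1 + -p 1), pow_pos he 2,
        sq_nonneg (h * s)]))
  have e : ∀ x : V2, (x 0 + -p 0) * (x 0 + -p 0) + (x 1 + -p 1) * (x 1 + -p 1)
      + (h ^ 2 * s ^ 2 + ε ^ 2) = Qf h ε x s p := fun x => by unfold Qf; ring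
  simp only [e] at h1
  refine h1.congr ?_ ?_ <;> unfold uf <;> ring

lemma hasPd_Nf (h : ℝ) (x p : V2) : HasPd (fun x => Nf h x p) (p 0) (p 1) x := by
  refine ((hasPd_const (h ^ 2) x).add (((hasPd_x0 x).mul (hasPd_const (p 0) x)).add
    ((hasPd_x1 x).mul (hasPd_const (p 1) x)))).congr ?_ ?_ <;> ring

lemma hasPd_ef (x p : V2) : HasPd (fun x => ef x p) (-p 1) (p 0) x := by
  have := (((hasPd_x1 x).mul (hasPd_const (p 0) x)).add
    ((hasPd_x0 x).mul (hasPd_const (-p 1) x))).congr (a' := -p 1) (b' := p 0) (by ring) (by ring)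
  have e : (fun x : V2 => x 1 * p 0 + x 0 * -p 1) = fun x => ef x p := by
    funext x; unfold ef; ring
  rwa [e] at this

/-- The Newtonian kernel contracted with the helical fields. -/
def nf (h ε : ℝ) (s : ℝ) (p x : V2) : ℝ := Nf h x p * uf h ε x s p

/-- First component of `K ∇ nf`. -/
def J0 (h ε : ℝ) (s : ℝ) (p x : V2) : ℝ :=
  wf h x * (h ^ 2 * (p 0 * uf h ε x s p
    + Nf h x p * (-(x 0 - p 0) * uf h ε x s p ^ 3))
    + x 1 * (ef x p * (uf h ε x s p + Nf h x p * uf h ε x s p ^ 3)))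

/-- Second component of `K ∇ nf`. -/
def J1 (h ε : ℝ) (s : ℝ) (p x : V2) : ℝ :=
  wf h x * (h ^ 2 * (p 1 * uf h ε x s p
    + Nf h x p * (-(x 1 - p 1) * uf h ε x s p ^ 3))
    + -x 0 * (ef x p * (uf h ε x s p + Nf h x p * uf h ε x s p ^ 3)))

lemma hasPd_nf (h : ℝ) {ε : ℝ} (he : 0 < ε) (s : ℝ) (p x : V2) :
    HasPd (nf h ε s p) (p 0 * uf h ε x s p + Nf h x p * (-(x 0 - p 0) * uf h ε x s p ^ 3))
      (p 1 * uf h ε x s p + Nf h x p * (-(x 1 - p 1) * uf h ε x s p ^ 3)) x :=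
  (hasPd_Nf h x p).mul (hasPd_uf h he x s p)

lemma Kmat_nf (h : ℝ) {ε : ℝ} (he : 0 < ε) (s : ℝ) (p x : V2) :
    ∑ j, Kmat h x 0 j * pd (nf h ε s p) j x = J0 h ε s p x ∧
    ∑ j, Kmat h x 1 j * pd (nf h ε s p) j x = J1 h ε s p x := by
  have H := hasPd_nf h he s p x
  constructor <;> rw [Fin.sum_univ_two, H.pd0, H.pd1] <;>
    simp [Kmat, J0, J1, wf, ef] <;> ring

/-- The primitive, along helices, of `∇ · (K ∇ nf) + rf`. -/
def Ef (h ε : ℝ) (x : V2) (s : ℝ) (p : V2) : ℝ :=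
  wf h x * (ef x p * uf h ε x s p + Nf h x p * ((ef x p + h ^ 2 * s) * uf h ε x s p ^ 3))
    + 2 * h ^ 2 * wf h x ^ 2 * ((ef x p + h ^ 2 * s) * uf h ε x s p)

/-- The derivative of `Ef` along helices. -/
def dEf (h ε : ℝ) (x : V2) (s : ℝ) (p : V2) : ℝ :=
  wf h x * ((-(x 0 * p 0 + x 1 * p 1)) * uf h ε x s p
    + ef x p * ((ef x p - h ^ 2 * s) * uf h ε x s p ^ 3)
    + (ef x p * ((ef x p + h ^ 2 * s) * uf h ε x s p ^ 3)
    + Nf h x p * ((-(x 0 * p 0 + x 1 * p 1) + h ^ 2) * uf h ε x s p ^ 3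
      + (ef x p + h ^ 2 * s) * (3 * (ef x p - h ^ 2 * s) * uf h ε x s p ^ 5))))
    + 2 * h ^ 2 * wf h x ^ 2 * ((-(x 0 * p 0 + x 1 * p 1) + h ^ 2) * uf h ε x s p
      + (ef x p + h ^ 2 * s) * ((ef x p - h ^ 2 * s) * uf h ε x s p ^ 3))

/-- The smooth approximation of a multiple of the point mass created by the regularization. -/
def rf (h ε : ℝ) (x : V2) (s : ℝ) (p : V2) : ℝ :=
  3 * h ^ 2 * ε ^ 2 * wf h x * Nf h x p * uf h ε x s p ^ 5
    + 2 * h ^ 4 * ε ^ 2 * wf h x ^ 2 * uf h ε x s p ^ 3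

/-- The divergence of `K ∇ nf` is a total derivative along helices, up to the regularization error.
The equality is purely algebraic modulo `wf_mul` and `uf_sq_mul`. -/
lemma div_J {h : ℝ} (hh : 0 < h) {ε : ℝ} (he : 0 < ε) (s : ℝ) (p x : V2) :
    pd (J0 h ε s p) 0 x + pd (J1 h ε s p) 1 x = dEf h ε x s p - rf h ε x s p := by
  have hu := hasPd_uf h he x s p
  have hu3 := (hu.mul (hu.mul hu)).congr
    (a' := -3 * (x 0 - p 0) * uf h ε x s p ^ 5) (b' := -3 * (x 1 - p 1) * uf h ε x s p ^ 5)
    (by ring) (by ring)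
  have e3 : (fun x => uf h ε x s p * (uf h ε x s p * uf h ε x s p)) = fun x => uf h ε x s p ^ 3 := by
    funext x; ring
  rw [e3] at hu3
  have hN := hasPd_Nf h x p
  have he' := hasPd_ef x p
  have hw := hasPd_wf hh x
  have a0 : HasPd (fun x => -(x 0 - p 0)) (-1) 0 x := by
    have := ((hasPd_const (-1) x).mul (hasPd_x0 x)).add (hasPd_const (p 0) x)
    have e : (fun x : V2 => -1 * x 0 + p 0) = fun x => -(x 0 - p 0) := by funext x; ring
    rw [e] at this; exact this.congr (by ring) (by ring)
  have a1 : HasPd (fun x => -(x 1 - p 1)) 0 (-1) x := by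
    have := ((hasPd_const (-1) x).mul (hasPd_x1 x)).add (hasPd_const (p 1) x)
    have e : (fun x : V2 => -1 * x 1 + p 1) = fun x => -(x 1 - p 1) := by funext x; ring
    rw [e] at this; exact this.congr (by ring) (by ring)
  have b0 : HasPd (fun x => -x 0) (-1) 0 x := by
    have := ((hasPd_const (-1) x).mul (hasPd_x0 x))
    have e : (fun x : V2 => -1 * x 0) = fun x => -x 0 := by funext x; ring
    rw [e] at this; exact this.congr (by ring) (by ring)
  have K0 := hw.mul (((hasPd_const (h ^ 2) x).mul (((hasPd_const (p 0) x).mul hu).add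
    (hN.mul (a0.mul hu3)))).add ((hasPd_x1 x).mul (he'.mul (hu.add (hN.mul hu3)))))
  have K1 := hw.mul (((hasPd_const (h ^ 2) x).mul (((hasPd_const (p 1) x).mul hu).add
    (hN.mul (a1.mul hu3)))).add (b0.mul (he'.mul (hu.add (hN.mul hu3)))))
  have q0 : pd (J0 h ε s p) 0 x = _ := HasPd.pd0 K0
  have q1 : pd (J1 h ε s p) 1 x = _ := HasPd.pd1 K1
  rw [q0, q1]
  have g1 := wf_mul hh x
  have g2 := uf_sq_mul h he x s p
  unfold Qf at g2
  unfold dEf rf Nf ef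
  set u := uf h ε x s p
  set w := wf h x
  linear_combination (2 * h ^ 2 * w * u ^ 3 * (x 0 * p 0 + x 1 * p 1 - p 0 ^ 2 - p 1 ^ 2)) * g1
    + (2 * h ^ 4 * w ^ 2 * u + 3 * h ^ 2 * w * u ^ 3 * (h ^ 2 + x 0 * p 0 + x 1 * p 1)) * g2

/-- Derivative along helices of `ef * uf`. -/
def deu (h ε : ℝ) (x : V2) (s : ℝ) (p : V2) : ℝ :=
  (-(x 0 * p 0 + x 1 * p 1)) * uf h ε x s p + ef x p * ((ef x p - h ^ 2 * s) * uf h ε x s p ^ 3)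

lemma kf_eq (h ε : ℝ) (x : V2) (s : ℝ) (p : V2) :
    kf h ε x s p = nf h ε s p x + deu h ε x s p - h ^ 2 * (√(1 + h ^ 2 * s ^ 2))⁻¹ := by
  unfold kf nf deu Nf; ring

lemma hasDerivAt_uf (h : ℝ) {ε : ℝ} (he : 0 < ε) (x y : V2) (s : ℝ) :
    HasDerivAt (fun s => uf h ε x s (rot s y))
      ((ef x (rot s y) - h ^ 2 * s) * uf h ε x s (rot s y) ^ 3) s := by
  have d0 : HasDerivAt (fun s => rot s y 0) (-(rot s y 1)) s := by
    simp only [rot_zero', rot_one']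
    refine (((hasDerivAt_cos s).mul_const (y 0)).sub ((hasDerivAt_sin s).mul_const (y 1))).congr_deriv ?_
    ring
  have d1 : HasDerivAt (fun s => rot s y 1) (rot s y 0) s := by
    simp only [rot_zero', rot_one']
    refine (((hasDerivAt_sin s).mul_const (y 0)).add ((hasDerivAt_cos s).mul_const (y 1))).congr_deriv ?_
    ring
  have hQ : HasDerivAt (fun s => Qf h ε x s (rot s y)) (-2 * (ef x (rot s y) - h ^ 2 * s)) s := by
    unfold Qf
    refine ((((((d0.const_sub (x 0)).pow 2).add ((d1.const_sub (x 1)).pow 2)).add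
      (((hasDerivAt_id s).pow 2).const_mul (h ^ 2)))).add_const (ε ^ 2)).congr_deriv ?_
    unfold ef; simp; ring
  refine ((hasDerivAt_inv_sqrt (Qf_pos h he x s (rot s y))).comp s hQ).congr_deriv ?_
  unfold uf; ring

lemma hasDerivAt_ef (x y : V2) (s : ℝ) :
    HasDerivAt (fun s => ef x (rot s y)) (-(x 0 * rot s y 0 + x 1 * rot s y 1)) s := by
  unfold ef
  simp only [rot_zero', rot_one']
  refine (((((hasDerivAt_cos s).mul_const (y 0)).sub ((hasDerivAt_sin s).mul_const (y 1))).const_mul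
    (x 1)).sub ((((hasDerivAt_sin s).mul_const (y 0)).add
      ((hasDerivAt_cos s).mul_const (y 1))).const_mul (x 0))).congr_deriv ?_
  ring

lemma hasDerivAt_Nf (h : ℝ) (x y : V2) (s : ℝ) :
    HasDerivAt (fun s => Nf h x (rot s y)) (ef x (rot s y)) s := by
  unfold Nf ef
  simp only [rot_zero', rot_one']
  refine ((((((hasDerivAt_cos s).mul_const (y 0)).sub ((hasDerivAt_sin s).mul_const (y 1))).const_mul
    (x 0)).add ((((hasDerivAt_sin s).mul_const (y 0)).add
      ((hasDerivAt_cos s).mul_const (y 1))).const_mul (x 1))).const_add (h ^ 2)).congr_deriv ?_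
  ring

lemma hasDerivAt_eu (h : ℝ) {ε : ℝ} (he : 0 < ε) (x y : V2) (s : ℝ) :
    HasDerivAt (fun s => ef x (rot s y) * uf h ε x s (rot s y)) (deu h ε x s (rot s y)) s :=
  (hasDerivAt_ef x y s).mul (hasDerivAt_uf h he x y s)

lemma hasDerivAt_Ef (h : ℝ) {ε : ℝ} (he : 0 < ε) (x y : V2) (s : ℝ) :
    HasDerivAt (fun s => Ef h ε x s (rot s y)) (dEf h ε x s (rot s y)) s := by
  have hu := hasDerivAt_uf h he x y s
  have h1 := (hasDerivAt_ef x y s).add ((hasDerivAt_id s).const_mul (h ^ 2))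
  refine (((((hasDerivAt_ef x y s).mul hu).add ((hasDerivAt_Nf h x y s).mul
    (h1.mul (hu.pow 3)))).const_mul (wf h x)).add
    ((h1.mul hu).const_mul (2 * h ^ 2 * wf h x ^ 2))).congr_deriv ?_
  unfold dEf
  simp only [Pi.add_apply, Pi.pow_apply, Pi.mul_apply, id, mul_one]
  push_cast
  ring

/-! ### The operator acting on test functions -/

/-- The components of `K ∇ χ`. -/
def flux (h : ℝ) (χ : V2 → ℝ) (j : Fin 2) (x : V2) : ℝ := ∑ i, Kmat h x i j * pd χ i x

/-- The operator `∇ · (K ∇ χ)`. -/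
def Lop (h : ℝ) (χ : V2 → ℝ) (x : V2) : ℝ := ∑ j, pd (flux h χ j) j x

lemma continuous_pd {f : V2 → ℝ} (hf : ContDiff ℝ 1 f) (i : Fin 2) : Continuous (pd f i) :=
  (hf.continuous_fderiv one_ne_zero).clm_apply continuous_const

lemma compact_pd {f : V2 → ℝ} (hf : HasCompactSupport f) (i : Fin 2) : HasCompactSupport (pd f i) :=
  hf.fderiv_apply ℝ _

lemma ibp {f φ : V2 → ℝ} (hf : ContDiff ℝ 1 f) (hφ : ContDiff ℝ 1 φ) (hc : HasCompactSupport φ)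
    (i : Fin 2) : ∫ x, f x * pd φ i x = -∫ x, pd f i x * φ x := by
  apply integral_mul_fderiv_eq_neg_fderiv_mul_of_integrable
  · exact ((continuous_pd hf i).mul hφ.continuous).integrable_of_hasCompactSupport hc.mul_left
  · exact (hf.continuous.mul (continuous_pd hφ i)).integrable_of_hasCompactSupport
      (compact_pd hc i).mul_left
  · exact (hf.continuous.mul hφ.continuous).integrable_of_hasCompactSupport hc.mul_left
  · exact fun x _ => hf.differentiable one_ne_zero x
  · exact fun x _ => hφ.differentiable one_ne_zero x

lemma contDiff_Kmat {h : ℝ} (hh : 0 < h) (i j : Fin 2) {n : WithTop ℕ∞} :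
    ContDiff ℝ n fun x => Kmat h x i j := by
  have hw : ContDiff ℝ n fun x : V2 => (h ^ 2 + x 0 ^ 2 + x 1 ^ 2)⁻¹ :=
    ContDiff.inv (by fun_prop) (fun x => by positivity)
  have e : ∀ x, Kmat h x i j = (h ^ 2 + x 0 ^ 2 + x 1 ^ 2)⁻¹ *
      !![h ^ 2 + x 1 ^ 2, -(x 0 * x 1); -(x 0 * x 1), h ^ 2 + x 0 ^ 2] i j := fun x => rfl
  simp only [e]
  refine hw.mul ?_
  fin_cases i <;> fin_cases j <;> simp <;> fun_prop

lemma contDiff_flux {h : ℝ} (hh : 0 < h) {χ : V2 → ℝ} (hχ : ContDiff ℝ (⊤ : ℕ∞) χ) (j : Fin 2) :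
    ContDiff ℝ 1 (flux h χ j) := by
  unfold flux
  refine ContDiff.sum fun i _ => (contDiff_Kmat hh i j).mul ?_
  exact ((hχ.fderiv_right (m := 1) (by
    rw [show (1 + 1 : WithTop ℕ∞) = ((2 : ℕ∞) : WithTop ℕ∞) from rfl]
    exact WithTop.coe_le_coe.2 le_top)).clm_apply contDiff_const)

lemma compact_flux (h : ℝ) {χ : V2 → ℝ} (hc : HasCompactSupport χ) (j : Fin 2) :
    HasCompactSupport (flux h χ j) := by
  unfold flux
  simp only [Fin.sum_univ_two]
  exact (compact_pd hc 0).mul_left.add (compact_pd hc 1).mul_left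

lemma continuous_Lop {h : ℝ} (hh : 0 < h) {χ : V2 → ℝ} (hχ : ContDiff ℝ (⊤ : ℕ∞) χ) :
    Continuous (Lop h χ) :=
  continuous_finsetSum _ fun j _ => continuous_pd (contDiff_flux hh hχ j) j

lemma compact_Lop (h : ℝ) {χ : V2 → ℝ} (hc : HasCompactSupport χ) :
    HasCompactSupport (Lop h χ) := by
  have : Lop h χ = fun x => pd (flux h χ 0) 0 x + pd (flux h χ 1) 1 x := by
    funext x; simp [Lop]
  rw [this]
  exact (compact_pd (compact_flux h hc 0) 0).add (compact_pd (compact_flux h hc 1) 1)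

/-- One integration by parts: the weak form of the operator against test functions. -/
lemma weak_Lop {h : ℝ} (hh : 0 < h) {χ : V2 → ℝ} (hχ : ContDiff ℝ (⊤ : ℕ∞) χ)
    (hc : HasCompactSupport χ) {ψ : V2 → ℝ} (hψ : ContDiff ℝ 1 ψ) :
    ∫ x : V2, (∑ i, (∑ j, Kmat h x i j * pd ψ j x) * pd χ i x) = -∫ x, ψ x * Lop h χ x := by
  have e1 : ∀ x, (∑ i, (∑ j, Kmat h x i j * pd ψ j x) * pd χ i x)
      = pd ψ 0 x * flux h χ 0 x + pd ψ 1 x * flux h χ 1 x := fun x => by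
    simp only [flux, Fin.sum_univ_two]; ring
  have e2 : ∀ x, ψ x * Lop h χ x = ψ x * pd (flux h χ 0) 0 x + ψ x * pd (flux h χ 1) 1 x :=
    fun x => by simp only [Lop, Fin.sum_univ_two]; ring
  simp only [e1, e2]
  have i1 : ∀ j, Integrable fun x => pd ψ j x * flux h χ j x := fun j =>
    ((continuous_pd hψ j).mul (contDiff_flux hh hχ j).continuous).integrable_of_hasCompactSupport
      (compact_flux h hc j).mul_left
  have i2 : ∀ j, Integrable fun x => ψ x * pd (flux h χ j) j x := fun j =>
    (hψ.continuous.mul (continuous_pd (contDiff_flux hh hχ j) j)).integrable_of_hasCompactSupport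
      (compact_pd (compact_flux h hc j) j).mul_left
  rw [integral_add (i1 0) (i1 1), integral_add (i2 0) (i2 1),
    ibp hψ (contDiff_flux hh hχ 0) (compact_flux h hc 0) 0,
    ibp hψ (contDiff_flux hh hχ 1) (compact_flux h hc 1) 1]
  ring

lemma integral_Lop {h : ℝ} (hh : 0 < h) {χ : V2 → ℝ} (hχ : ContDiff ℝ (⊤ : ℕ∞) χ)
    (hc : HasCompactSupport χ) : ∫ x, Lop h χ x = 0 := by
  have := weak_Lop hh hχ hc (ψ := fun _ => 1) contDiff_const
  have e : ∀ j x, pd (fun _ : V2 => (1 : ℝ)) j x = 0 := fun j x => by simp [pd]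
  simp [e] at this
  exact this

/-- Two integrations by parts, for a function whose flux is explicitly known. -/
lemma green_Lop {h : ℝ} (hh : 0 < h) {χ : V2 → ℝ} (hχ : ContDiff ℝ (⊤ : ℕ∞) χ)
    (hc : HasCompactSupport χ) {ψ A B D : V2 → ℝ} (hψ : ContDiff ℝ 1 ψ) (hA : ContDiff ℝ 1 A)
    (hB : ContDiff ℝ 1 B) (eA : ∀ x, ∑ j, Kmat h x 0 j * pd ψ j x = A x)
    (eB : ∀ x, ∑ j, Kmat h x 1 j * pd ψ j x = B x) (eD : ∀ x, pd A 0 x + pd B 1 x = D x) :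
    ∫ x, Lop h χ x * ψ x = ∫ x, χ x * D x := by
  have hχ1 : ContDiff ℝ 1 χ := hχ.of_le (by exact_mod_cast le_top)
  have h1 := weak_Lop hh hχ hc hψ
  have e1 : ∀ x, (∑ i, (∑ j, Kmat h x i j * pd ψ j x) * pd χ i x)
      = A x * pd χ 0 x + B x * pd χ 1 x := fun x => by rw [Fin.sum_univ_two, eA, eB]
  have i1 : ∀ {F : V2 → ℝ}, ContDiff ℝ 1 F → ∀ j, Integrable fun x => F x * pd χ j x := fun hF j =>
    (hF.continuous.mul (continuous_pd hχ1 j)).integrable_of_hasCompactSupport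
      (compact_pd hc j).mul_left
  have i2 : ∀ {F : V2 → ℝ}, ContDiff ℝ 1 F → ∀ j, Integrable fun x => pd F j x * χ x := fun hF j =>
    ((continuous_pd hF j).mul hχ.continuous).integrable_of_hasCompactSupport hc.mul_left
  simp only [e1] at h1
  rw [integral_add (i1 hA 0) (i1 hB 1), ibp hA hχ1 hc, ibp hB hχ1 hc, ← neg_add, neg_inj,
    ← integral_add (i2 hA 0) (i2 hB 1)] at h1
  calc _ = ∫ x, ψ x * Lop h χ x := by simp only [mul_comm]
    _ = _ := h1.symm
    _ = _ := by congr 1; funext x; rw [← eD]; ring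

/-- The quadratic growth mode: `∇ · (K ∇ |x|²) = 4 h⁴ / (h² + |x|²)²`. -/
lemma green_sq {h : ℝ} (hh : 0 < h) {χ : V2 → ℝ} (hχ : ContDiff ℝ (⊤ : ℕ∞) χ)
    (hc : HasCompactSupport χ) :
    ∫ x, Lop h χ x * ‖x‖ ^ 2 = ∫ x, χ x * (4 * h ^ 4 * wf h x ^ 2) := by
  have hw : ContDiff ℝ 1 (wf h) := ContDiff.inv (by fun_prop) (fun x => by positivity)
  have hsq : ∀ x, HasPd (fun x : V2 => ‖x‖ ^ 2) (2 * x 0) (2 * x 1) x := fun x => by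
    have := ((hasPd_x0 x).mul (hasPd_x0 x)).add ((hasPd_x1 x).mul (hasPd_x1 x))
    have e : (fun x : V2 => x 0 * x 0 + x 1 * x 1) = fun x => ‖x‖ ^ 2 := by
      funext x; rw [V2_norm_sq]; ring
    rw [e] at this; exact this.congr (by ring) (by ring)
  refine green_Lop hh hχ hc (A := fun x => wf h x * (2 * h ^ 2 * x 0))
    (B := fun x => wf h x * (2 * h ^ 2 * x 1)) (contDiff_norm_sq ℝ) (by fun_prop) (by fun_prop)
    ?_ ?_ ?_
  · intro x; rw [Fin.sum_univ_two, (hsq x).pd0, (hsq x).pd1]; simp [Kmat, wf]; ring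
  · intro x; rw [Fin.sum_univ_two, (hsq x).pd0, (hsq x).pd1]; simp [Kmat, wf]; ring
  · intro x
    rw [((hasPd_wf hh x).mul ((hasPd_const (2 * h ^ 2) x).mul (hasPd_x0 x))).pd0,
      ((hasPd_wf hh x).mul ((hasPd_const (2 * h ^ 2) x).mul (hasPd_x1 x))).pd1]
    linear_combination (4 * h ^ 2 * wf h x) * (-wf_mul hh x)

lemma contDiff_uf (h : ℝ) {ε : ℝ} (he : 0 < ε) (s : ℝ) (p : V2) :
    ContDiff ℝ 1 fun x => uf h ε x s p := by
  have hQ : ContDiff ℝ 1 fun x => Qf h ε x s p := by unfold Qf; fun_prop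
  have hQ' : ContDiff ℝ 1 fun x => √(Qf h ε x s p) :=
    hQ.sqrt fun x => (Qf_pos h he x s p).ne'
  exact hQ'.inv fun x => (Real.sqrt_pos.2 (Qf_pos h he x s p)).ne'

lemma green_nf {h : ℝ} (hh : 0 < h) {ε : ℝ} (he : 0 < ε) {χ : V2 → ℝ}
    (hχ : ContDiff ℝ (⊤ : ℕ∞) χ) (hc : HasCompactSupport χ) (s : ℝ) (p : V2) :
    ∫ x, Lop h χ x * nf h ε s p x = ∫ x, χ x * (dEf h ε x s p - rf h ε x s p) := by
  have hw : ContDiff ℝ 1 (wf h) := ContDiff.inv (by fun_prop) (fun x => by positivity)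
  have hu : ContDiff ℝ 1 fun x => uf h ε x s p :=
    contDiff_uf h he s p
  have hN : ContDiff ℝ 1 fun x => Nf h x p := by unfold Nf; fun_prop
  have hef : ContDiff ℝ 1 fun x => ef x p := by unfold ef; fun_prop
  refine green_Lop hh hχ hc (A := J0 h ε s p) (B := J1 h ε s p) ?_ ?_ ?_
    (fun x => (Kmat_nf h he s p x).1) (fun x => (Kmat_nf h he s p x).2)
    (fun x => div_J hh he s p x)
  · unfold nf; fun_prop
  · unfold J0; fun_prop
  · unfold J1; fun_prop

/-! ### The fundamental solution identity for the regularized kernel -/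

lemma uf_nonneg (h ε : ℝ) (x : V2) (s : ℝ) (p : V2) : 0 ≤ uf h ε x s p := by unfold uf; positivity

lemma uf_le {h ε : ℝ} (he : 0 < ε) (x : V2) (s : ℝ) (p : V2) : uf h ε x s p ≤ ε⁻¹ := by
  unfold uf
  apply inv_anti₀ he
  apply Real.le_sqrt_of_sq_le
  unfold Qf; nlinarith [sq_nonneg (x 0 - p 0), sq_nonneg (x 1 - p 1), sq_nonneg (h * s)]

lemma abs_mul_uf_le {h ε : ℝ} (he : 0 < ε) (x : V2) (s : ℝ) (p : V2) :
    h * |s| * uf h ε x s p ≤ 1 := by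
  unfold uf
  rw [← div_eq_mul_inv, div_le_one (Real.sqrt_pos.2 (Qf_pos h he x s p))]
  apply Real.le_sqrt_of_sq_le
  rw [mul_pow, sq_abs]
  unfold Qf; nlinarith [sq_nonneg (x 0 - p 0), sq_nonneg (x 1 - p 1), sq_nonneg ε]

lemma abs_Nf_le (h : ℝ) (x p : V2) : |Nf h x p| ≤ h ^ 2 + ‖x‖ * ‖p‖ := by
  have : |x 0 * p 0 + x 1 * p 1| ≤ ‖x‖ * ‖p‖ := by
    apply abs_le_of_sq_le_sq _ (by positivity)
    rw [mul_pow, V2_norm_sq, V2_norm_sq]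
    nlinarith [sq_nonneg (x 0 * p 1 - x 1 * p 0)]
  unfold Nf
  exact (abs_add_le _ _).trans (by rw [abs_of_nonneg (sq_nonneg h)]; gcongr)

lemma wf_pos {h : ℝ} (hh : 0 < h) (x : V2) : 0 < wf h x := by unfold wf; positivity

lemma continuous_wf {h : ℝ} (hh : 0 < h) : Continuous (wf h) := by
  unfold wf; exact Continuous.inv₀ (by fun_prop) fun x => by positivity

lemma abs_add_mul_uf_le {h ε : ℝ} (hh : 0 < h) (he : 0 < ε) (x : V2) (s : ℝ) (y : V2) :
    |(ef x (rot s y) + h ^ 2 * s) * uf h ε x s (rot s y)| ≤ ‖x‖ * ‖y‖ * ε⁻¹ + h := by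
  have h1 := abs_ef_le x (rot s y)
  rw [norm_rot] at h1
  have hu := uf_nonneg h ε x s (rot s y)
  have h2 := abs_mul_uf_le (h := h) he x s (rot s y)
  rw [abs_mul, abs_of_nonneg hu]
  calc _ ≤ (|ef x (rot s y)| + |h ^ 2 * s|) * uf h ε x s (rot s y) := by gcongr; exact abs_add_le _ _
    _ = |ef x (rot s y)| * uf h ε x s (rot s y) + h * (h * |s| * uf h ε x s (rot s y)) := by
        rw [abs_mul, abs_of_nonneg (sq_nonneg h)]; ring
    _ ≤ ‖x‖ * ‖y‖ * ε⁻¹ + h * 1 := by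
        gcongr
        exact uf_le he _ _ _
    _ = _ := by ring

/-- A bound for `Ef` along a helix, uniform in the parameter. -/
def Ebd (h ε : ℝ) (y x : V2) : ℝ :=
  wf h x * (‖x‖ * ‖y‖ * ε⁻¹ + (h ^ 2 + ‖x‖ * ‖y‖) * ((‖x‖ * ‖y‖ * ε⁻¹ + h) * ε⁻¹ ^ 2))
    + 2 * h ^ 2 * wf h x ^ 2 * (‖x‖ * ‖y‖ * ε⁻¹ + h)

lemma abs_eu_le {h ε : ℝ} (he : 0 < ε) (x : V2) (s : ℝ) (y : V2) :
    |ef x (rot s y) * uf h ε x s (rot s y)| ≤ ‖x‖ * ‖y‖ * ε⁻¹ := by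
  have h1 := abs_ef_le x (rot s y)
  rw [norm_rot] at h1
  have hu := uf_nonneg h ε x s (rot s y)
  rw [abs_mul, abs_of_nonneg hu]
  gcongr
  exact uf_le he _ _ _

lemma abs_Ef_le {h ε : ℝ} (hh : 0 < h) (he : 0 < ε) (x : V2) (s : ℝ) (y : V2) :
    |Ef h ε x s (rot s y)| ≤ Ebd h ε y x := by
  have hu := uf_nonneg h ε x s (rot s y)
  have hN := abs_Nf_le h x (rot s y)
  rw [norm_rot] at hN
  have hw := wf_pos hh x
  have e : Ef h ε x s (rot s y) = wf h x * (ef x (rot s y) * uf h ε x s (rot s y)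
      + Nf h x (rot s y) * ((ef x (rot s y) + h ^ 2 * s) * uf h ε x s (rot s y)
        * uf h ε x s (rot s y) ^ 2))
      + 2 * h ^ 2 * wf h x ^ 2 * ((ef x (rot s y) + h ^ 2 * s) * uf h ε x s (rot s y)) := by
    unfold Ef; ring
  rw [e]
  have b1 := abs_eu_le (h := h) he x s y
  have b2 := abs_add_mul_uf_le hh he x s y
  have b3 : |uf h ε x s (rot s y) ^ 2| ≤ ε⁻¹ ^ 2 := by
    rw [abs_of_nonneg (by positivity)]
    gcongr
    exact uf_le he _ _ _
  set a := ef x (rot s y) * uf h ε x s (rot s y)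
  set b := (ef x (rot s y) + h ^ 2 * s) * uf h ε x s (rot s y)
  set c := uf h ε x s (rot s y) ^ 2
  set N := Nf h x (rot s y)
  clear_value a b c N
  calc _ ≤ |wf h x * (a + N * (b * c))| + |2 * h ^ 2 * wf h x ^ 2 * b| := abs_add_le _ _
    _ = wf h x * |a + N * (b * c)| + 2 * h ^ 2 * wf h x ^ 2 * |b| := by
        rw [abs_mul, abs_of_pos hw, abs_mul,
          abs_of_pos (show 0 < 2 * h ^ 2 * wf h x ^ 2 by positivity)]
    _ ≤ wf h x * (|a| + |N| * (|b| * |c|)) + 2 * h ^ 2 * wf h x ^ 2 * |b| := by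
        gcongr
        refine (abs_add_le _ _).trans ?_
        rw [abs_mul N, abs_mul b]
    _ ≤ _ := by unfold Ebd; gcongr

lemma tendsto_uf {h ε : ℝ} (hh : 0 < h) (he : 0 < ε) (x y : V2) {l : Filter ℝ}
    (hl : Tendsto (fun s => |s|) l atTop) :
    Tendsto (fun s => uf h ε x s (rot s y)) l (𝓝 0) := by
  have h1 : Tendsto (fun s => (h * |s|)⁻¹) l (𝓝 0) :=
    tendsto_inv_atTop_zero.comp (hl.const_mul_atTop hh)
  refine tendsto_of_tendsto_of_tendsto_of_le_of_le' tendsto_const_nhds h1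
    (Eventually.of_forall fun s => uf_nonneg _ _ _ _ _) ?_
  filter_upwards [hl.eventually_gt_atTop 0] with s hs
  rw [← one_div, le_div_iff₀ (by positivity)]
  linarith [abs_mul_uf_le (h := h) he x s (rot s y)]

lemma tendsto_abs_mul_uf {h ε : ℝ} (hh : 0 < h) (he : 0 < ε) (x y : V2) {l : Filter ℝ}
    (hl : Tendsto (fun s => |s|) l atTop) :
    Tendsto (fun s => h * |s| * uf h ε x s (rot s y)) l (𝓝 1) := by
  have hu := tendsto_uf hh he x y hl
  have h1 : Tendsto (fun s => 1 - ((‖x‖ + ‖y‖) ^ 2 + ε ^ 2) * uf h ε x s (rot s y) ^ 2) l (𝓝 1) := by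
    simpa using (((hu.pow 2).const_mul ((‖x‖ + ‖y‖) ^ 2 + ε ^ 2)).const_sub 1)
  refine tendsto_of_tendsto_of_tendsto_of_le_of_le h1 tendsto_const_nhds ?_ ?_
  · intro s
    have hle := abs_mul_uf_le (h := h) he x s (rot s y)
    have h0 : 0 ≤ h * |s| * uf h ε x s (rot s y) := by
      have := uf_nonneg h ε x s (rot s y); positivity
    have hsq := uf_sq_mul h he x s (rot s y)
    rw [Qf_eq] at hsq
    have hn : ‖x - rot s y‖ ≤ ‖x‖ + ‖y‖ := by
      have := norm_sub_le x (rot s y); rwa [norm_rot] at this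
    have hn2 : ‖x - rot s y‖ ^ 2 ≤ (‖x‖ + ‖y‖) ^ 2 := by gcongr
    have e : (h * |s| * uf h ε x s (rot s y)) ^ 2
        = 1 - (‖x - rot s y‖ ^ 2 + ε ^ 2) * uf h ε x s (rot s y) ^ 2 := by
      rw [mul_pow, mul_pow, sq_abs]; linear_combination hsq
    have h3 : (h * |s| * uf h ε x s (rot s y)) ^ 2 ≤ h * |s| * uf h ε x s (rot s y) := by
      nlinarith
    have h4 : (‖x - rot s y‖ ^ 2 + ε ^ 2) * uf h ε x s (rot s y) ^ 2
        ≤ ((‖x‖ + ‖y‖) ^ 2 + ε ^ 2) * uf h ε x s (rot s y) ^ 2 := by gcongr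
    simp only
    linarith
  · exact fun s => abs_mul_uf_le (h := h) he x s (rot s y)

lemma tendsto_eu {h ε : ℝ} (hh : 0 < h) (he : 0 < ε) (x y : V2) {l : Filter ℝ}
    (hl : Tendsto (fun s => |s|) l atTop) :
    Tendsto (fun s => ef x (rot s y) * uf h ε x s (rot s y)) l (𝓝 0) := by
  have hu := (tendsto_uf hh he x y hl).const_mul (‖x‖ * ‖y‖)
  rw [mul_zero] at hu
  refine squeeze_zero_norm (fun s => ?_) hu
  have h1 := abs_ef_le x (rot s y)
  rw [norm_rot] at h1
  rw [norm_mul, Real.norm_eq_abs, Real.norm_of_nonneg (uf_nonneg _ _ _ _ _)]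
  exact mul_le_mul_of_nonneg_right h1 (uf_nonneg _ _ _ _ _)

lemma tendsto_Ef {h ε : ℝ} (hh : 0 < h) (he : 0 < ε) (x y : V2) {l : Filter ℝ}
    (hl : Tendsto (fun s => |s|) l atTop) {σ : ℝ} (hσ : ∀ᶠ s in l, s = σ * |s|) :
    Tendsto (fun s => Ef h ε x s (rot s y)) l (𝓝 (2 * h ^ 3 * wf h x ^ 2 * σ)) := by
  have hu := tendsto_uf hh he x y hl
  have heu := tendsto_eu hh he x y hl
  have hb : Tendsto (fun s => (ef x (rot s y) + h ^ 2 * s) * uf h ε x s (rot s y)) l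
      (𝓝 (0 + h * σ * 1)) := by
    refine (heu.add ((tendsto_abs_mul_uf hh he x y hl).const_mul (h * σ))).congr' ?_
    filter_upwards [hσ] with s hs
    have : h * σ * (h * |s| * uf h ε x s (rot s y)) = h ^ 2 * (σ * |s|) * uf h ε x s (rot s y) := by
      ring
    rw [this, ← hs]; ring
  have hN : Tendsto (fun s => Nf h x (rot s y) * uf h ε x s (rot s y)) l (𝓝 0) := by
    have hu' := hu.const_mul (h ^ 2 + ‖x‖ * ‖y‖)
    rw [mul_zero] at hu'
    refine squeeze_zero_norm (fun s => ?_) hu'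
    have h1 := abs_Nf_le h x (rot s y)
    rw [norm_rot] at h1
    rw [norm_mul, Real.norm_eq_abs, Real.norm_of_nonneg (uf_nonneg _ _ _ _ _)]
    exact mul_le_mul_of_nonneg_right h1 (uf_nonneg _ _ _ _ _)
  have H := ((heu.add ((hN.mul hb).mul hu)).const_mul (wf h x)).add
    (hb.const_mul (2 * h ^ 2 * wf h x ^ 2))
  refine (H.congr fun s => ?_).trans (le_of_eq ?_)
  · unfold Ef; ring
  · congr 1; ring

lemma continuous_helix (y : V2) : Continuous fun Z : ℝ × V2 => rot Z.1 y := by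
  unfold rot; fun_prop

lemma continuous_uf_helix (h : ℝ) {ε : ℝ} (he : 0 < ε) (y : V2) :
    Continuous fun Z : ℝ × V2 => uf h ε Z.2 Z.1 (rot Z.1 y) := by
  have hr := continuous_helix y
  have hQ : Continuous fun Z : ℝ × V2 => Qf h ε Z.2 Z.1 (rot Z.1 y) := by unfold Qf; fun_prop
  exact hQ.sqrt.inv₀ fun Z => (Real.sqrt_pos.2 (Qf_pos h he _ _ _)).ne'

lemma continuous_helix_kernels {h : ℝ} (hh : 0 < h) {ε : ℝ} (he : 0 < ε) (y : V2) :
    (Continuous fun Z : ℝ × V2 => ef Z.2 (rot Z.1 y) * uf h ε Z.2 Z.1 (rot Z.1 y)) ∧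
    (Continuous fun Z : ℝ × V2 => deu h ε Z.2 Z.1 (rot Z.1 y)) ∧
    (Continuous fun Z : ℝ × V2 => Ef h ε Z.2 Z.1 (rot Z.1 y)) ∧
    (Continuous fun Z : ℝ × V2 => dEf h ε Z.2 Z.1 (rot Z.1 y)) ∧
    (Continuous fun Z : ℝ × V2 => rf h ε Z.2 Z.1 (rot Z.1 y)) ∧
    (Continuous fun Z : ℝ × V2 => nf h ε Z.1 (rot Z.1 y) Z.2) := by
  have hr := continuous_helix y
  have hu := continuous_uf_helix h he y
  have he' : Continuous fun Z : ℝ × V2 => ef Z.2 (rot Z.1 y) := by unfold ef; fun_prop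
  have hN : Continuous fun Z : ℝ × V2 => Nf h Z.2 (rot Z.1 y) := by unfold Nf; fun_prop
  have hw : Continuous fun Z : ℝ × V2 => wf h Z.2 := (continuous_wf hh).comp continuous_snd
  refine ⟨he'.mul hu, ?_, ?_, ?_, ?_, hN.mul hu⟩
  · unfold deu; fun_prop
  · unfold Ef; fun_prop
  · unfold dEf; fun_prop
  · unfold rf; fun_prop

/-- Differentiation under the integral sign for integrands supported in a fixed compact set. -/
lemma hasDerivAt_integral_compact {Φ Φ' : ℝ → V2 → ℝ} {K : Set V2} (hK : IsCompact K)
    (hΦ : Continuous fun Z : ℝ × V2 => Φ Z.1 Z.2) (hΦ' : Continuous fun Z : ℝ × V2 => Φ' Z.1 Z.2)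
    (h0 : ∀ s, ∀ x ∉ K, Φ s x = 0) (h0' : ∀ s, ∀ x ∉ K, Φ' s x = 0)
    (hd : ∀ s x, HasDerivAt (fun s => Φ s x) (Φ' s x) s) (s : ℝ) :
    HasDerivAt (fun s => ∫ x, Φ s x) (∫ x, Φ' s x) s := by
  obtain ⟨C, hC⟩ := ((isCompact_Icc (a := s - 1) (b := s + 1)).prod hK).exists_bound_of_continuousOn
    hΦ'.continuousOn
  have c1 : ∀ s, Continuous (Φ s) := fun s => hΦ.comp (continuous_const.prodMk continuous_id)
  have c2 : ∀ s, Continuous (Φ' s) := fun s => hΦ'.comp (continuous_const.prodMk continuous_id)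
  have cs : HasCompactSupport (Φ s) := HasCompactSupport.intro hK (h0 s)
  refine (hasDerivAt_integral_of_dominated_loc_of_deriv_le (bound := K.indicator fun _ => C)
    (Icc_mem_nhds (a := s - 1) (b := s + 1) (by linarith) (by linarith))
    (Eventually.of_forall fun t => (c1 t).aestronglyMeasurable)
    ((c1 s).integrable_of_hasCompactSupport cs) (c2 s).aestronglyMeasurable ?_ ?_ ?_).2
  · refine Eventually.of_forall fun x t ht => ?_
    by_cases hx : x ∈ K
    · rw [Set.indicator_of_mem hx]; exact hC (t, x) ⟨ht, hx⟩
    · rw [Set.indicator_of_notMem hx, h0' t x hx, norm_zero]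
  · exact (integrable_indicator_iff hK.measurableSet).2 (integrableOn_const hK.measure_lt_top.ne)
  · exact Eventually.of_forall fun x t _ => hd t x

/-- The primitive in `s` of the helical terms, paired with a test function: its derivative is the
integrand of the fundamental solution identity, and its limits at `±∞` are the boundary terms. -/
def Bf (h ε : ℝ) (χ : V2 → ℝ) (y : V2) (s : ℝ) : ℝ :=
  ∫ x, (χ x * Ef h ε x s (rot s y) + Lop h χ x * (ef x (rot s y) * uf h ε x s (rot s y)))

lemma hasDerivAt_Bf {h : ℝ} (hh : 0 < h) {ε : ℝ} (he : 0 < ε) {χ : V2 → ℝ}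
    (hχ : ContDiff ℝ (⊤ : ℕ∞) χ) (hc : HasCompactSupport χ) (y : V2) (s : ℝ) :
    HasDerivAt (Bf h ε χ y) (∫ x, (Lop h χ x * kf h ε x s (rot s y)
      + χ x * rf h ε x s (rot s y))) s := by
  obtain ⟨k1, k2, k3, k4, k5, k6⟩ := continuous_helix_kernels hh he y
  have hL := continuous_Lop hh hχ
  have hLc := compact_Lop h hc
  have cχ : Continuous fun Z : ℝ × V2 => χ Z.2 := hχ.continuous.comp continuous_snd
  have cL : Continuous fun Z : ℝ × V2 => Lop h χ Z.2 := hL.comp continuous_snd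
  have z1 : ∀ x ∉ tsupport χ ∪ tsupport (Lop h χ), χ x = 0 ∧ Lop h χ x = 0 := fun x hx => by
    rw [Set.mem_union, not_or] at hx
    exact ⟨image_eq_zero_of_notMem_tsupport hx.1, image_eq_zero_of_notMem_tsupport hx.2⟩
  have D := hasDerivAt_integral_compact
    (Φ := fun s x => χ x * Ef h ε x s (rot s y)
      + Lop h χ x * (ef x (rot s y) * uf h ε x s (rot s y)))
    (Φ' := fun s x => χ x * dEf h ε x s (rot s y) + Lop h χ x * deu h ε x s (rot s y))
    (hc.isCompact.union hLc.isCompact) ((cχ.mul k3).add (cL.mul k1))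
    ((cχ.mul k4).add (cL.mul k2)) (fun s x hx => by simp [z1 x hx]) (fun s x hx => by simp [z1 x hx])
    (fun s x => ((hasDerivAt_Ef h he x y s).const_mul (χ x)).add
      ((hasDerivAt_eu h he x y s).const_mul (Lop h χ x))) s
  refine D.congr_deriv ?_
  have sl : ∀ {F : ℝ × V2 → ℝ}, Continuous F → Continuous fun x => F (s, x) := fun hF =>
    hF.comp (continuous_const.prodMk continuous_id)
  have iχ : ∀ {F : V2 → ℝ}, Continuous F → Integrable fun x => χ x * F x := fun hF =>
    (hχ.continuous.mul hF).integrable_of_hasCompactSupport hc.mul_right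
  have iL : ∀ {F : V2 → ℝ}, Continuous F → Integrable fun x => Lop h χ x * F x := fun hF =>
    (hL.mul hF).integrable_of_hasCompactSupport hLc.mul_right
  have G := green_nf hh he hχ hc s (rot s y)
  have e1 : ∀ x, Lop h χ x * kf h ε x s (rot s y) + χ x * rf h ε x s (rot s y)
      = Lop h χ x * nf h ε s (rot s y) x + (Lop h χ x * deu h ε x s (rot s y)
        + (Lop h χ x * (-(h ^ 2 * (√(1 + h ^ 2 * s ^ 2))⁻¹)) + χ x * rf h ε x s (rot s y))) :=
    fun x => by rw [kf_eq]; ring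
  have i1 := iL (sl k6)
  have i2 := iL (sl k2)
  have i3 := iL (continuous_const (y := -(h ^ 2 * (√(1 + h ^ 2 * s ^ 2))⁻¹)))
  have i4 := iχ (sl k5)
  have i5 := iχ (sl k4)
  dsimp only at i1 i2 i3 i4 i5
  simp only [e1]
  have i34 : Integrable fun x => Lop h χ x * -(h ^ 2 * (√(1 + h ^ 2 * s ^ 2))⁻¹)
      + χ x * rf h ε x s (rot s y) := i3.add i4
  have i234 : Integrable fun x => Lop h χ x * deu h ε x s (rot s y)
      + (Lop h χ x * -(h ^ 2 * (√(1 + h ^ 2 * s ^ 2))⁻¹) + χ x * rf h ε x s (rot s y)) := i2.add i34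
  rw [integral_add i1 i234, G, integral_add i2 i34, integral_add i3 i4, integral_mul_const, integral_Lop hh hχ hc, zero_mul, zero_add,
    integral_add i5 i2]
  simp only [mul_sub]
  rw [integral_sub i5 i4]
  ring

/-- The boundary values of `Bf` as `s → σ ∞`, for a sign `σ`. -/
lemma tendsto_Bf {h : ℝ} (hh : 0 < h) {ε : ℝ} (he : 0 < ε) {χ : V2 → ℝ}
    (hχ : ContDiff ℝ (⊤ : ℕ∞) χ) (hc : HasCompactSupport χ) (y : V2) {l : Filter ℝ}
    [l.IsCountablyGenerated]
    (hl : Tendsto (fun s => |s|) l atTop) {σ : ℝ} (hσ : ∀ᶠ s in l, s = σ * |s|) :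
    Tendsto (Bf h ε χ y) l (𝓝 (∫ x, χ x * (2 * h ^ 3 * wf h x ^ 2 * σ))) := by
  obtain ⟨k1, k2, k3, k4, k5, k6⟩ := continuous_helix_kernels hh he y
  have hL := continuous_Lop hh hχ
  have hLc := compact_Lop h hc
  have hw := continuous_wf hh
  have sl : ∀ {F : ℝ × V2 → ℝ}, Continuous F → ∀ s, Continuous fun x => F (s, x) := fun hF s =>
    hF.comp (continuous_const.prodMk continuous_id)
  have hE : Continuous (Ebd h ε y) := by unfold Ebd; fun_prop
  refine tendsto_integral_filter_of_dominated_convergence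
    (fun x => ‖χ x‖ * Ebd h ε y x + ‖Lop h χ x‖ * (‖x‖ * ‖y‖ * ε⁻¹)) ?_ ?_ ?_ ?_
  · refine Eventually.of_forall fun s => Continuous.aestronglyMeasurable ?_
    exact (hχ.continuous.mul (sl k3 s)).add (hL.mul (sl k1 s))
  · refine Eventually.of_forall fun s => Eventually.of_forall fun x => ?_
    refine (norm_add_le _ _).trans ?_
    rw [norm_mul, norm_mul]
    gcongr
    · exact abs_Ef_le hh he x s y
    · exact abs_eu_le he x s y
  · refine Integrable.add ?_ ?_
    · exact (hχ.continuous.norm.mul hE).integrable_of_hasCompactSupport hc.norm.mul_right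
    · exact (hL.norm.mul (by fun_prop)).integrable_of_hasCompactSupport hLc.norm.mul_right
  · refine Eventually.of_forall fun x => ?_
    simpa using ((tendsto_Ef hh he x y hl hσ).const_mul (χ x)).add
      ((tendsto_eu hh he x y hl).const_mul (Lop h χ x))

lemma integrable_rf {h : ℝ} (hh : 0 < h) {ε : ℝ} (he : 0 < ε) {χ : V2 → ℝ}
    (hχ : Continuous χ) (hc : HasCompactSupport χ) (y : V2) :
    Integrable fun Z : ℝ × V2 => χ Z.2 * rf h ε Z.2 Z.1 (rot Z.1 y) := by
  obtain ⟨k1, k2, k3, k4, k5, k6⟩ := continuous_helix_kernels hh he y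
  have hw := continuous_wf hh
  set φ : V2 → ℝ := fun x => |χ x| * (3 * h ^ 2 * ε ^ 2 * wf h x * (h ^ 2 + ‖x‖ * ‖y‖) * ε⁻¹ ^ 3
    + 2 * h ^ 4 * ε ^ 2 * wf h x ^ 2 * ε⁻¹) with hφ
  have cφ : Continuous φ := by rw [hφ]; fun_prop
  have iφ : Integrable φ := cφ.integrable_of_hasCompactSupport (hc.norm.mul_right)
  have is : Integrable fun s : ℝ => (1 + s ^ 2)⁻¹ := integrable_inv_one_add_sq
  have H := (is.const_mul (h⁻¹ ^ 2 + ε⁻¹ ^ 2)).mul_prod iφ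
  rw [Measure.volume_eq_prod]
  refine H.mono' (((hχ.comp continuous_snd).mul k5).aestronglyMeasurable)
    (Eventually.of_forall fun ⟨s, x⟩ => ?_)
  simp only
  have hu := uf_nonneg h ε x s (rot s y)
  have hN := abs_Nf_le h x (rot s y)
  rw [norm_rot] at hN
  have hue := uf_le (h := h) he x s (rot s y)
  have hw0 := wf_pos hh x
  have hu2 : uf h ε x s (rot s y) ^ 2 ≤ (h⁻¹ ^ 2 + ε⁻¹ ^ 2) * (1 + s ^ 2)⁻¹ := by
    have h1 := uf_sq_mul h he x s (rot s y)
    have h2 : 1 + s ^ 2 ≤ (h⁻¹ ^ 2 + ε⁻¹ ^ 2) * Qf h ε x s (rot s y) := by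
      have : h ^ 2 * s ^ 2 + ε ^ 2 ≤ Qf h ε x s (rot s y) := by
        unfold Qf; nlinarith [sq_nonneg (x 0 - rot s y 0), sq_nonneg (x 1 - rot s y 1)]
      calc 1 + s ^ 2 ≤ 1 + s ^ 2 + (h⁻¹ ^ 2 * ε ^ 2 + ε⁻¹ ^ 2 * h ^ 2 * s ^ 2) := by
            have : 0 ≤ h⁻¹ ^ 2 * ε ^ 2 + ε⁻¹ ^ 2 * h ^ 2 * s ^ 2 := by positivity
            linarith
        _ = (h⁻¹ ^ 2 + ε⁻¹ ^ 2) * (h ^ 2 * s ^ 2 + ε ^ 2) := by field_simp; ring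
        _ ≤ _ := by gcongr
    rw [← div_eq_mul_inv, le_div_iff₀ (by positivity)]
    calc _ ≤ uf h ε x s (rot s y) ^ 2 * ((h⁻¹ ^ 2 + ε⁻¹ ^ 2) * Qf h ε x s (rot s y)) := by gcongr
      _ = _ := by linear_combination (h⁻¹ ^ 2 + ε⁻¹ ^ 2) * h1
  rw [norm_mul, Real.norm_eq_abs, Real.norm_eq_abs]
  set u := uf h ε x s (rot s y)
  have e : rf h ε x s (rot s y) = (3 * h ^ 2 * ε ^ 2 * wf h x * Nf h x (rot s y) * u ^ 3
      + 2 * h ^ 4 * ε ^ 2 * wf h x ^ 2 * u) * u ^ 2 := by unfold rf; ring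
  rw [e, abs_mul, abs_of_nonneg (sq_nonneg u)]
  calc |χ x| * (_ * u ^ 2) ≤ |χ x| * ((3 * h ^ 2 * ε ^ 2 * wf h x * (h ^ 2 + ‖x‖ * ‖y‖) * ε⁻¹ ^ 3
        + 2 * h ^ 4 * ε ^ 2 * wf h x ^ 2 * ε⁻¹) * ((h⁻¹ ^ 2 + ε⁻¹ ^ 2) * (1 + s ^ 2)⁻¹)) := by
        gcongr
        refine (abs_add_le _ _).trans ?_
        rw [abs_mul, abs_mul, abs_of_nonneg (show 0 ≤ u ^ 3 by positivity),
          abs_of_nonneg (show 0 ≤ 3 * h ^ 2 * ε ^ 2 * wf h x by positivity),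
          abs_of_nonneg (show 0 ≤ 2 * h ^ 4 * ε ^ 2 * wf h x ^ 2 * u by positivity)]
        gcongr
    _ = _ := by rw [hφ]; ring

lemma integral_helix {F : ℝ × V2 → ℝ} (hF : AEStronglyMeasurable F) :
    ∫ Y : ℝ × V2, F (Y.1, rot Y.1 Y.2) = ∫ Y, F Y := by
  conv_rhs => rw [← measurePreserving_helix.map_eq]
  rw [integral_map measurePreserving_helix.aemeasurable]
  rwa [measurePreserving_helix.map_eq]

lemma integrable_helix {F : ℝ × V2 → ℝ} (hF : AEStronglyMeasurable F) :
    Integrable (fun Y : ℝ × V2 => F (Y.1, rot Y.1 Y.2)) ↔ Integrable F :=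
  measurePreserving_helix.integrable_comp hF

lemma test_kf_bound {h κ : ℝ} (hh : 0 < h) (h0 : 0 < κ) (h1 : κ ≤ 1 / 4) {φ : V2 → ℝ}
    (hφ : Continuous φ) (hc : HasCompactSupport φ) (y : V2) :
    ∃ C, 0 ≤ C ∧ ∀ ε, 0 ≤ ε → ε ≤ 1 → ∀ Y : ℝ × V2, Y.1 ≠ 0 → y ≠ Y.2 →
      |φ (rot Y.1 Y.2) * kf h ε (rot Y.1 Y.2) Y.1 (rot Y.1 y)| ≤ C * mjk κ y Y := by
  obtain ⟨C, hC, H⟩ := kf_bound hh h0 h1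
  have hcont : Continuous fun x : V2 => φ x * ((1 + ‖x‖ ^ 2) * (1 + ‖x‖) ^ (2 + κ)) := by
    have : Continuous fun x : V2 => (1 + ‖x‖) ^ (2 + κ) :=
      Continuous.rpow_const (by fun_prop) fun x => Or.inl (by positivity)
    fun_prop
  obtain ⟨B, hB⟩ := (hc.mul_right (f' := fun x : V2 => (1 + ‖x‖ ^ 2) * (1 + ‖x‖) ^ (2 + κ))
    ).exists_bound_of_continuous hcont
  have hB0 : 0 ≤ B := (norm_nonneg _).trans (hB 0)
  refine ⟨B * C * (1 + ‖y‖) ^ κ, by positivity, fun ε e0 e1 ⟨s, z⟩ hs hy => ?_⟩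
  dsimp only at hs hy ⊢
  have hne : rot s z ≠ rot s y := fun hr => hy (by
    rw [← rot_neg_rot s y, ← rot_neg_rot s z, hr])
  have K := H ε e0 e1 (rot s z) (rot s y) s hs hne
  have esg : sg κ (rot s z) s (rot s y) = (1 + ‖y - z‖ ^ (-(2 - κ / 2))) * sw (κ / 2) s := by
    unfold sg; rw [← rot_sub, norm_rot, norm_sub_rev]
  rw [esg, norm_rot, norm_rot] at K
  have hb := hB (rot s z)
  rw [Pi.mul_apply, norm_mul, norm_rot, Real.norm_eq_abs, Real.norm_of_nonneg (by positivity)] at hb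
  have hsw : 0 ≤ sw (κ / 2) s := by unfold sw; positivity
  have hb' : |φ (rot s z)| * (1 + ‖z‖ ^ 2) ≤ B * (1 + ‖z‖) ^ (-(2 + κ)) := by
    rw [rpow_neg (by positivity), ← div_eq_mul_inv, le_div_iff₀ (by positivity)]
    linarith
  rw [abs_mul]
  calc _ ≤ |φ (rot s z)| * (C * (1 + ‖z‖ ^ 2) *
        ((1 + ‖y‖) ^ κ * ((1 + ‖y - z‖ ^ (-(2 - κ / 2))) * sw (κ / 2) s))) := by gcongr
    _ = |φ (rot s z)| * (1 + ‖z‖ ^ 2) * (C *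
        ((1 + ‖y‖) ^ κ * ((1 + ‖y - z‖ ^ (-(2 - κ / 2))) * sw (κ / 2) s))) := by ring
    _ ≤ B * (1 + ‖z‖) ^ (-(2 + κ)) * (C *
        ((1 + ‖y‖) ^ κ * ((1 + ‖y - z‖ ^ (-(2 - κ / 2))) * sw (κ / 2) s))) := by gcongr
    _ = _ := by unfold mjk mj pw; ring

lemma measurable_test_kf (h ε : ℝ) {φ : V2 → ℝ} (hφ : Continuous φ) (y : V2) :
    Measurable fun Z : ℝ × V2 => φ Z.2 * kf h ε Z.2 Z.1 (rot Z.1 y) := by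
  have h1 : Continuous fun Z : ℝ × V2 => ((Z.2, (Z.1, rot Z.1 y)) : V2 × (ℝ × V2)) :=
    continuous_snd.prodMk (continuous_fst.prodMk (continuous_helix y))
  have m1 : Measurable fun Z : ℝ × V2 => φ Z.2 := (hφ.comp continuous_snd).measurable
  have m2 := (measurable_kf h ε).comp h1.measurable
  simp only [Function.comp_def] at m2
  exact m1.mul m2

lemma integrable_test_kf {h : ℝ} (hh : 0 < h) {φ : V2 → ℝ}
    (hφ : Continuous φ) (hc : HasCompactSupport φ) (y : V2) {ε : ℝ} (e0 : 0 ≤ ε) (e1 : ε ≤ 1) :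
    Integrable fun Z : ℝ × V2 => φ Z.2 * kf h ε Z.2 Z.1 (rot Z.1 y) := by
  obtain ⟨C, hC, H⟩ := test_kf_bound hh (κ := 1 / 4) (by norm_num) le_rfl hφ hc y
  obtain ⟨C', hC', H'⟩ := mjk_integral_bound (κ := 1 / 4) (by norm_num) le_rfl
  have hm := measurable_test_kf h ε hφ y
  rw [← integrable_helix hm.aestronglyMeasurable]
  refine ((H' y).1.const_mul C).mono' ?_ ?_
  · exact (hm.comp measurePreserving_helix.measurable).aestronglyMeasurable
  · filter_upwards [ae_generic y] with Y hY
    exact H ε e0 e1 Y hY.1 hY.2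

/-- The distributional identity for the regularized kernel along a helix. -/
lemma star_eps {h : ℝ} (hh : 0 < h) {ε : ℝ} (he : 0 < ε) (e1 : ε ≤ 1) {χ : V2 → ℝ}
    (hχ : ContDiff ℝ (⊤ : ℕ∞) χ) (hc : HasCompactSupport χ) (y : V2) :
    (∫ Z : ℝ × V2, Lop h χ Z.2 * kf h ε Z.2 Z.1 (rot Z.1 y))
      + ∫ Z : ℝ × V2, χ Z.2 * rf h ε Z.2 Z.1 (rot Z.1 y)
      = h⁻¹ * ∫ x, Lop h χ x * ‖x‖ ^ 2 := by
  have i1 := integrable_test_kf hh (continuous_Lop hh hχ) (compact_Lop h hc) y he.le e1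
  have i2 := integrable_rf hh he hχ.continuous hc y
  have hw := continuous_wf hh
  have i3 : Integrable fun Z : ℝ × V2 => Lop h χ Z.2 * kf h ε Z.2 Z.1 (rot Z.1 y)
      + χ Z.2 * rf h ε Z.2 Z.1 (rot Z.1 y) := i1.add i2
  rw [← integral_add i1 i2]
  rw [Measure.volume_eq_prod] at i3 ⊢
  rw [integral_prod _ i3]
  have F := integral_of_hasDerivAt_of_tendsto (fun s => hasDerivAt_Bf hh he hχ hc y s)
    i3.integral_prod_left
    (tendsto_Bf hh he hχ hc y (σ := -1) tendsto_abs_atBot_atTop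
      ((eventually_le_atBot 0).mono fun s hs => by rw [abs_of_nonpos hs]; ring))
    (tendsto_Bf hh he hχ hc y (σ := 1) tendsto_abs_atTop_atTop
      ((eventually_ge_atTop 0).mono fun s hs => by rw [abs_of_nonneg hs]; ring))
  dsimp only at F ⊢
  rw [F, green_sq hh hχ hc, ← integral_const_mul, ← integral_sub]
  · congr 1; funext x; field_simp; ring
  · exact (hχ.continuous.mul (by fun_prop)).integrable_of_hasCompactSupport hc.mul_right
  · exact (hχ.continuous.mul (by fun_prop)).integrable_of_hasCompactSupport hc.mul_right

lemma tendsto_test_kf {h : ℝ} (hh : 0 < h) {φ : V2 → ℝ}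
    (hφ : Continuous φ) (hc : HasCompactSupport φ) (y : V2) :
    Tendsto (fun ε => ∫ Z : ℝ × V2, φ Z.2 * kf h ε Z.2 Z.1 (rot Z.1 y)) (𝓝[>] 0)
      (𝓝 (∫ Z : ℝ × V2, φ Z.2 * kf h 0 Z.2 Z.1 (rot Z.1 y))) := by
  obtain ⟨C, hC, H⟩ := test_kf_bound hh (κ := 1 / 4) (by norm_num) le_rfl hφ hc y
  obtain ⟨C', hC', H'⟩ := mjk_integral_bound (κ := 1 / 4) (by norm_num) le_rfl
  have hr : ∀ ε, ∫ Z : ℝ × V2, φ Z.2 * kf h ε Z.2 Z.1 (rot Z.1 y)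
      = ∫ Y : ℝ × V2, φ (rot Y.1 Y.2) * kf h ε (rot Y.1 Y.2) Y.1 (rot Y.1 y) := fun ε =>
    (integral_helix (measurable_test_kf h ε hφ y).aestronglyMeasurable).symm
  simp only [hr]
  refine tendsto_integral_filter_of_dominated_convergence (fun Y => C * mjk (1 / 4) y Y) ?_ ?_
    ((H' y).1.const_mul C) ?_
  · exact Eventually.of_forall fun ε => ((measurable_test_kf h ε hφ y).comp
      measurePreserving_helix.measurable).aestronglyMeasurable
  · filter_upwards [Ioo_mem_nhdsGT (zero_lt_one' ℝ)] with ε hε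
    filter_upwards [ae_generic y] with Y hY
    exact H ε hε.1.le hε.2.le Y hY.1 hY.2
  · filter_upwards [ae_generic y] with Y hY
    refine Tendsto.mono_left ?_ nhdsWithin_le_nhds
    have hQ : 0 < Qf h 0 (rot Y.1 Y.2) Y.1 (rot Y.1 y) := by
      rw [Qf_eq]
      have : 0 < (h * Y.1) ^ 2 := by have := hY.1; positivity
      positivity
    have c1 : ContinuousAt (fun ε => Qf h ε (rot Y.1 Y.2) Y.1 (rot Y.1 y)) 0 := by
      unfold Qf; fun_prop
    have c2 : ContinuousAt (fun ε => uf h ε (rot Y.1 Y.2) Y.1 (rot Y.1 y)) 0 :=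
      c1.sqrt.inv₀ (Real.sqrt_pos.2 hQ).ne'
    have c3 : ContinuousAt (fun ε => φ (rot Y.1 Y.2) * kf h ε (rot Y.1 Y.2) Y.1 (rot Y.1 y)) 0 := by
      unfold kf; fun_prop
    exact c3

/-! ### Concentration of the regularization error -/

/-- The profile, at unit scale, of the regularized Newtonian kernel. -/
def vf (h : ℝ) (Y : ℝ × V2) : ℝ := (√(1 + ‖Y.2‖ ^ 2 + (h * Y.1) ^ 2))⁻¹

/-- The normalizing constant of the point mass. -/
def c0 (h : ℝ) : ℝ := ∫ Y : ℝ × V2, 3 * vf h Y ^ 5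

/-- The majorant for the rescaled regularization error. -/
def vm (h : ℝ) (Y : ℝ × V2) : ℝ := (1 + (h * Y.1) ^ 2)⁻¹ * (√(1 + ‖Y.2‖ ^ 2))⁻¹ ^ 3

lemma vf_pos (h : ℝ) (Y : ℝ × V2) : 0 < vf h Y := by unfold vf; positivity

lemma continuous_vf (h : ℝ) : Continuous (vf h) := by
  unfold vf; exact Continuous.inv₀ (by fun_prop) fun Y => by positivity

lemma vf_le (h : ℝ) (Y : ℝ × V2) : vf h Y ≤ (√(1 + ‖Y.2‖ ^ 2))⁻¹ := by
  unfold vf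
  apply inv_anti₀ (by positivity)
  apply Real.sqrt_le_sqrt
  nlinarith [sq_nonneg (h * Y.1)]

lemma vf_sq_le (h : ℝ) (Y : ℝ × V2) : vf h Y ^ 2 ≤ (1 + (h * Y.1) ^ 2)⁻¹ := by
  unfold vf
  rw [inv_pow, Real.sq_sqrt (by positivity)]
  apply inv_anti₀ (by positivity)
  nlinarith [sq_nonneg ‖Y.2‖]

lemma vf_five_le (h : ℝ) (Y : ℝ × V2) : vf h Y ^ 5 ≤ vm h Y := by
  have h1 := vf_le h Y
  have h2 := vf_sq_le h Y
  have h3 := (vf_pos h Y).le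
  calc vf h Y ^ 5 = vf h Y ^ 2 * vf h Y ^ 3 := by ring
    _ ≤ _ := by unfold vm; gcongr

lemma vf_three_le (h : ℝ) (Y : ℝ × V2) : vf h Y ^ 3 ≤ (1 + ‖Y.2‖ ^ 2) * vm h Y := by
  have h1 := vf_le h Y
  have h2 := vf_sq_le h Y
  have h3 := (vf_pos h Y).le
  have e : (1 + ‖Y.2‖ ^ 2) * (√(1 + ‖Y.2‖ ^ 2))⁻¹ ^ 2 = 1 := by
    rw [inv_pow, Real.sq_sqrt (by positivity)]; field_simp
  calc vf h Y ^ 3 = vf h Y ^ 2 * vf h Y := by ring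
    _ ≤ (1 + (h * Y.1) ^ 2)⁻¹ * (√(1 + ‖Y.2‖ ^ 2))⁻¹ := by gcongr
    _ = _ := by unfold vm; linear_combination -((1 + (h * Y.1) ^ 2)⁻¹ * (√(1 + ‖Y.2‖ ^ 2))⁻¹) * e

lemma integrable_vm {h : ℝ} (hh : 0 < h) : Integrable (vm h) := by
  have i1 : Integrable fun t : ℝ => (1 + (h * t) ^ 2)⁻¹ :=
    integrable_inv_one_add_sq.comp_mul_left' hh.ne'
  have i2 : Integrable fun z : V2 => (√(1 + ‖z‖ ^ 2))⁻¹ ^ 3 := by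
    have : Integrable fun z : V2 => (1 + ‖z‖ ^ 2) ^ (-(3 : ℝ) / 2) :=
      integrable_rpow_neg_one_add_norm_sq (by simp; norm_num)
    refine this.congr (Eventually.of_forall fun z => ?_)
    simp only
    have hp : (0 : ℝ) ≤ 1 + ‖z‖ ^ 2 := by positivity
    rw [Real.sqrt_eq_rpow]
    generalize 1 + ‖z‖ ^ 2 = t at hp
    rw [← rpow_neg hp, ← rpow_natCast, ← rpow_mul hp]
    norm_num
  have := i1.mul_prod i2
  rwa [← Measure.volume_eq_prod] at this

lemma c0_pos {h : ℝ} (hh : 0 < h) : 0 < c0 h := by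
  have hi : Integrable fun Y : ℝ × V2 => 3 * vf h Y ^ 5 := by
    refine Integrable.const_mul ((integrable_vm hh).mono'
      ((continuous_vf h).pow 5).aestronglyMeasurable (Eventually.of_forall fun Y => ?_)) 3
    have h0 := vf_pos h Y
    rw [Pi.pow_apply, Real.norm_of_nonneg (show (0 : ℝ) ≤ vf h Y ^ 5 by positivity)]
    exact vf_five_le h Y
  unfold c0
  rw [integral_pos_iff_support_of_nonneg (fun Y => show (0 : ℝ) ≤ 3 * vf h Y ^ 5 by have := vf_pos h Y; positivity) hi]
  have : (Function.support fun Y : ℝ × V2 => 3 * vf h Y ^ 5) = Set.univ := by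
    ext Y; simp [(vf_pos h Y).ne']
  rw [this]
  exact NeZero.pos _

lemma wf_rot (h s : ℝ) (z : V2) : wf h (rot s z) = wf h z := by
  have h1 := norm_rot s z
  have h2 : ‖rot s z‖ ^ 2 = ‖z‖ ^ 2 := by rw [h1]
  rw [V2_norm_sq, V2_norm_sq] at h2
  unfold wf; rw [add_assoc, h2, ← add_assoc]

lemma Nf_rot (h s : ℝ) (z y : V2) : Nf h (rot s z) (rot s y) = Nf h z y := by
  unfold Nf; simp only [rot_zero', rot_one']
  linear_combination (z 0 * y 0 + z 1 * y 1) * (sin_sq_add_cos_sq s)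

lemma uf_scaled (h : ℝ) {ε : ℝ} (he : 0 < ε) (y : V2) (W : ℝ × V2) :
    uf h ε (rot (ε * W.1) (y + ε • W.2)) (ε * W.1) (rot (ε * W.1) y) = ε⁻¹ * vf h W := by
  unfold uf vf
  rw [← mul_inv]
  congr 1
  rw [Qf_eq, ← rot_sub, norm_rot, add_sub_cancel_left, norm_smul, Real.norm_of_nonneg he.le]
  rw [show (ε * ‖W.2‖) ^ 2 + (h * (ε * W.1)) ^ 2 + ε ^ 2
    = ε ^ 2 * (1 + ‖W.2‖ ^ 2 + (h * W.1) ^ 2) by ring, Real.sqrt_mul (by positivity),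
    Real.sqrt_sq he.le]

lemma rf_scaled (h : ℝ) {ε : ℝ} (he : 0 < ε) (y : V2) (W : ℝ × V2) :
    ε ^ 3 * rf h ε (rot (ε * W.1) (y + ε • W.2)) (ε * W.1) (rot (ε * W.1) y)
      = 3 * h ^ 2 * (wf h (y + ε • W.2) * Nf h (y + ε • W.2) y) * vf h W ^ 5
        + 2 * h ^ 4 * wf h (y + ε • W.2) ^ 2 * (ε ^ 2 * vf h W ^ 3) := by
  unfold rf
  rw [uf_scaled h he, wf_rot, Nf_rot]
  field_simp

/-- The change of variables `Z = (ε t, rot (ε t) (y + ε z))`. -/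
lemma integral_rf_scaled {h : ℝ} (hh : 0 < h) {ε : ℝ} (he : 0 < ε) {χ : V2 → ℝ}
    (hχ : Continuous χ) (y : V2) :
    ∫ Z : ℝ × V2, χ Z.2 * rf h ε Z.2 Z.1 (rot Z.1 y)
      = ∫ W : ℝ × V2, χ (rot (ε * W.1) (y + ε • W.2)) *
        (3 * h ^ 2 * (wf h (y + ε • W.2) * Nf h (y + ε • W.2) y) * vf h W ^ 5
        + 2 * h ^ 4 * wf h (y + ε • W.2) ^ 2 * (ε ^ 2 * vf h W ^ 3)) := by
  obtain ⟨k1, k2, k3, k4, k5, k6⟩ := continuous_helix_kernels hh he y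
  have hm : Continuous fun Z : ℝ × V2 => χ Z.2 * rf h ε Z.2 Z.1 (rot Z.1 y) :=
    (hχ.comp continuous_snd).mul k5
  rw [← integral_helix hm.aestronglyMeasurable]
  dsimp only
  have : (volume : Measure (ℝ × V2)).IsAddHaarMeasure := by
    rw [Measure.volume_eq_prod]; infer_instance
  rw [← integral_add_left_eq_self _ ((0, y) : ℝ × V2)]
  have S := Measure.integral_comp_smul (volume : Measure (ℝ × V2))
    (fun Y : ℝ × V2 => χ (rot ((0, y) + Y).1 ((0, y) + Y).2) *
      rf h ε (rot ((0, y) + Y).1 ((0, y) + Y).2) ((0, y) + Y).1 (rot ((0, y) + Y).1 y)) ε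
  have hfr : Module.finrank ℝ (ℝ × V2) = 3 := by simp
  rw [hfr, abs_of_pos (by positivity), smul_eq_mul, eq_comm, inv_mul_eq_iff_eq_mul₀ (by positivity),
    ← integral_const_mul] at S
  rw [S]
  congr 1
  funext W
  rw [← rf_scaled h he]
  simp only [Prod.fst_add, Prod.snd_add, Prod.smul_fst, Prod.smul_snd, zero_add, smul_eq_mul]
  ring

/-- The rescaled regularization error, tested against `χ`. -/
def gs (h : ℝ) (χ : V2 → ℝ) (y : V2) (ε : ℝ) (W : ℝ × V2) : ℝ :=
  χ (rot (ε * W.1) (y + ε • W.2)) *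
    (3 * h ^ 2 * (wf h (y + ε • W.2) * Nf h (y + ε • W.2) y) * vf h W ^ 5
    + 2 * h ^ 4 * wf h (y + ε • W.2) ^ 2 * (ε ^ 2 * vf h W ^ 3))

lemma continuous_gs {h : ℝ} (hh : 0 < h) {χ : V2 → ℝ} (hχ : Continuous χ) (y : V2) :
    Continuous fun q : ℝ × (ℝ × V2) => gs h χ y q.1 q.2 := by
  have cN : Continuous fun x => Nf h x y := by unfold Nf; fun_prop
  have a0 : Continuous fun q : ℝ × (ℝ × V2) => y + q.1 • q.2.2 := by fun_prop
  have b0 : Continuous fun q : ℝ × (ℝ × V2) => q.1 * q.2.1 := by fun_prop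
  have b1 := continuous_rot.comp (b0.prodMk a0)
  have a1 := hχ.comp b1
  have a2 := (continuous_wf hh).comp a0
  have a3 := cN.comp a0
  have a4 : Continuous fun q : ℝ × (ℝ × V2) => vf h q.2 := (continuous_vf h).comp continuous_snd
  simp only [Function.comp_def] at a1 a2 a3
  unfold gs
  exact a1.mul (((continuous_const.mul (a2.mul a3)).mul (a4.pow 5)).add
    ((continuous_const.mul (a2.pow 2)).mul ((continuous_fst.pow 2).mul (a4.pow 3))))

lemma gs_bound {h : ℝ} (hh : 0 < h) {χ : V2 → ℝ} {M R : ℝ} (hR0 : 0 ≤ R) (hM : ∀ x, ‖χ x‖ ≤ M)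
    (hR' : ∀ x, χ x ≠ 0 → ‖x‖ ≤ R) (y : V2) {ε : ℝ} (hε : ε ∈ Set.Ioo (0 : ℝ) 1) (W : ℝ × V2) :
    ‖gs h χ y ε W‖ ≤ M * (3 * h ^ 2 * (h⁻¹ ^ 2 * (h ^ 2 + R * ‖y‖))
      + 2 * h ^ 4 * h⁻¹ ^ 4 * (1 + (R + ‖y‖) ^ 2)) * vm h W := by
  have hM0 : 0 ≤ M := (norm_nonneg _).trans (hM 0)
  have hvm : 0 ≤ vm h W := by unfold vm; positivity
  unfold gs
  by_cases hz : χ (rot (ε * W.1) (y + ε • W.2)) = 0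
  · rw [hz, zero_mul, norm_zero]; positivity
  have hzR := hR' _ hz
  rw [norm_rot] at hzR
  set z := y + ε • W.2 with hzd
  have hw0 := wf_pos hh z
  have hw1 : wf h z ≤ h⁻¹ ^ 2 := by
    unfold wf; rw [inv_pow]; apply inv_anti₀ (by positivity)
    nlinarith [sq_nonneg (z 0), sq_nonneg (z 1)]
  have hN : |Nf h z y| ≤ h ^ 2 + R * ‖y‖ := (abs_Nf_le h z y).trans (by gcongr)
  have hv := (vf_pos h W).le
  have h5 := vf_five_le h W
  have h3 : ε ^ 2 * vf h W ^ 3 ≤ (1 + (R + ‖y‖) ^ 2) * vm h W := by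
    have hb : ε ^ 2 * (1 + ‖W.2‖ ^ 2) ≤ 1 + (R + ‖y‖) ^ 2 := by
      have e1 : ε * ‖W.2‖ ≤ R + ‖y‖ := by
        calc ε * ‖W.2‖ = ‖z - y‖ := by
              rw [hzd, add_sub_cancel_left, norm_smul, Real.norm_of_nonneg hε.1.le]
          _ ≤ ‖z‖ + ‖y‖ := norm_sub_le _ _
          _ ≤ _ := by gcongr
      have e2 : (ε * ‖W.2‖) ^ 2 ≤ (R + ‖y‖) ^ 2 :=
        pow_le_pow_left₀ (mul_nonneg hε.1.le (norm_nonneg _)) e1 2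
      have e3 : ε ^ 2 ≤ 1 := pow_le_one₀ hε.1.le hε.2.le
      nlinarith
    calc ε ^ 2 * vf h W ^ 3 ≤ ε ^ 2 * ((1 + ‖W.2‖ ^ 2) * vm h W) := by
          gcongr; exact vf_three_le h W
      _ = ε ^ 2 * (1 + ‖W.2‖ ^ 2) * vm h W := by ring
      _ ≤ _ := by gcongr
  rw [norm_mul]
  calc _ ≤ M * (3 * h ^ 2 * (h⁻¹ ^ 2 * (h ^ 2 + R * ‖y‖)) * vm h W
        + 2 * h ^ 4 * (h⁻¹ ^ 2) ^ 2 * ((1 + (R + ‖y‖) ^ 2) * vm h W)) := by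
        gcongr
        · exact hM _
        refine (norm_add_le _ _).trans ?_
        rw [Real.norm_eq_abs, Real.norm_eq_abs, abs_mul, abs_mul (3 * h ^ 2), abs_mul (wf h z),
          abs_of_pos hw0, abs_of_pos (show 0 < 3 * h ^ 2 by positivity),
          abs_of_nonneg (show 0 ≤ vf h W ^ 5 by positivity),
          abs_of_nonneg (show 0 ≤ 2 * h ^ 4 * wf h z ^ 2 * (ε ^ 2 * vf h W ^ 3) by positivity)]
        gcongr
    _ = _ := by ring

/-- The regularization error tends to a point mass at `y`. -/
lemma tendsto_rf {h : ℝ} (hh : 0 < h) {χ : V2 → ℝ}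
    (hχ : Continuous χ) (hc : HasCompactSupport χ) (y : V2) :
    Tendsto (fun ε => ∫ Z : ℝ × V2, χ Z.2 * rf h ε Z.2 Z.1 (rot Z.1 y)) (𝓝[>] 0)
      (𝓝 (h ^ 2 * c0 h * χ y)) := by
  obtain ⟨M, hM⟩ := hc.exists_bound_of_continuous hχ
  obtain ⟨R, hR0, hR⟩ := hc.isCompact.isBounded.exists_pos_norm_le
  have hR' : ∀ x, χ x ≠ 0 → ‖x‖ ≤ R := fun x hx => hR x (subset_tsupport _ hx)
  have lim : h ^ 2 * c0 h * χ y = ∫ W : ℝ × V2, gs h χ y 0 W := by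
    have hwN : wf h y * Nf h y y = 1 := by
      rw [← wf_mul hh y]; unfold Nf; ring
    have e : ∀ W, gs h χ y 0 W = χ y * (h ^ 2 * (3 * vf h W ^ 5)) := fun W => by
      unfold gs
      simp only [zero_mul, zero_smul, add_zero, rot_angle_zero, hwN]
      ring
    simp_rw [e]
    rw [integral_const_mul, integral_const_mul, c0]; ring
  rw [lim]
  refine Tendsto.congr' (f₁ := fun ε => ∫ W : ℝ × V2, gs h χ y ε W) ?_ ?_
  · filter_upwards [self_mem_nhdsWithin] with ε hε
    exact (integral_rf_scaled hh hε hχ y).symm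
  have cg := continuous_gs hh hχ y
  refine tendsto_integral_filter_of_dominated_convergence
    (fun W => M * (3 * h ^ 2 * (h⁻¹ ^ 2 * (h ^ 2 + R * ‖y‖))
      + 2 * h ^ 4 * h⁻¹ ^ 4 * (1 + (R + ‖y‖) ^ 2)) * vm h W) ?_ ?_ ((integrable_vm hh).const_mul _) ?_
  · refine Eventually.of_forall fun ε => Continuous.aestronglyMeasurable ?_
    exact cg.comp (f := fun W : ℝ × V2 => (ε, W)) (by fun_prop)
  · filter_upwards [Ioo_mem_nhdsGT (zero_lt_one' ℝ)] with ε hε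
    exact Eventually.of_forall fun W => gs_bound hh hR0.le hM hR' y hε W
  · refine Eventually.of_forall fun W => Tendsto.mono_left ?_ nhdsWithin_le_nhds
    exact (cg.comp (f := fun ε : ℝ => (ε, W)) (by fun_prop)).tendsto 0

/-- The regularization removed: `kf h 0` swept along a helix is, up to the explicit quadratic
term, a fundamental solution of the operator. -/
lemma star_identity {h : ℝ} (hh : 0 < h) {χ : V2 → ℝ}
    (hχ : ContDiff ℝ (⊤ : ℕ∞) χ) (hc : HasCompactSupport χ) (y : V2) :
    (∫ Z : ℝ × V2, Lop h χ Z.2 * kf h 0 Z.2 Z.1 (rot Z.1 y)) + h ^ 2 * c0 h * χ y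
      = h⁻¹ * ∫ x : V2, Lop h χ x * ‖x‖ ^ 2 := by
  have b := tendsto_test_kf hh (continuous_Lop hh hχ) (compact_Lop h hc) y
  have c := tendsto_rf hh hχ.continuous hc y
  refine tendsto_nhds_unique (b.add c) (tendsto_const_nhds.congr' ?_)
  filter_upwards [Ioo_mem_nhdsGT (zero_lt_one' ℝ)] with ε hε
  exact (star_eps hh hε.1 hε.2.le hχ hc y).symm

/-! ### The weak formulation -/

lemma integrable_pair {h ν κ : ℝ} (hh : 0 < h) (h0 : 0 < κ) (h1 : κ ≤ 1 / 4)
    (hν : 2 + 4 * κ ≤ ν) {g : V2 → ℝ} (hgc : Continuous g) {M : ℝ}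
    (hg : ∀ x : V2, (1 + ‖x‖ ^ ν) * |g x| ≤ M) {φ : V2 → ℝ}
    (hφ : Continuous φ) (hc : HasCompactSupport φ) :
    Integrable (fun z : V2 × (ℝ × V2) => φ z.1 * (gtr g z.2 * kf h 0 z.1 z.2.1 z.2.2))
      ((volume : Measure V2).prod (volume : Measure (ℝ × V2))) := by
  obtain ⟨C, hC, H⟩ := gtr_kf_bound hh h0 h1 hν
  obtain ⟨C', hC', H'⟩ := mjk_integral_bound h0 h1
  have hM := source_nonneg hg
  have m1 : Measurable fun z : V2 × (ℝ × V2) => φ z.1 := hφ.measurable.comp measurable_fst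
  have m2 : Measurable fun z : V2 × (ℝ × V2) => gtr g z.2 :=
    (continuous_gtr hgc).measurable.comp measurable_snd
  have m : Measurable fun z : V2 × (ℝ × V2) => φ z.1 * (gtr g z.2 * kf h 0 z.1 z.2.1 z.2.2) :=
    m1.mul (m2.mul (measurable_kf h 0))
  rw [integrable_prod_iff m.aestronglyMeasurable]
  refine ⟨Eventually.of_forall fun x =>
    (integrable_gtr_kf hh h0 h1 hν hgc hg x).const_mul (φ x), ?_⟩
  have hb : Integrable fun x : V2 => ‖φ x‖ * (C * M * (1 + ‖x‖ ^ 2) * C') := by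
    have cc : Continuous fun x : V2 => ‖φ x‖ * (C * M * (1 + ‖x‖ ^ 2) * C') := by fun_prop
    exact cc.integrable_of_hasCompactSupport (hc.norm.mul_right)
  refine hb.mono' ?_ (Eventually.of_forall fun x => ?_)
  · exact m.norm.aestronglyMeasurable.integral_prod_right'
  · rw [Real.norm_of_nonneg (integral_nonneg fun _ => norm_nonneg _)]
    simp only [norm_mul (φ x)]
    rw [integral_const_mul]
    refine mul_le_mul_of_nonneg_left ?_ (norm_nonneg _)
    calc ∫ Y : ℝ × V2, ‖gtr g Y * kf h 0 x Y.1 Y.2‖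
        ≤ ∫ Y : ℝ × V2, C * M * (1 + ‖x‖ ^ 2) * mjk κ x Y := by
          refine integral_mono_ae (integrable_gtr_kf hh h0 h1 hν hgc hg x).norm
            ((H' x).1.const_mul _) ?_
          filter_upwards [ae_generic x] with Y hY
          exact H g M hg 0 le_rfl zero_le_one x Y hY.1 hY.2
      _ ≤ _ := by
          rw [integral_const_mul]
          refine mul_le_mul_of_nonneg_left (H' x).2 (by positivity)

/-- Fubini followed by the helical change of variables. -/
lemma integral_pot_mul {h ν κ : ℝ} (hh : 0 < h) (h0 : 0 < κ) (h1 : κ ≤ 1 / 4)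
    (hν : 2 + 4 * κ ≤ ν) {g : V2 → ℝ} (hgc : Continuous g) {M : ℝ}
    (hg : ∀ x : V2, (1 + ‖x‖ ^ ν) * |g x| ≤ M) {φ : V2 → ℝ}
    (hφ : Continuous φ) (hc : HasCompactSupport φ) :
    ∫ x, pot h g x * φ x
      = ∫ y, g y * ∫ Z : ℝ × V2, φ Z.2 * kf h 0 Z.2 Z.1 (rot Z.1 y) := by
  have I := integrable_pair hh h0 h1 hν hgc hg hφ hc
  have IG : Integrable fun Y : ℝ × V2 => ∫ x, φ x * (gtr g Y * kf h 0 x Y.1 Y.2) :=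
    I.integral_prod_right
  have e1 : ∫ x, pot h g x * φ x
      = ∫ x, ∫ Y : ℝ × V2, φ x * (gtr g Y * kf h 0 x Y.1 Y.2) := by
    congr 1; funext x; rw [integral_const_mul, pot, mul_comm]
  have e2 : ∀ Y : ℝ × V2, ∫ x, φ x * (gtr g (Y.1, rot Y.1 Y.2) * kf h 0 x Y.1 (rot Y.1 Y.2))
      = g Y.2 * ∫ x, φ x * kf h 0 x Y.1 (rot Y.1 Y.2) := fun Y => by
    rw [← integral_const_mul]
    congr 1; funext x
    simp only [gtr, rot_neg_rot]; ring
  have IH := (integrable_helix IG.aestronglyMeasurable).2 IG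
  have E := integral_helix IG.aestronglyMeasurable
  simp only [e2] at IH E
  rw [e1, integral_integral_swap I, ← E]
  rw [Measure.volume_eq_prod] at IH ⊢
  rw [integral_prod_symm _ IH]
  congr 1; funext y
  dsimp only
  rw [integral_const_mul]
  congr 1
  have T := integrable_test_kf hh hφ hc y le_rfl zero_le_one
  rw [Measure.volume_eq_prod] at T
  exact (integral_prod _ T).symm

/-- The solution operator: the helically averaged potential, corrected by a quadratic term. -/
def sol (h : ℝ) (g : V2 → ℝ) (x : V2) : ℝ :=
  (h ^ 2 * c0 h)⁻¹ * (pot h g x - ‖x‖ ^ 2 * (h⁻¹ * ∫ y, g y))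

lemma sol_weak {h ν κ : ℝ} (hh : 0 < h) (h0 : 0 < κ) (h1 : κ ≤ 1 / 4)
    (hν : 2 + 4 * κ ≤ ν) {g : V2 → ℝ} (hgc : Continuous g) {M : ℝ}
    (hg : ∀ x : V2, (1 + ‖x‖ ^ ν) * |g x| ≤ M) (hs : ContDiff ℝ 1 (sol h g)) {χ : V2 → ℝ}
    (hχ : ContDiff ℝ (⊤ : ℕ∞) χ) (hc : HasCompactSupport χ) :
    ∫ x : V2, (∑ i, (∑ j, Kmat h x i j * pd (sol h g) j x) * pd χ i x) = ∫ x, g x * χ x := by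
  have cL := continuous_Lop hh hχ
  have kL := compact_Lop h hc
  have hc0 := c0_pos hh
  have cp : Continuous (pot h g) := (pot_regular hh h0 h1 hν hgc hg).1.continuous
  have i1 : Integrable fun x => pot h g x * Lop h χ x :=
    (cp.mul cL).integrable_of_hasCompactSupport kL.mul_left
  have i2 : Integrable fun x : V2 => Lop h χ x * ‖x‖ ^ 2 := by
    have : Continuous fun x : V2 => Lop h χ x * ‖x‖ ^ 2 := by fun_prop
    exact this.integrable_of_hasCompactSupport kL.mul_right
  have ig := (integrable_source h0 hν hgc hg).1
  have igχ : Integrable fun x => g x * χ x :=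
    (hgc.mul hχ.continuous).integrable_of_hasCompactSupport hc.mul_left
  set A := ∫ x : V2, Lop h χ x * ‖x‖ ^ 2 with hA
  have P : ∫ x, pot h g x * Lop h χ x
      = (∫ y, g y) * (h⁻¹ * A) - h ^ 2 * c0 h * ∫ y, g y * χ y := by
    rw [integral_pot_mul hh h0 h1 hν hgc hg cL kL, ← integral_mul_const,
      ← integral_const_mul (h ^ 2 * c0 h),
      ← integral_sub (ig.mul_const _) (igχ.const_mul _)]
    congr 1; funext y
    linear_combination g y * star_identity hh hχ hc y
  have Q : ∫ x, sol h g x * Lop h χ x = (h ^ 2 * c0 h)⁻¹ *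
      ((∫ x, pot h g x * Lop h χ x) - (h⁻¹ * ∫ y, g y) * A) := by
    rw [hA, ← integral_const_mul (h⁻¹ * ∫ y, g y), ← integral_sub i1 (i2.const_mul _),
      ← integral_const_mul]
    congr 1; funext x
    unfold sol; ring
  rw [weak_Lop hh hχ hc hs, Q, P]
  field_simp
  ring

/-! ### Linearity, growth and regularity of the solution operator -/

lemma sol_add {h ν κ : ℝ} (hh : 0 < h) (h0 : 0 < κ) (h1 : κ ≤ 1 / 4)
    (hν : 2 + 4 * κ ≤ ν) {g₁ g₂ : V2 → ℝ} (hc₁ : Continuous g₁) (hc₂ : Continuous g₂) {M₁ M₂ : ℝ}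
    (hg₁ : ∀ x : V2, (1 + ‖x‖ ^ ν) * |g₁ x| ≤ M₁) (hg₂ : ∀ x : V2, (1 + ‖x‖ ^ ν) * |g₂ x| ≤ M₂) :
    sol h (g₁ + g₂) = sol h g₁ + sol h g₂ := by
  funext x
  have a : pot h (g₁ + g₂) x = pot h g₁ x + pot h g₂ x := by
    unfold pot
    rw [← integral_add (integrable_gtr_kf hh h0 h1 hν hc₁ hg₁ x)
      (integrable_gtr_kf hh h0 h1 hν hc₂ hg₂ x)]
    congr 1; funext Y
    simp only [gtr, Pi.add_apply]; ring
  have b : ∫ y, (g₁ + g₂) y = (∫ y, g₁ y) + ∫ y, g₂ y :=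
    integral_add (integrable_source h0 hν hc₁ hg₁).1 (integrable_source h0 hν hc₂ hg₂).1
  rw [Pi.add_apply, sol, a, b, sol, sol]; ring

lemma sol_smul (h c : ℝ) (g : V2 → ℝ) : sol h (c • g) = c • sol h g := by
  funext x
  have a : pot h (c • g) x = c * pot h g x := by
    unfold pot
    rw [← integral_const_mul]
    congr 1; funext Y
    simp only [gtr, Pi.smul_apply, smul_eq_mul]; ring
  have b : ∫ y, (c • g) y = c * ∫ y, g y := integral_const_mul c g
  rw [Pi.smul_apply, smul_eq_mul, sol, a, b, sol]; ring

lemma sol_growth {h ν κ : ℝ} (hh : 0 < h) (h0 : 0 < κ) (h1 : κ ≤ 1 / 4) (hν : 2 + 4 * κ ≤ ν) :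
    ∃ C > 0, ∀ g : V2 → ℝ, Continuous g → ∀ M : ℝ, (∀ x : V2, (1 + ‖x‖ ^ ν) * |g x| ≤ M) →
      ∀ x, |sol h g x| ≤ C * M * (1 + ‖x‖ ^ 2) := by
  obtain ⟨C, hC, H⟩ := integral_gtr_kf_bound hh h0 h1 hν
  have hc0 := c0_pos hh
  set D := 2 ^ ν * ∫ y : V2, (1 + ‖y‖) ^ (-(2 + κ)) with hD
  have hD0 : 0 ≤ D := mul_nonneg (by positivity) (integral_nonneg fun y => by positivity)
  refine ⟨(h ^ 2 * c0 h)⁻¹ * (C + h⁻¹ * D) + 1, by positivity, fun g hgc M hg x => ?_⟩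
  have hM := source_nonneg hg
  have I : |∫ y, g y| ≤ D * M := by
    have := (integrable_source h0 hν hgc hg).2
    rw [hD]; linarith
  have P : |pot h g x| ≤ C * M * (1 + ‖x‖ ^ 2) := H g M hg x
  have Q : |‖x‖ ^ 2 * (h⁻¹ * ∫ y, g y)| ≤ (1 + ‖x‖ ^ 2) * (h⁻¹ * (D * M)) := by
    rw [abs_mul, abs_mul h⁻¹, abs_of_pos (inv_pos.2 hh), abs_of_nonneg (sq_nonneg ‖x‖)]
    gcongr; linarith
  unfold sol
  rw [abs_mul, abs_of_pos (by positivity : 0 < (h ^ 2 * c0 h)⁻¹)]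
  calc (h ^ 2 * c0 h)⁻¹ * |pot h g x - ‖x‖ ^ 2 * (h⁻¹ * ∫ y, g y)|
      ≤ (h ^ 2 * c0 h)⁻¹ * (C * M * (1 + ‖x‖ ^ 2) + (1 + ‖x‖ ^ 2) * (h⁻¹ * (D * M))) := by
        gcongr; exact (abs_sub _ _).trans (add_le_add P Q)
    _ = (h ^ 2 * c0 h)⁻¹ * (C + h⁻¹ * D) * M * (1 + ‖x‖ ^ 2) := by ring
    _ ≤ _ := by gcongr; linarith

lemma sol_holder {h ν κ β : ℝ} (hh : 0 < h) (h0 : 0 < κ) (h1 : κ ≤ 1 / 4) (hν : 2 + 4 * κ ≤ ν)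
    (hβ : 0 < β) (hκβ : β ≤ 1 - κ) {g : V2 → ℝ} (hgc : Continuous g) {M : ℝ}
    (hg : ∀ x : V2, (1 + ‖x‖ ^ ν) * |g x| ≤ M) :
    Differentiable ℝ (sol h g) ∧ ∀ ρ : ℝ, ∃ C, ∀ x x', ‖x‖ ≤ ρ → ‖x'‖ ≤ ρ →
      ‖fderiv ℝ (sol h g) x' - fderiv ℝ (sol h g) x‖ ≤ C * ‖x' - x‖ ^ β := by
  obtain ⟨A, B⟩ := pot_regular hh h0 h1 hν hgc hg
  set m := h⁻¹ * ∫ y, g y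
  have hD : ∀ x, HasFDerivAt (sol h g)
      ((h ^ 2 * c0 h)⁻¹ • (fderiv ℝ (pot h g) x - m • ((2 : ℝ) • innerSL ℝ x))) x := fun x => by
    have q : HasFDerivAt (fun x : V2 => ‖x‖ ^ 2) ((2 : ℝ) • innerSL ℝ x) x := by
      have := (hasStrictFDerivAt_norm_sq x).hasFDerivAt
      rwa [ofNat_smul_eq_nsmul ℝ 2 (innerSL ℝ x)]
    exact (((A x).hasFDerivAt).sub (q.mul_const m)).const_mul _
  refine ⟨fun x => (hD x).differentiableAt, fun ρ => ?_⟩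
  obtain ⟨C, hC, H⟩ := B ρ
  refine ⟨|(h ^ 2 * c0 h)⁻¹| * (C * (2 * ρ) ^ (1 - κ - β) + |m| * (2 * (2 * ρ) ^ (1 - β))),
    fun x x' hx hx' => ?_⟩
  rw [(hD x).fderiv, (hD x').fderiv]
  have hd : ‖x' - x‖ ≤ 2 * ρ := (norm_sub_le _ _).trans (by linarith)
  have hpow : ∀ γ, β ≤ γ → ‖x' - x‖ ^ γ ≤ (2 * ρ) ^ (γ - β) * ‖x' - x‖ ^ β := fun γ hγ => by
    have : ‖x' - x‖ ^ γ = ‖x' - x‖ ^ (γ - β) * ‖x' - x‖ ^ β := by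
      rw [← rpow_add_of_nonneg (norm_nonneg _) (by linarith) hβ.le, sub_add_cancel]
    rw [this]
    gcongr
  have e : (h ^ 2 * c0 h)⁻¹ • (fderiv ℝ (pot h g) x' - m • ((2 : ℝ) • innerSL ℝ x'))
      - (h ^ 2 * c0 h)⁻¹ • (fderiv ℝ (pot h g) x - m • ((2 : ℝ) • innerSL ℝ x))
      = (h ^ 2 * c0 h)⁻¹ • ((fderiv ℝ (pot h g) x' - fderiv ℝ (pot h g) x)
        - m • ((2 : ℝ) • innerSL ℝ (x' - x))) := by
    ext v
    simp only [map_sub, sub_apply, smul_apply, smul_eq_mul]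
    ring
  rw [e, norm_smul, Real.norm_eq_abs, mul_assoc]
  refine mul_le_mul_of_nonneg_left ?_ (abs_nonneg _)
  have e2 : ‖m • ((2 : ℝ) • innerSL ℝ (x' - x))‖ = |m| * (2 * ‖x' - x‖) := by
    rw [norm_smul, norm_smul, innerSL_apply_norm, Real.norm_eq_abs, Real.norm_eq_abs, abs_two]
  refine (norm_sub_le _ _).trans ?_
  rw [e2, add_mul]
  have p1 := hpow (1 - κ) hκβ
  have p2 := hpow 1 (by linarith)
  rw [rpow_one] at p2
  refine add_le_add ((H x x' hx hx').trans ?_) ?_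
  · rw [mul_assoc]; gcongr
  · rw [mul_assoc, mul_assoc]; gcongr

lemma sol_contDiff {h ν κ : ℝ} (hh : 0 < h) (h0 : 0 < κ) (h1 : κ ≤ 1 / 4)
    (hν : 2 + 4 * κ ≤ ν) {g : V2 → ℝ} (hgc : Continuous g) {M : ℝ}
    (hg : ∀ x : V2, (1 + ‖x‖ ^ ν) * |g x| ≤ M) : ContDiff ℝ 1 (sol h g) := by
  obtain ⟨A, B⟩ := sol_holder (β := 1 / 2) hh h0 h1 hν (by norm_num) (by linarith) hgc hg
  refine contDiff_one_iff_fderiv.2 ⟨A, continuous_iff_continuousAt.2 fun x => ?_⟩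
  obtain ⟨C, H⟩ := B (‖x‖ + 1)
  refine tendsto_iff_norm_sub_tendsto_zero.2 (squeeze_zero' (g := fun x' => C * ‖x' - x‖ ^ (1 / 2 : ℝ))
    (Eventually.of_forall fun _ => norm_nonneg _) ?_ ?_)
  · filter_upwards [Metric.ball_mem_nhds x one_pos] with x' hx'
    refine H x x' (by linarith) ?_
    rw [mem_ball_iff_norm] at hx'
    linarith [norm_le_norm_add_norm_sub' x' x]
  · have c : Continuous fun x' : V2 => C * ‖x' - x‖ ^ (1 / 2 : ℝ) :=
      continuous_const.mul ((continuous_id.sub continuous_const).norm.rpow_const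
        fun _ => Or.inr (by norm_num))
    simpa using c.tendsto x

end

/-- Outer linear theory: for the degenerate-elliptic operator
∇·(K∇·), every continuous right-hand side g with ‖g‖_ν̄ < ∞ (ν̄ > 2) admits a
C^{1,β}_loc weak solution ψ = 𝒯(g), depending linearly on g, with
|ψ(x)| ≤ C‖g‖_ν̄(1+|x|²). -/
theorem outer_linear_theory
    (h νb β : ℝ) (hh : 0 < h) (hνb : 2 < νb) (hβ : β ∈ Set.Ioo (0 : ℝ) 1) :
    ∃ C > 0, ∃ T : (V2 → ℝ) → (V2 → ℝ),
      (∀ g₁ g₂ : V2 → ℝ, Continuous g₁ → Continuous g₂ →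
        FiniteWeightedNorm νb g₁ → FiniteWeightedNorm νb g₂ →
        T (g₁ + g₂) = T g₁ + T g₂)
      ∧ (∀ (c : ℝ) (g : V2 → ℝ), Continuous g → FiniteWeightedNorm νb g →
          T (c • g) = c • T g)
      ∧ ∀ g : V2 → ℝ, Continuous g → ∀ Mg : ℝ,
          (∀ x : V2, (1 + ‖x‖ ^ νb) * |g x| ≤ Mg) →
          ContDiff ℝ 1 (T g)
          ∧ (∀ K : Set V2, IsCompact K → ∃ C' : ℝ, ∀ x ∈ K, ∀ y ∈ K,
              ‖fderiv ℝ (T g) x - fderiv ℝ (T g) y‖ ≤ C' * ‖x - y‖ ^ β)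
          ∧ (∀ χ : V2 → ℝ, ContDiff ℝ (⊤ : ℕ∞) χ → HasCompactSupport χ →
              ∫ x : V2, (∑ i, (∑ j, Kmat h x i j * pd (T g) j x) * pd χ i x)
                = ∫ x : V2, g x * χ x)
          ∧ ∀ x : V2, |T g x| ≤ C * Mg * (1 + ‖x‖ ^ 2) := by
  obtain ⟨κ, h0, h1, hν, hκβ⟩ : ∃ κ : ℝ, 0 < κ ∧ κ ≤ 1 / 4 ∧ 2 + 4 * κ ≤ νb ∧ β ≤ 1 - κ := by
    refine ⟨min (1 / 4) (min ((νb - 2) / 4) (1 - β)), ?_, min_le_left _ _, ?_, ?_⟩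
    · exact lt_min (by norm_num) (lt_min (by linarith) (by linarith [hβ.2]))
    · have : min (1 / 4) (min ((νb - 2) / 4) (1 - β)) ≤ (νb - 2) / 4 :=
        (min_le_right _ _).trans (min_le_left _ _)
      linarith
    · have : min (1 / 4) (min ((νb - 2) / 4) (1 - β)) ≤ 1 - β :=
        (min_le_right _ _).trans (min_le_right _ _)
      linarith
  obtain ⟨C, hC, H⟩ := sol_growth hh h0 h1 hν
  refine ⟨C, hC, sol h, fun g₁ g₂ c₁ c₂ f₁ f₂ => ?_, fun c g _ _ => sol_smul h c g,
    fun g hgc M hg => ?_⟩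
  · obtain ⟨M₁, hM₁⟩ := f₁
    obtain ⟨M₂, hM₂⟩ := f₂
    exact sol_add hh h0 h1 hν c₁ c₂ hM₁ hM₂
  have hs := sol_contDiff hh h0 h1 hν hgc hg
  refine ⟨hs, fun K hK => ?_, fun χ hχ hc => sol_weak hh h0 h1 hν hgc hg hs hχ hc, H g hgc M hg⟩
  obtain ⟨ρ, hρ⟩ := hK.isBounded.exists_norm_le
  obtain ⟨C', H'⟩ := (sol_holder hh h0 h1 hν hβ.1 hκβ hgc hg).2 ρ
  exact ⟨C', fun x hx y hy => H' y x (hρ y hy) (hρ x hx)⟩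
end
end

section
/- Let N ≥ 1, r₀ > 0, h > 0, c < 0, and κ₁,…,κ_N ∈ ℝ with Σᵢκᵢ > 0. Suppose P̃₁,…,P̃_N ∈ ℝ² are pairwise distinct points and α ∈ ℝ is such that for every i = 1,…,N: Σ_{j≠i} κⱼ(P̃ᵢ,₁−P̃ⱼ,₁)/|P̃ᵢ−P̃ⱼ|² = κᵢhr₀/(2(h²+r₀²)^{3/2}) + αhr₀/(c√(h²+r₀²)). Then necessarily α = −c/(2(h²+r₀²)) · (Σᵢκᵢ²)/(Σᵢκᵢ). -/
/-!
Multiply the `i`-th balancing condition by `κ i` and sum over `i`. The left-hand side becomes a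
double sum of a kernel antisymmetric in `(i, j)`, hence vanishes (`antisymm_sum_eq_zero`), leaving
a linear equation `A * ∑ κ i ^ 2 + B * ∑ κ i = 0` with `B` proportional to `α`; since
`∑ κ i > 0` it can be solved for `α`.
-/

noncomputable section

open Real

theorem antisymm_sum_eq_zero {ι : Type*} [Fintype ι] (F : ι → ι → ℝ)
    (hF : ∀ i j, F i j = -F j i) : ∑ i, ∑ j, F i j = 0 := by
  have key : ∑ i, ∑ j, F i j = -∑ i, ∑ j, F i j := by
    conv_lhs => rw [Finset.sum_comm]
    simp only [← Finset.sum_neg_distrib]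
    exact Finset.sum_congr rfl fun i _ => Finset.sum_congr rfl fun j _ => hF j i
  linarith

/-- Uniqueness of the rotation speed α determined by the balancing
conditions for collapsing helical filaments. -/
theorem alpha_determined_by_balancing
    (N : ℕ) (hN : 1 ≤ N) (r₀ h c α : ℝ)
    (hr₀ : 0 < r₀) (hh : 0 < h) (hc : c < 0)
    (κ : Fin N → ℝ) (hκ : 0 < ∑ i, κ i)
    (P : Fin N → EuclideanSpace ℝ (Fin 2))
    (hdist : Function.Injective P)
    (hbal : ∀ i, ∑ j ∈ Finset.univ.erase i, κ j * (P i 0 - P j 0) / ‖P i - P j‖ ^ 2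
      = κ i * h * r₀ / (2 * (h ^ 2 + r₀ ^ 2) ^ ((3 : ℝ) / 2))
        + α * h * r₀ / (c * Real.sqrt (h ^ 2 + r₀ ^ 2))) :
    α = -c / (2 * (h ^ 2 + r₀ ^ 2)) * ((∑ i, κ i ^ 2) / ∑ i, κ i) := by
  have hzero : ∑ i, κ i * (∑ j ∈ Finset.univ.erase i,
      κ j * (P i 0 - P j 0) / ‖P i - P j‖ ^ 2) = 0 := by
    rw [← antisymm_sum_eq_zero
      (fun i j => κ i * (κ j * (P i 0 - P j 0) / ‖P i - P j‖ ^ 2))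
      (fun i j => by rw [norm_sub_rev (P i) (P j)]; ring)]
    refine Finset.sum_congr rfl fun i _ => ?_
    rw [← Finset.mul_sum]
    congr 1
    -- The diagonal term vanishes because its numerator does.
    exact Finset.sum_erase _ (by simp)
  simp only [hbal] at hzero
  have hD : 0 < h ^ 2 + r₀ ^ 2 := by positivity
  set D := h ^ 2 + r₀ ^ 2 with hDdef
  have hpow : D ^ ((3 : ℝ) / 2) = D * √D := by
    rw [show (3 : ℝ) / 2 = 1 + 1 / 2 by norm_num, Real.rpow_add hD, Real.rpow_one,
      ← Real.sqrt_eq_rpow]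
  have hs : √D ≠ 0 := (Real.sqrt_pos.mpr hD).ne'
  have hsum : h * r₀ / (2 * (D * √D)) * ∑ i, κ i ^ 2
      + α * h * r₀ / (c * √D) * ∑ i, κ i = 0 := by
    rw [← hzero, Finset.mul_sum, Finset.mul_sum, ← Finset.sum_add_distrib]
    refine Finset.sum_congr rfl fun i _ => ?_
    rw [hpow]
    ring
  generalize ∑ i, κ i ^ 2 = Q at hsum ⊢
  generalize ∑ i, κ i = S at hsum hκ ⊢
  have hS := hκ.ne'
  have hc' := hc.ne
  have hD' := hD.ne'
  have hfac : h * r₀ / √D * (Q / (2 * D) + α / c * S) = 0 := by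
    rw [← hsum]
    field_simp
  have hlin : Q / (2 * D) + α / c * S = 0 :=
    (mul_eq_zero.mp hfac).resolve_left (by positivity)
  clear_value D
  field_simp at hlin ⊢
  linarith
end
end
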